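/- Let D be a non-trivial, non-symmetric 2-(v,k,3) design with 3 dividing r, admitting a flag-transitive, point-primitive automorphism group G that is almost simple with socle X = PSL(2,q), where X acts point-primitively on D with point stabilizer X_α maximal in X. Then X_α is not a dihedral subgroup D_{2(q+1)/gcd(2,q−1)} of order 2(q+1)/gcd(2,q−1); that is, the case v = q(q−1)/2 with X_α the normalizer of a maximal nonsplit torus does not occur. -/

import Mathlib

/-!
Write `n = (q + 1) / gcd (2, q - 1)`. The socle `X` is treated as the image of a homomorphism
`pr : SL(2, F) → G` with kernel `{1, -1}` (`Cfg`), and no classification of subgroups is used: all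
information comes from the involutions of `X` and their fixed points. The design enters through
`Dsg`, in particular through `inv_count`: a `G_α`-invariant set `Δ` not containing `α` meets all
blocks through `α` in the same number of points, so `r / 3` divides `|Δ|`.

* `q ≡ 1 (mod 4)` (`case_one_mod_four`). Here `n` is odd. Applying `inv_count` to the set of points
  `β ≠ α` fixed by some involution of `X_α` shows that `r / 3` divides `n`. By `odd_params` this forces
  `k = q - 1` and `r = 3 n`, so `2 b = 3 q n`, which is odd.

* `q ≡ 3 (mod 4)` (`case_three_mod_four`). Here `n` is even and the points correspond to the
  involutions of `X` (`ZData`), `X_α` being the centralizer of `z α`. The points `β` fall into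
  three `G_α`-invariant sets: those with `z β` commuting with `z α`, those for which only some third
  involution commutes with both, and the rest. Counting gives again `k = q - 1`, `r = 3 n`, and the
  intersection numbers of a block with these sets (`three_params`); moreover `z α` fixes every
  block through `α` (`z_smul_block`). A block on the points of `Y u = [0, u; -1/u, 0]` for `u = 1`
  and for `u` a primitive root is closed under these reflections, so it contains the points of all
  `Y u`, and these exhaust its third part. The single point of the block in the first part then
  yields an involution permuting them, which a matrix computation excludes.

* `q = 2 ^ f` (`case_even`). All involutions of `X` are conjugate and `X_α` contains `q + 1` of
  them. Let `τ` be an involution fixing a flag `(α, B)`, `c` the number of `τ`-fixed blocks through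
  `α`, `t` the number of involutions of `X_{αB}`, and `w = |Fix τ ∩ B|`. Double counting gives
  `r t = (q + 1) c` and `c (k - 1) = 3 (q / 2 - 1) t`; that `G` induces at most `f` field
  automorphisms gives `c ≤ f` (`Fbl_le_f`); and the `2`-part of `k` divides `w` (`two_pow_dvd`).
  From `k ∣ v r` one gets `k ∣ c (6 t - 2 c) (3 t - 2 c) (9 t - 2 c)`, which bounds `f` by `30`
  unless `c = 3 t`. In the exceptional case `k = q / 2`, all `τ`-fixed blocks through `α` equal
  `Fix τ`, which is absurd. Otherwise a finite search (`small_check`) leaves `(q, k) = (32, 10)`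
  and `(128, 28)`, where the `τ`-fixed blocks would induce on `Fix τ` a `2`-design violating
  Fisher's inequality.
-/

open scoped Pointwise
open Matrix

namespace FT

variable {Pt : Type*}

/-- `IsDesign 𝓑 k lam` says that the family `𝓑` of subsets of the point set `Pt` is the
block set of a `2-(v, k, lam)` design: every block has `k` points and any two distinct
points lie on exactly `lam` common blocks. -/
structure IsDesign (𝓑 : Set (Set Pt)) (k lam : ℕ) : Prop where
  block_card : ∀ B ∈ 𝓑, Nat.card B = k
  pair_count : ∀ x y : Pt, x ≠ y → Nat.card {B : Set Pt | B ∈ 𝓑 ∧ x ∈ B ∧ y ∈ B} = lam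

/-- The group `G` acts on the design with point set `Pt` and block set `𝓑` as a group of
automorphisms. -/
def ActsOn (G : Type*) [Group G] [MulAction G Pt] (𝓑 : Set (Set Pt)) : Prop :=
  ∀ (g : G), ∀ B ∈ 𝓑, g • B ∈ 𝓑

/-- The group `G` is transitive on the flags (incident point-block pairs) of the design. -/
def FlagTransitive (G : Type*) [Group G] [MulAction G Pt] (𝓑 : Set (Set Pt)) : Prop :=
  ∀ B ∈ 𝓑, ∀ C ∈ 𝓑, ∀ x ∈ B, ∀ y ∈ C, ∃ g : G, g • B = C ∧ g • x = y

/-- The action of `G` on `Pt` is primitive: it is transitive and every block of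
imprimitivity is trivial. -/
def PointPrimitive (G : Type*) [Group G] (Pt : Type*) [MulAction G Pt] : Prop :=
  MulAction.IsPretransitive G Pt ∧
    ∀ s : Set Pt, MulAction.IsBlock G s → s.Subsingleton ∨ s = Set.univ

/-- The number of blocks of `𝓑` through the point `x` (the replication number, for a
flag-transitive design). -/
noncomputable def repNum (𝓑 : Set (Set Pt)) (x : Pt) : ℕ :=
  Nat.card {B : Set Pt | B ∈ 𝓑 ∧ x ∈ B}

/-- The projective general linear group `PGL(2,K)`, as the quotient of `GL(2,K)` by its
center. -/
abbrev PGL2 (K : Type*) [Field K] :=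
  GL (Fin 2) K ⧸ Subgroup.center (GL (Fin 2) K)

/-- The projective special linear group `PSL(2,K)`. -/
abbrev PSL2 (K : Type*) [Field K] := Matrix.ProjectiveSpecialLinearGroup (Fin 2) K

end FT

open FT

namespace DihedralCase

/-! ### Matrices in `SL(2, F)` and the projection to `PSL(2, F)` -/

/-- Shorthand for `SL(2, F)`. -/
abbrev S2 (F : Type*) [Field F] := Matrix.SpecialLinearGroup (Fin 2) F

section Mat

variable {F : Type*} [Field F]

/-- The element of `SL(2, F)` with given entries. -/
def mk2 (a b c d : F) (h : a * d - b * c = 1) : S2 F :=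
  ⟨!![a, b; c, d], by rw [Matrix.det_fin_two_of]; exact h⟩

@[simp] lemma mk2_00 (a b c d : F) (h : a * d - b * c = 1) : (mk2 a b c d h).1 0 0 = a := rfl
@[simp] lemma mk2_01 (a b c d : F) (h : a * d - b * c = 1) : (mk2 a b c d h).1 0 1 = b := rfl
@[simp] lemma mk2_10 (a b c d : F) (h : a * d - b * c = 1) : (mk2 a b c d h).1 1 0 = c := rfl
@[simp] lemma mk2_11 (a b c d : F) (h : a * d - b * c = 1) : (mk2 a b c d h).1 1 1 = d := rfl

lemma s2_ext_iff (A B : S2 F) : A = B ↔ A.1 0 0 = B.1 0 0 ∧ A.1 0 1 = B.1 0 1 ∧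
    A.1 1 0 = B.1 1 0 ∧ A.1 1 1 = B.1 1 1 := by
  constructor
  · rintro rfl; simp
  · rintro ⟨h1, h2, h3, h4⟩
    apply Subtype.ext
    ext i j
    fin_cases i <;> fin_cases j <;> assumption

lemma s2_det (A : S2 F) : A.1 0 0 * A.1 1 1 - A.1 0 1 * A.1 1 0 = 1 := by
  rw [← Matrix.det_fin_two]; exact A.2

@[simp] lemma s2_mul_00 (A B : S2 F) :
    (A * B).1 0 0 = A.1 0 0 * B.1 0 0 + A.1 0 1 * B.1 1 0 := by
  simp [Matrix.mul_apply, Fin.sum_univ_two]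
@[simp] lemma s2_mul_01 (A B : S2 F) :
    (A * B).1 0 1 = A.1 0 0 * B.1 0 1 + A.1 0 1 * B.1 1 1 := by
  simp [Matrix.mul_apply, Fin.sum_univ_two]
@[simp] lemma s2_mul_10 (A B : S2 F) :
    (A * B).1 1 0 = A.1 1 0 * B.1 0 0 + A.1 1 1 * B.1 1 0 := by
  simp [Matrix.mul_apply, Fin.sum_univ_two]
@[simp] lemma s2_mul_11 (A B : S2 F) :
    (A * B).1 1 1 = A.1 1 0 * B.1 0 1 + A.1 1 1 * B.1 1 1 := by
  simp [Matrix.mul_apply, Fin.sum_univ_two]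
@[simp] lemma s2_one_00 : (1 : S2 F).1 0 0 = 1 := rfl
@[simp] lemma s2_one_01 : (1 : S2 F).1 0 1 = 0 := rfl
@[simp] lemma s2_one_10 : (1 : S2 F).1 1 0 = 0 := rfl
@[simp] lemma s2_one_11 : (1 : S2 F).1 1 1 = 1 := rfl
@[simp] lemma s2_neg_apply (A : S2 F) (i j : Fin 2) : (-A).1 i j = - A.1 i j := rfl

/-- Matrices commuting with a fixed non-scalar `2 × 2` matrix commute with each other. -/
lemma s2_comm_trans {A B C : S2 F} (hA1 : A ≠ 1) (hA2 : A ≠ -1)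
    (hAB : A * B = B * A) (hAC : A * C = C * A) : B * C = C * B := by
  have hd := s2_det A
  rw [s2_ext_iff] at hAB hAC ⊢
  simp only [s2_mul_00, s2_mul_01, s2_mul_10, s2_mul_11] at hAB hAC ⊢
  obtain ⟨b1, b2, b3, b4⟩ := hAB
  obtain ⟨c1, c2, c3, c4⟩ := hAC
  have hns : A.1 0 1 ≠ 0 ∨ A.1 1 0 ≠ 0 ∨ A.1 0 0 - A.1 1 1 ≠ 0 := by
    by_contra! hcon
    obtain ⟨h1, h2, h3⟩ := hcon
    have h4 : A.1 0 0 = A.1 1 1 := sub_eq_zero.mp h3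
    have h5 : A.1 1 1 * A.1 1 1 = 1 := by rw [h1, h4] at hd; simpa using hd
    rcases mul_self_eq_one_iff.mp h5 with h | h
    · exact hA1 ((s2_ext_iff _ _).2 ⟨by rw [h4, h]; rfl, h1, h2, h⟩)
    · refine hA2 ((s2_ext_iff _ _).2 ⟨?_, ?_, ?_, ?_⟩) <;> simp [h1, h2, h4, h]
  -- the three coordinates `(b, c, a - d)` of `B` and of `C` are both proportional to those of `A`
  have e1 : A.1 0 1 * (B.1 0 1 * C.1 1 0 - C.1 0 1 * B.1 1 0) = 0 ∧
      A.1 1 0 * (B.1 0 1 * C.1 1 0 - C.1 0 1 * B.1 1 0) = 0 ∧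
      (A.1 0 0 - A.1 1 1) * (B.1 0 1 * C.1 1 0 - C.1 0 1 * B.1 1 0) = 0 := by
    refine ⟨?_, ?_, ?_⟩ <;> grind
  have e2 : A.1 0 1 * (B.1 0 1 * (C.1 0 0 - C.1 1 1) - C.1 0 1 * (B.1 0 0 - B.1 1 1)) = 0 ∧
      A.1 1 0 * (B.1 0 1 * (C.1 0 0 - C.1 1 1) - C.1 0 1 * (B.1 0 0 - B.1 1 1)) = 0 ∧
      (A.1 0 0 - A.1 1 1) *
        (B.1 0 1 * (C.1 0 0 - C.1 1 1) - C.1 0 1 * (B.1 0 0 - B.1 1 1)) = 0 := by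
    refine ⟨?_, ?_, ?_⟩ <;> grind
  have e3 : A.1 0 1 * (B.1 1 0 * (C.1 0 0 - C.1 1 1) - C.1 1 0 * (B.1 0 0 - B.1 1 1)) = 0 ∧
      A.1 1 0 * (B.1 1 0 * (C.1 0 0 - C.1 1 1) - C.1 1 0 * (B.1 0 0 - B.1 1 1)) = 0 ∧
      (A.1 0 0 - A.1 1 1) *
        (B.1 1 0 * (C.1 0 0 - C.1 1 1) - C.1 1 0 * (B.1 0 0 - B.1 1 1)) = 0 := by
    refine ⟨?_, ?_, ?_⟩ <;> grind
  have key : ∀ z : F, A.1 0 1 * z = 0 ∧ A.1 1 0 * z = 0 ∧ (A.1 0 0 - A.1 1 1) * z = 0 →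
      z = 0 := by
    rintro z ⟨h1, h2, h3⟩
    rcases hns with h | h | h
    · exact (mul_eq_zero.mp h1).resolve_left h
    · exact (mul_eq_zero.mp h2).resolve_left h
    · exact (mul_eq_zero.mp h3).resolve_left h
  have f1 := key _ e1
  have f2 := key _ e2
  have f3 := key _ e3
  exact ⟨by linear_combination f1, by linear_combination -f2, by linear_combination f3, by
    linear_combination -f1⟩

/-- Trace of an element of `SL(2, F)`. -/
def tr2 (A : S2 F) : F := A.1 0 0 + A.1 1 1

lemma s2_sq_one {A : S2 F} (h : A * A = 1) : A = 1 ∨ A = -1 ∨ tr2 A = 0 := by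
  have hd := s2_det A
  rw [s2_ext_iff] at h
  simp only [s2_mul_00, s2_mul_01, s2_mul_10, s2_mul_11, s2_one_00, s2_one_01, s2_one_10,
    s2_one_11] at h
  obtain ⟨h1, h2, h3, h4⟩ := h
  by_cases ht : tr2 A = 0
  · exact Or.inr (Or.inr ht)
  unfold tr2 at ht
  have hb : A.1 0 1 = 0 := (mul_eq_zero.mp (show (A.1 0 0 + A.1 1 1) * A.1 0 1 = 0 by
    linear_combination h2)).resolve_left ht
  have hc : A.1 1 0 = 0 := (mul_eq_zero.mp (show (A.1 0 0 + A.1 1 1) * A.1 1 0 = 0 by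
    linear_combination h3)).resolve_left ht
  have had : A.1 0 0 - A.1 1 1 = 0 := (mul_eq_zero.mp
    (show (A.1 0 0 + A.1 1 1) * (A.1 0 0 - A.1 1 1) = 0 by
      linear_combination h1 - h4)).resolve_left ht
  have h5 : A.1 1 1 * A.1 1 1 = 1 := by rw [hb] at h4; simpa using h4
  have h6 := sub_eq_zero.mp had
  rcases mul_self_eq_one_iff.mp h5 with h | h
  · exact Or.inl ((s2_ext_iff _ _).2 ⟨by rw [h6, h]; rfl, hb, hc, h⟩)
  · exact Or.inr (Or.inl ((s2_ext_iff _ _).2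
      ⟨by simp [h6, h], by simp [hb], by simp [hc], by simp [h]⟩))

lemma s2_sq_neg_one {A : S2 F} (h : A * A = -1) : tr2 A = 0 := by
  have hd := s2_det A
  rw [s2_ext_iff] at h
  simp only [s2_mul_00, s2_mul_01, s2_mul_10, s2_mul_11, s2_neg_apply, s2_one_00, s2_one_01,
    s2_one_10, s2_one_11] at h
  obtain ⟨h1, h2, h3, h4⟩ := h
  unfold tr2
  by_contra ht
  have h00 : A.1 0 0 = 0 := (mul_eq_zero.mp (show (A.1 0 0 + A.1 1 1) * A.1 0 0 = 0 by
    linear_combination h1 + hd)).resolve_left ht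
  have h11 : A.1 1 1 = 0 := (mul_eq_zero.mp (show (A.1 0 0 + A.1 1 1) * A.1 1 1 = 0 by
    linear_combination h4 + hd)).resolve_left ht
  exact ht (by rw [h00, h11, add_zero])

lemma s2_sq_of_tr {A : S2 F} (h : tr2 A = 0) : A * A = -1 := by
  have hd := s2_det A
  unfold tr2 at h
  rw [s2_ext_iff]
  simp only [s2_mul_00, s2_mul_01, s2_mul_10, s2_mul_11, s2_neg_apply, s2_one_00, s2_one_01,
    s2_one_10, s2_one_11]
  refine ⟨?_, ?_, ?_, ?_⟩
  · linear_combination A.1 0 0 * h - hd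
  · linear_combination A.1 0 1 * h
  · linear_combination A.1 1 0 * h
  · linear_combination A.1 1 1 * h - hd

/-- If `AB = -BA` then `A` has trace zero outside characteristic two. -/
lemma s2_anticomm_tr {A B : S2 F} (h2 : (2 : F) ≠ 0) (h : A * B = -(B * A)) : tr2 A = 0 := by
  have hd := s2_det B
  rw [s2_ext_iff] at h
  simp only [s2_mul_00, s2_mul_01, s2_mul_10, s2_mul_11, s2_neg_apply] at h
  obtain ⟨h1, h2', h3, h4⟩ := h
  have : 2 * tr2 A = 0 := by
    unfold tr2
    linear_combination B.1 1 1 * h1 - B.1 1 0 * h2' - B.1 0 1 * h3 + B.1 0 0 * h4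
      - 2 * (A.1 0 0 + A.1 1 1) * hd
  exact (mul_eq_zero.mp this).resolve_left h2

/-- The Weyl element `[0, -1; 1, 0]`. -/
def weyl : S2 F := mk2 0 (-1) 1 0 (by ring)

/-- Over a finite field, all trace-zero elements of `SL(2, F)` other than `± 1` are conjugate:
if `v` satisfies `det (v, A v) = 1` then `P = (v | A v)` conjugates `A` to `weyl`.  The required
vector exists because every element of `F` is a sum of two squares. -/
lemma s2_conj_weyl [Fintype F] {A : S2 F} (hA1 : A ≠ 1) (hA2 : A ≠ -1) (ht : tr2 A = 0) :
    ∃ P : S2 F, A * P = P * weyl := by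
  have hd := s2_det A
  unfold tr2 at ht
  have hd' : A.1 1 1 = - A.1 0 0 := by linear_combination ht
  suffices h : ∃ x y : F, A.1 1 0 * x ^ 2 - 2 * A.1 0 0 * x * y - A.1 0 1 * y ^ 2 = 1 by
    obtain ⟨x, y, hxy⟩ := h
    refine ⟨mk2 x (A.1 0 0 * x + A.1 0 1 * y) y (A.1 1 0 * x + A.1 1 1 * y) ?_, ?_⟩
    · rw [hd']; linear_combination hxy
    · rw [s2_ext_iff]
      simp only [s2_mul_00, s2_mul_01, s2_mul_10, s2_mul_11, mk2_00, mk2_01, mk2_10, mk2_11, weyl]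
      refine ⟨by ring, ?_, by ring, ?_⟩
      · linear_combination (A.1 0 0 * x + A.1 0 1 * y) * ht - x * hd
      · linear_combination (A.1 1 0 * x + A.1 1 1 * y) * ht - y * hd
  have hsq : ∀ c : F, ∃ s t : F, s ^ 2 + t ^ 2 = c := by
    intro c
    by_cases hch : ringChar F = 2
    · obtain ⟨s, hs⟩ := FiniteField.isSquare_of_char_two hch c
      exact ⟨s, 0, by rw [hs]; ring⟩
    · have hodd := FiniteField.odd_card_of_char_ne_two hch
      obtain ⟨a, b, hab⟩ := FiniteField.exists_root_sum_quadratic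
        (f := (Polynomial.X ^ 2 : Polynomial F)) (g := Polynomial.X ^ 2 - Polynomial.C c)
        (Polynomial.degree_X_pow 2) (Polynomial.degree_X_pow_sub_C (by decide) _) hodd
      refine ⟨a, b, ?_⟩
      simp only [Polynomial.eval_pow, Polynomial.eval_X, Polynomial.eval_sub,
        Polynomial.eval_C] at hab
      linear_combination hab
  by_cases hc : A.1 1 0 = 0
  · have ha : A.1 0 0 ^ 2 = -1 := by rw [hc, hd'] at hd; linear_combination -hd
    have ha0 : A.1 0 0 ≠ 0 := by rintro h; rw [h] at ha; simp at ha
    by_cases hb : A.1 0 1 = 0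
    · have h2 : (2 : F) ≠ 0 := by
        intro h2
        have h1 : A.1 1 1 = A.1 0 0 := by linear_combination hd' - A.1 0 0 * h2
        have h3 : A.1 0 0 * A.1 0 0 = 1 := by linear_combination ha - h2
        rcases mul_self_eq_one_iff.mp h3 with h | h
        · exact hA1 ((s2_ext_iff _ _).2 ⟨h, hb, hc, by rw [h1, h]; rfl⟩)
        · exact hA2 ((s2_ext_iff _ _).2
            ⟨by simp [h], by simp [hb], by simp [hc], by simp [h1, h]⟩)
      refine ⟨1, -1 / (2 * A.1 0 0), ?_⟩
      rw [hc, hb]; field_simp; ring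
    · by_cases h2 : (2 : F) = 0
      · obtain ⟨s, t, hst⟩ := hsq ((A.1 0 1)⁻¹)
        refine ⟨0, s + t, ?_⟩
        have : A.1 0 1 * (s ^ 2 + t ^ 2) = 1 := by rw [hst]; field_simp
        rw [hc]
        linear_combination -this - (1 + A.1 0 1 * s * t) * h2
      · refine ⟨-(1 + A.1 0 1) / (2 * A.1 0 0), 1, ?_⟩
        rw [hc]; field_simp; ring
  · obtain ⟨s, t, hst⟩ := hsq (A.1 1 0)
    refine ⟨(s + A.1 0 0 * t) / A.1 1 0, t, ?_⟩
    have : A.1 0 1 * A.1 1 0 = - A.1 0 0 ^ 2 - 1 := by rw [hd'] at hd; linear_combination -hd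
    have h3 : A.1 1 0 * (A.1 1 0 * ((s + A.1 0 0 * t) / A.1 1 0) ^ 2 - 2 * A.1 0 0 *
        ((s + A.1 0 0 * t) / A.1 1 0) * t - A.1 0 1 * t ^ 2) = A.1 1 0 * 1 := by
      field_simp
      linear_combination hst - t ^ 2 * this
    exact mul_left_cancel₀ hc h3

lemma s2_card [Fintype F] :
    Nat.card (S2 F) = Fintype.card F * (Fintype.card F - 1) * (Fintype.card F + 1) := by
  classical
  let f : (Fˣ × F × F) ⊕ (Fˣ × F) → S2 F := fun s => match s with
    | Sum.inl (a, b, c) => mk2 (a : F) b c ((1 + b * c) * (a : F)⁻¹) (by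
        have := a.ne_zero; field_simp; ring)
    | Sum.inr (c, d) => mk2 0 (-(c : F)⁻¹) (c : F) d (by have := c.ne_zero; field_simp; ring)
  have hf : Function.Bijective f := by
    constructor
    · rintro (⟨a, b, c⟩ | ⟨c, d⟩) (⟨a', b', c'⟩ | ⟨c', d'⟩) h <;>
        rw [s2_ext_iff] at h <;> simp only [f, mk2_00, mk2_01, mk2_10, mk2_11] at h
      · simp [Units.ext_iff, h.1, h.2.1, h.2.2.1]
      · exact absurd h.1 a.ne_zero
      · exact absurd h.1.symm a'.ne_zero
      · simp [Units.ext_iff, h.2.2.1, h.2.2.2]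
    · intro A
      have hd := s2_det A
      by_cases h : A.1 0 0 = 0
      · have hc : A.1 1 0 ≠ 0 := by rintro hc; rw [h, hc] at hd; simp at hd
        refine ⟨Sum.inr (Units.mk0 _ hc, A.1 1 1), ?_⟩
        rw [s2_ext_iff]
        simp only [f, mk2_00, mk2_01, mk2_10, mk2_11, Units.val_mk0, h, true_and, and_true]
        rw [h] at hd
        field_simp
        linear_combination hd
      · refine ⟨Sum.inl (Units.mk0 _ h, A.1 0 1, A.1 1 0), ?_⟩
        rw [s2_ext_iff]
        simp only [f, mk2_00, mk2_01, mk2_10, mk2_11, Units.val_mk0, true_and]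
        field_simp
        linear_combination -hd
  rw [← Nat.card_eq_of_bijective f hf, Nat.card_eq_fintype_card]
  simp only [Fintype.card_sum, Fintype.card_prod, Fintype.card_units]
  ring

/-- The number of trace-zero elements of `SL(2, F)`, in terms of the number of square roots
of `-1`. -/
lemma s2_card_tr [Fintype F] :
    Nat.card {A : S2 F // tr2 A = 0} = Fintype.card F * (Fintype.card F - 1) +
      Nat.card {a : F // a ^ 2 = -1} * Fintype.card F := by
  classical
  let f : (F × Fˣ) ⊕ ({a : F // a ^ 2 = -1} × F) → {A : S2 F // tr2 A = 0} := fun s => match s with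
    | Sum.inl (a, b) => ⟨mk2 a b (-(1 + a ^ 2) * (b : F)⁻¹) (-a) (by
        have := b.ne_zero; field_simp; ring), by simp [tr2]⟩
    | Sum.inr (a, c) => ⟨mk2 a.1 0 c (-a.1) (by linear_combination -a.2), by simp [tr2]⟩
  have hf : Function.Bijective f := by
    constructor
    · rintro (⟨a, b⟩ | ⟨a, c⟩) (⟨a', b'⟩ | ⟨a', c'⟩) h <;>
        rw [Subtype.ext_iff, s2_ext_iff] at h <;>
        simp only [f, mk2_00, mk2_01, mk2_10, mk2_11] at h
      · simp [Units.ext_iff, h.1, h.2.1]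
      · exact absurd h.2.1 b.ne_zero
      · exact absurd h.2.1.symm b'.ne_zero
      · simp [Subtype.ext_iff, h.1, h.2.2.1]
    · rintro ⟨A, ht⟩
      have hd := s2_det A
      unfold tr2 at ht
      have hd' : A.1 1 1 = - A.1 0 0 := by linear_combination ht
      by_cases h : A.1 0 1 = 0
      · refine ⟨Sum.inr (⟨A.1 0 0, by rw [h, hd'] at hd; linear_combination -hd⟩, A.1 1 0), ?_⟩
        rw [Subtype.ext_iff, s2_ext_iff]
        simp only [f, mk2_00, mk2_01, mk2_10, mk2_11, h, hd', and_self]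
      · refine ⟨Sum.inl (A.1 0 0, Units.mk0 _ h), ?_⟩
        rw [Subtype.ext_iff, s2_ext_iff]
        simp only [f, mk2_00, mk2_01, mk2_10, mk2_11, Units.val_mk0, true_and, hd', and_true]
        rw [hd'] at hd
        field_simp
        linear_combination hd
  rw [← Nat.card_eq_of_bijective f hf, Nat.card_eq_fintype_card]
  simp only [Fintype.card_sum, Fintype.card_prod, Fintype.card_units, Nat.card_eq_fintype_card]

end Mat

/-! ### The group-theoretic configuration -/

/-- The pointwise stabilizer of `β` in the image `X` of `pr`, as a subgroup of the big group. -/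
def Xs {F : Type} [Field F] {G Pt : Type*} [Group G] [MulAction G Pt] (pr : S2 F →* G) (β : Pt) :
    Subgroup G := pr.range ⊓ MulAction.stabilizer G β

lemma mem_Xs {F : Type} [Field F] {G Pt : Type*} [Group G] [MulAction G Pt] {pr : S2 F →* G}
    {g : G} {β : Pt} : g ∈ Xs pr β ↔ (∃ A, pr A = g) ∧ g • β = β := Iff.rfl

/-- The standing group-theoretic assumptions.  The socle `X ≅ PSL(2, F)` is described as the range
of a homomorphism `pr : SL(2, F) → G` with kernel `{1, -1}`; it is normal, simple and has trivial
centralizer in `G`; it is transitive on `Pt`, and all its point stabilizers are maximal in `X` and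
dihedral of order `2 * n`, where `n = (q + 1) / gcd (2, q - 1)`. -/
structure Cfg (F : Type) [Field F] [Fintype F] (G Pt : Type*) [Group G] [MulAction G Pt]
    (pr : S2 F →* G) (n : ℕ) : Prop where
  card_ge : 4 ≤ Fintype.card F
  n_eq : n = (Fintype.card F + 1) / Nat.gcd 2 (Fintype.card F - 1)
  eq_iff : ∀ A B, pr A = pr B ↔ A = B ∨ A = -B
  norm : ∀ g A, ∃ B, g * pr A * g⁻¹ = pr B
  cent : ∀ g, (∀ A, g * pr A = pr A * g) → g = 1
  simple : ∀ H : Subgroup G, H ≤ pr.range → (∀ A, ∀ h ∈ H, pr A * h * (pr A)⁻¹ ∈ H) →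
    H = ⊥ ∨ H = pr.range
  trans : ∀ β γ : Pt, ∃ A, pr A • β = γ
  dih : ∀ β : Pt, ∃ e : DihedralGroup n →* G, Function.Injective e ∧ e.range = Xs pr β
  max : ∀ (β : Pt) (H : Subgroup G), H ≤ pr.range → Xs pr β ≤ H → H = Xs pr β ∨ H = pr.range

section
variable {F : Type} [Field F] [Fintype F] {G Pt : Type*} [Group G] [MulAction G Pt]
  {pr : S2 F →* G} {n : ℕ}

lemma char_two_iff : (2 : F) = 0 ↔ Fintype.card F % 2 = 0 := by
  constructor
  · intro h
    apply FiniteField.even_card_of_char_two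
    by_contra hc
    exact Ring.two_ne_zero hc h
  · intro h
    by_contra hc
    have : ringChar F ≠ 2 := by
      intro h2
      apply hc
      have := ringChar.Nat.cast_ringChar (R := F)
      rw [h2] at this
      exact_mod_cast this
    have := FiniteField.odd_card_of_char_ne_two this
    omega

lemma pr_neg (h : Cfg F G Pt pr n) (A : S2 F) : pr (-A) = pr A :=
  (h.eq_iff _ _).2 (Or.inr rfl)

lemma three_le_n (h : Cfg F G Pt pr n) : 3 ≤ n := by
  have h1 := h.card_ge
  have h2 := h.n_eq
  set q := Fintype.card F
  have h3 : Nat.gcd 2 (q - 1) ∣ 2 := Nat.gcd_dvd_left _ _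
  have h4 : Nat.gcd 2 (q - 1) = 1 ∨ Nat.gcd 2 (q - 1) = 2 := (Nat.dvd_prime Nat.prime_two).1 h3
  rcases h4 with h4 | h4
  · rw [h4] at h2; omega
  · have h5 : 2 ∣ q - 1 := h4 ▸ Nat.gcd_dvd_right 2 (q - 1)
    rw [h4] at h2; omega

lemma n_even (h : Cfg F G Pt pr n) (h2 : Fintype.card F % 2 = 0) : n = Fintype.card F + 1 := by
  have h1 := h.card_ge
  have h3 := h.n_eq
  set q := Fintype.card F
  have h4 : Nat.gcd 2 (q - 1) = 1 := by
    have : Nat.Coprime 2 (q - 1) := (Nat.coprime_two_left).2 ⟨q / 2 - 1, by omega⟩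
    exact this
  rw [h4] at h3; omega

lemma n_odd (h : Cfg F G Pt pr n) (h2 : Fintype.card F % 2 = 1) : 2 * n = Fintype.card F + 1 := by
  have h1 := h.card_ge
  have h3 := h.n_eq
  set q := Fintype.card F
  have h4 : Nat.gcd 2 (q - 1) = 2 := Nat.gcd_eq_left (by omega)
  rw [h4] at h3; omega

/-- Commuting is transitive at elements of `X` which are not of order at most two. -/
lemma comm_trans (h : Cfg F G Pt pr n) {A B C : S2 F} (hA : pr A * pr A ≠ 1)
    (hB : pr A * pr B = pr B * pr A) (hC : pr A * pr C = pr C * pr A) :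
    pr B * pr C = pr C * pr B := by
  have key : ∀ D : S2 F, pr A * pr D = pr D * pr A → A * D = D * A := by
    intro D hD
    rw [← map_mul, ← map_mul, h.eq_iff] at hD
    rcases hD with hD | hD
    · exact hD
    by_cases h2 : (2 : F) = 0
    · rw [hD, s2_ext_iff]
      have : ∀ x : F, -x = x := fun x => by linear_combination -x * h2
      simp only [s2_neg_apply, this, and_self]
    · exfalso
      apply hA
      rw [← map_mul, s2_sq_of_tr (s2_anticomm_tr h2 hD), pr_neg h, map_one]
  have hA1 : A ≠ 1 := by rintro rfl; simp at hA
  have hA2 : A ≠ -1 := by rintro rfl; rw [pr_neg h] at hA; simp at hA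
  rw [← map_mul, ← map_mul, s2_comm_trans hA1 hA2 (key B hB) (key C hC)]

/-- In characteristic two, commuting is transitive on all non-trivial elements of `X`. -/
lemma comm_trans_two (h : Cfg F G Pt pr n) (h2 : (2 : F) = 0) {A B C : S2 F} (hA : pr A ≠ 1)
    (hB : pr A * pr B = pr B * pr A) (hC : pr A * pr C = pr C * pr A) :
    pr B * pr C = pr C * pr B := by
  have key : ∀ D : S2 F, pr A * pr D = pr D * pr A → A * D = D * A := by
    intro D hD
    rw [← map_mul, ← map_mul, h.eq_iff] at hD
    rcases hD with hD | hD
    · exact hD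
    · rw [hD, s2_ext_iff]
      have : ∀ x : F, -x = x := fun x => by linear_combination -x * h2
      simp only [s2_neg_apply, this, and_self]
  have hA1 : A ≠ 1 := by rintro rfl; simp at hA
  have hA2 : A ≠ -1 := by rintro rfl; rw [pr_neg h] at hA; simp at hA
  rw [← map_mul, ← map_mul, s2_comm_trans hA1 hA2 (key B hB) (key C hC)]

/-- `pr A` is an involution or trivial iff `A` is `± 1` or has trace zero. -/
lemma pr_sq (h : Cfg F G Pt pr n) {A : S2 F} :
    pr A * pr A = 1 ↔ pr A = 1 ∨ tr2 A = 0 := by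
  constructor
  · intro hA
    rw [← map_mul, ← map_one pr, h.eq_iff] at hA
    rcases hA with hA | hA
    · rcases s2_sq_one hA with h1 | h1 | h1
      · left; rw [h1, map_one]
      · left; rw [h1, pr_neg h, map_one]
      · exact Or.inr h1
    · exact Or.inr (s2_sq_neg_one hA)
  · rintro (h1 | h1)
    · rw [h1, one_mul]
    · rw [← map_mul, s2_sq_of_tr h1, pr_neg h, map_one]

/-- All involutions of `X` are conjugate in `X`. -/
lemma inv_conj (h : Cfg F G Pt pr n) {A B : S2 F} (hA : pr A * pr A = 1) (hA1 : pr A ≠ 1)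
    (hB : pr B * pr B = 1) (hB1 : pr B ≠ 1) : ∃ P, pr P * pr A * (pr P)⁻¹ = pr B := by
  have key : ∀ C : S2 F, pr C * pr C = 1 → pr C ≠ 1 → ∃ P : S2 F, C * P = P * weyl := by
    intro C hC hC1
    apply s2_conj_weyl
    · rintro rfl; simp at hC1
    · rintro rfl; rw [pr_neg h] at hC1; simp at hC1
    · exact ((pr_sq h).1 hC).resolve_left hC1
  obtain ⟨P, hP⟩ := key A hA hA1
  obtain ⟨Q, hQ⟩ := key B hB hB1
  refine ⟨Q * P⁻¹, ?_⟩
  have h1 : A = P * weyl * P⁻¹ := by rw [← hP]; group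
  have h2 : B = Q * weyl * Q⁻¹ := by rw [← hQ]; group
  rw [← map_inv, ← map_mul, ← map_mul, h1, h2]
  congr 1
  group

lemma Xs_ne_bot (h : Cfg F G Pt pr n) (β : Pt) : ∃ x ∈ Xs pr β, ∃ y ∈ Xs pr β, x * y ≠ y * x := by
  obtain ⟨e, he, her⟩ := h.dih β
  have hn := three_le_n h
  refine ⟨e (.r 1), her ▸ ⟨_, rfl⟩, e (.sr 0), her ▸ ⟨_, rfl⟩, ?_⟩
  rw [← map_mul, ← map_mul]
  intro hc
  have := he hc
  rw [DihedralGroup.r_mul_sr, DihedralGroup.sr_mul_r] at this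
  simp only [DihedralGroup.sr.injEq] at this
  have h2 : ((2 : ℕ) : ZMod n) = 0 := by push_cast; linear_combination -this
  rw [ZMod.natCast_eq_zero_iff] at h2
  have := Nat.le_of_dvd (by norm_num) h2
  omega

lemma conj_mem_Xs (h : Cfg F G Pt pr n) {x g : G} {β : Pt} (hx : x ∈ Xs pr β) :
    g * x * g⁻¹ ∈ Xs pr (g • β) := by
  obtain ⟨⟨A, rfl⟩, hx⟩ := hx
  obtain ⟨B, hB⟩ := h.norm g A
  refine ⟨⟨B, hB.symm⟩, ?_⟩
  have hx : pr A • β = β := hx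
  change (g * pr A * g⁻¹) • g • β = g • β
  rw [mul_smul, mul_smul, inv_smul_smul, hx]

lemma conj_mem_Xs' (h : Cfg F G Pt pr n) {x g : G} {β : Pt} (hx : x ∈ Xs pr (g • β)) :
    g⁻¹ * x * g ∈ Xs pr β := by
  have := conj_mem_Xs h (g := g⁻¹) hx
  rwa [inv_inv, inv_smul_smul] at this

/-- Distinct points have distinct stabilizers in `X`. -/
lemma Xs_inj (h : Cfg F G Pt pr n) {β γ : Pt} (he : Xs pr β = Xs pr γ) : β = γ := by
  by_contra hne
  let H : Subgroup G := pr.range ⊓ (Subgroup.normalizer (Xs pr β : Set G))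
  have hle : Xs pr β ≤ H := le_inf inf_le_left Subgroup.le_normalizer
  rcases h.max β H inf_le_left hle with hH | hH
  · obtain ⟨A, hA⟩ := h.trans β γ
    have : pr A ∈ H := by
      refine ⟨⟨A, rfl⟩, ?_⟩
      refine Subgroup.mem_normalizer_iff.2 ?_
      intro x
      constructor
      · intro hx
        have := conj_mem_Xs h (g := pr A) hx
        rw [hA, ← he] at this
        exact this
      · intro hx
        rw [he, ← hA] at hx
        have := conj_mem_Xs' h hx
        simpa [mul_assoc] using this
    rw [hH] at this
    exact hne (this.2.symm.trans hA)
  · have hnorm : ∀ A, ∀ x ∈ Xs pr β, pr A * x * (pr A)⁻¹ ∈ Xs pr β := by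
      intro A x hx
      have : pr A ∈ H := hH ▸ ⟨A, rfl⟩
      exact (Subgroup.mem_normalizer_iff.1 this.2 x).1 hx
    rcases h.simple (Xs pr β) inf_le_left hnorm with h1 | h1
    · obtain ⟨x, hx, y, hy, hxy⟩ := Xs_ne_bot h β
      rw [h1, Subgroup.mem_bot] at hx hy
      exact hxy (by rw [hx, hy])
    · obtain ⟨A, hA⟩ := h.trans β γ
      have : pr A ∈ Xs pr β := h1 ▸ ⟨A, rfl⟩
      exact hne (this.2.symm.trans hA)

lemma Xs_conj_or (h : Cfg F G Pt pr n) {β : Pt} {x g : G} (hx : x ∈ Xs pr β) (hxx : x * x ≠ 1)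
    (hg : g ∈ Xs pr β) : g * x * g⁻¹ = x ∨ g * x * g⁻¹ = x⁻¹ := by
  obtain ⟨e, he, her⟩ := h.dih β
  rw [← her] at hx hg
  obtain ⟨d, rfl⟩ := hx
  obtain ⟨c, rfl⟩ := hg
  cases d with
  | sr i => exact absurd (by rw [← map_mul, DihedralGroup.sr_mul_sr, sub_self]; exact map_one e) hxx
  | r i =>
    cases c with
    | r j =>
      left
      rw [← map_inv, ← map_mul, ← map_mul]
      congr 1
      simp [DihedralGroup.inv_r]
    | sr j =>
      right
      rw [← map_inv, ← map_mul, ← map_mul, ← map_inv]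
      congr 1
      simp [DihedralGroup.inv_r, DihedralGroup.inv_sr]

/-- An element of `X` fixing two distinct points has order at most two.  Otherwise it would be a
rotation in both (dihedral) stabilizers, and the normalizer of its abelian centralizer would
contain both of them. -/
lemma fix_two (h : Cfg F G Pt pr n) {β γ : Pt} (hne : β ≠ γ) {x : G} (hβ : x ∈ Xs pr β)
    (hγ : x ∈ Xs pr γ) : x * x = 1 := by
  by_contra hxx
  let C : Subgroup G := pr.range ⊓ Subgroup.centralizer {x}
  have hC : ∀ y, y ∈ C ↔ y ∈ pr.range ∧ x * y = y * x := by
    intro y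
    simp [C, Subgroup.mem_centralizer_iff]
  have hrange : ∀ g ∈ pr.range, ∀ y ∈ pr.range, g * y * g⁻¹ ∈ pr.range := fun g hg y hy =>
    mul_mem (mul_mem hg hy) (inv_mem hg)
  have hcl : ∀ g ∈ pr.range, (g * x * g⁻¹ = x ∨ g * x * g⁻¹ = x⁻¹) → ∀ y ∈ C,
      g * y * g⁻¹ ∈ C := by
    intro g hg hgx y hy
    rw [hC] at hy ⊢
    refine ⟨hrange g hg y hy.1, ?_⟩
    have h1 : (g * x * g⁻¹) * (g * y * g⁻¹) = (g * y * g⁻¹) * (g * x * g⁻¹) := by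
      have := hy.2
      calc (g * x * g⁻¹) * (g * y * g⁻¹) = g * (x * y) * g⁻¹ := by group
        _ = g * (y * x) * g⁻¹ := by rw [this]
        _ = _ := by group
    rcases hgx with hgx | hgx
    · rwa [hgx] at h1
    · rw [hgx] at h1
      calc x * (g * y * g⁻¹) = x * (g * y * g⁻¹ * x⁻¹) * x := by group
        _ = x * (x⁻¹ * (g * y * g⁻¹)) * x := by rw [h1]
        _ = _ := by group
  let N : Subgroup G := pr.range ⊓ (Subgroup.normalizer (C : Set G))
  have hle : ∀ δ : Pt, x ∈ Xs pr δ → Xs pr δ ≤ N := by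
    intro δ hδ g hg
    refine ⟨hg.1, ?_⟩
    refine Subgroup.mem_normalizer_iff.2 ?_
    intro y
    constructor
    · exact hcl g hg.1 (Xs_conj_or h hδ hxx hg) y
    · intro hy
      have := hcl g⁻¹ (inv_mem hg.1) (Xs_conj_or h hδ hxx (inv_mem hg)) _ hy
      simpa [mul_assoc] using this
  have hN : N = pr.range := by
    rcases h.max β N inf_le_left (hle β hβ) with h1 | h1
    · rcases h.max γ N inf_le_left (hle γ hγ) with h2 | h2
      · exact absurd (Xs_inj h (h1.symm.trans h2)) hne
      · exact h2
    · exact h1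
  obtain ⟨A, rfl⟩ := hβ.1
  have hxC : pr A ∈ C := (hC _).2 ⟨⟨A, rfl⟩, rfl⟩
  rcases h.simple C inf_le_left (fun B y hy => by
      have : pr B ∈ N := hN ▸ ⟨B, rfl⟩
      exact (Subgroup.mem_normalizer_iff.1 this.2 y).1 hy) with h1 | h1
  · rw [h1, Subgroup.mem_bot] at hxC
    exact hxx (by rw [hxC, one_mul])
  · obtain ⟨y, hy, z, hz, hyz⟩ := Xs_ne_bot h β
    obtain ⟨B, rfl⟩ := hy.1
    obtain ⟨D, rfl⟩ := hz.1
    apply hyz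
    apply comm_trans h hxx
    · exact ((hC _).1 (h1 ▸ ⟨B, rfl⟩)).2
    · exact ((hC _).1 (h1 ▸ ⟨D, rfl⟩)).2

end

/-! ### Counting tools -/

lemma double_count_le {A B : Type*} [Finite A] [Finite B] (R : A → B → Prop) (S : Set A)
    (T : Set B) (a b : ℕ) (h1 : ∀ x ∈ S, a ≤ {y ∈ T | R x y}.ncard)
    (h2 : ∀ y ∈ T, {x ∈ S | R x y}.ncard ≤ b) : S.ncard * a ≤ T.ncard * b := by
  classical
  cases nonempty_fintype A
  cases nonempty_fintype B
  rw [Set.ncard_eq_toFinset_card', Set.ncard_eq_toFinset_card']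
  refine Finset.card_mul_le_card_mul R ?_ ?_
  · intro x hx
    convert h1 x (by simpa using hx)
    rw [Set.ncard_eq_toFinset_card']
    congr 1; ext y; simp [Finset.mem_bipartiteAbove]
  · intro y hy
    convert h2 y (by simpa using hy)
    rw [Set.ncard_eq_toFinset_card']
    congr 1; ext y; simp [Finset.mem_bipartiteBelow]

lemma double_count {A B : Type*} [Finite A] [Finite B] (R : A → B → Prop) (S : Set A)
    (T : Set B) (a b : ℕ) (h1 : ∀ x ∈ S, {y ∈ T | R x y}.ncard = a)
    (h2 : ∀ y ∈ T, {x ∈ S | R x y}.ncard = b) : S.ncard * a = T.ncard * b :=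
  le_antisymm
    (double_count_le R S T a b (fun x hx => (h1 x hx).ge) (fun y hy => (h2 y hy).le))
    (double_count_le (fun y x => R x y) T S b a (fun x hx => (h2 x hx).ge)
      (fun y hy => (h1 y hy).le))

/-- Orbit-stabilizer for a subgroup `K` of `G`. -/
lemma orbit_stab {G Y : Type*} [Group G] [MulAction G Y] (K : Subgroup G) (y : Y) :
    {z : Y | ∃ g ∈ K, g • y = z}.ncard * Nat.card (K ⊓ MulAction.stabilizer G y : Subgroup G) =
      Nat.card K := by
  have h1 := Nat.card_congr (MulAction.orbitProdStabilizerEquivGroup K y)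
  rw [Nat.card_prod] at h1
  have h2 : Nat.card (MulAction.stabilizer K y) =
      Nat.card (K ⊓ MulAction.stabilizer G y : Subgroup G) := by
    refine Nat.card_congr
      { toFun := fun g => ⟨g.1.1, g.1.2, g.2⟩
        invFun := fun g => ⟨⟨g.1, g.2.1⟩, g.2.2⟩
        left_inv := fun g => rfl
        right_inv := fun g => rfl }
  have h3 : MulAction.orbit K y = {z : Y | ∃ g ∈ K, g • y = z} := by
    ext z
    simp only [MulAction.mem_orbit_iff, Set.mem_ofPred_eq, Subtype.exists]
    constructor
    · rintro ⟨g, hg, hz⟩; exact ⟨g, hg, hz⟩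
    · rintro ⟨g, hg, hz⟩; exact ⟨g, hg, hz⟩
  rw [← h1, h2, h3, Nat.card_coe_set_eq]


/-! ### Orders and numbers of involutions -/

/-- The set of involutions of `X`. -/
def Inv {F : Type} [Field F] {G : Type*} [Group G] (pr : S2 F →* G) : Set G :=
  {x | x ∈ pr.range ∧ x * x = 1 ∧ x ≠ 1}

/-- The set of fixed points of `x`. -/
def Fx {G : Type*} (Pt : Type*) [Group G] [MulAction G Pt] (x : G) : Set Pt := {β | x • β = β}

section
variable {F : Type} [Field F] [Fintype F] {G Pt : Type*} [Group G] [MulAction G Pt]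
  {pr : S2 F →* G} {n : ℕ}

lemma neg_one_ne {F : Type} [Field F] (h2 : (2 : F) ≠ 0) : (-1 : S2 F) ≠ 1 := by
  intro h
  have := ((s2_ext_iff _ _).1 h).1
  simp only [s2_neg_apply, s2_one_00] at this
  exact h2 (by linear_combination -this)

lemma neg_eq_self {F : Type} [Field F] (h2 : (2 : F) = 0) (A : S2 F) : -A = A := by
  rw [s2_ext_iff]
  have : ∀ x : F, -x = x := fun x => by linear_combination -x * h2
  simp only [s2_neg_apply, this, and_self]

lemma pr_inj (h : Cfg F G Pt pr n) (h2 : (2 : F) = 0) : Function.Injective pr := by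
  intro A B hAB
  rcases (h.eq_iff _ _).1 hAB with h1 | h1
  · exact h1
  · rw [h1, neg_eq_self h2]

lemma card_X (h : Cfg F G Pt pr n) : Nat.card pr.range * (if Fintype.card F % 2 = 0 then 1 else 2) =
    Fintype.card F * (Fintype.card F - 1) * (Fintype.card F + 1) := by
  rw [← s2_card, ← Subgroup.index_ker pr, ← Subgroup.index_mul_card pr.ker]
  congr 1
  have hk : (pr.ker : Set (S2 F)) = {1, -1} := by
    ext A
    rw [SetLike.mem_coe, MonoidHom.mem_ker, ← map_one pr, h.eq_iff]
    simp
  rw [← SetLike.coe_sort_coe, hk, Nat.card_coe_set_eq]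
  split_ifs with h2
  · rw [neg_eq_self (char_two_iff.2 h2)]; simp
  · rw [Set.ncard_pair (neg_one_ne (fun hc => h2 (char_two_iff.1 hc))).symm]

lemma card_Xs (h : Cfg F G Pt pr n) (β : Pt) : Nat.card (Xs pr β) = 2 * n := by
  obtain ⟨e, he, her⟩ := h.dih β
  rw [← her, ← DihedralGroup.nat_card (n := n)]
  exact Nat.card_congr (e.ofInjective he).symm.toEquiv

lemma card_Pt (h : Cfg F G Pt pr n) (β : Pt) : Nat.card Pt * (2 * n) = Nat.card pr.range := by
  have h1 := orbit_stab pr.range β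
  have h2 : {z : Pt | ∃ g ∈ pr.range, g • β = z} = Set.univ := by
    ext z
    simp only [Set.mem_ofPred_eq, Set.mem_univ, iff_true]
    obtain ⟨A, hA⟩ := h.trans β z
    exact ⟨_, ⟨A, rfl⟩, hA⟩
  rw [h2, Set.ncard_univ] at h1
  rw [← h1, ← card_Xs h β]
  rfl

/-- The number of points is `q (q - 1) / 2`. -/
lemma two_v (h : Cfg F G Pt pr n) (β : Pt) :
    2 * Nat.card Pt = Fintype.card F * (Fintype.card F - 1) := by
  have h1 := card_Pt h β
  have h2 := card_X h
  rw [← h1] at h2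
  have hq := h.card_ge
  have h01 : Fintype.card F % 2 = 0 ∨ Fintype.card F % 2 = 1 := by omega
  rcases h01 with h0 | h0
  · rw [if_pos h0, n_even h h0] at h2
    apply Nat.eq_of_mul_eq_mul_right (show 0 < Fintype.card F + 1 by omega)
    rw [← h2]; ring
  · rw [if_neg (by omega)] at h2
    apply Nat.eq_of_mul_eq_mul_right (show 0 < Fintype.card F + 1 by omega)
    rw [← h2, ← n_odd h h0]; ring

lemma card_Inv_even (h : Cfg F G Pt pr n) (h0 : Fintype.card F % 2 = 0) :
    (Inv pr).ncard + 1 = Fintype.card F ^ 2 := by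
  have h2 : (2 : F) = 0 := char_two_iff.2 h0
  have h1 := s2_card_tr (F := F)
  have h3 : Nat.card {a : F // a ^ 2 = -1} = 1 := by
    rw [Nat.card_eq_one_iff_unique]
    refine ⟨⟨?_⟩, ⟨1, by linear_combination h2⟩⟩
    rintro ⟨a, ha⟩ ⟨b, hb⟩
    rw [Subtype.mk.injEq]
    have : (a - b) ^ 2 = 0 := by linear_combination ha + hb - (1 + a * b) * h2
    exact sub_eq_zero.1 (pow_eq_zero_iff (two_ne_zero) |>.1 this)
  rw [h3] at h1
  have h4 : insert 1 (Inv pr) = pr '' {A | tr2 A = 0} := by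
    ext x
    constructor
    · rintro (rfl | ⟨⟨A, rfl⟩, hx, hx1⟩)
      · exact ⟨1, by change tr2 _ = 0; simp only [tr2, s2_one_00, s2_one_11]; linear_combination h2,
          map_one pr⟩
      · exact ⟨A, ((pr_sq h).1 hx).resolve_left hx1, rfl⟩
    · rintro ⟨A, hA, rfl⟩
      by_cases hx : pr A = 1
      · exact Or.inl hx
      · exact Or.inr ⟨⟨A, rfl⟩, (pr_sq h).2 (Or.inr hA), hx⟩
  have hfin : (Inv pr).Finite := (Set.finite_range pr).subset (fun x hx => hx.1)
  rw [← Set.ncard_insert_of_notMem (fun hc => hc.2.2 rfl) hfin, h4,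
    Set.ncard_image_of_injective _ (pr_inj h h2), ← Nat.card_coe_set_eq]
  have h5 : Nat.card ↑{A : S2 F | tr2 A = 0} = Nat.card {A : S2 F // tr2 A = 0} := rfl
  rw [h5, h1]
  have := h.card_ge
  obtain ⟨m, hm⟩ : ∃ m, Fintype.card F = m + 1 := ⟨Fintype.card F - 1, by omega⟩
  rw [hm, Nat.add_sub_cancel]; ring

lemma card_Inv_odd (h : Cfg F G Pt pr n) (h0 : Fintype.card F % 4 = 1) :
    2 * (Inv pr).ncard = Fintype.card F * (Fintype.card F + 1) := by
  have h2 : (2 : F) ≠ 0 := fun hc => by have := char_two_iff.1 hc; omega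
  have h1 := s2_card_tr (F := F)
  have h3 : Nat.card {a : F // a ^ 2 = -1} = 2 := by
    obtain ⟨i, hi⟩ := (FiniteField.isSquare_neg_one_iff (F := F)).2 (by omega)
    have hi0 : i ≠ 0 := by rintro rfl; simp at hi
    have : {a : F | a ^ 2 = -1} = {i, -i} := by
      ext a
      simp only [Set.mem_ofPred_eq, Set.mem_insert_iff, Set.mem_singleton_iff]
      rw [hi, ← sq_eq_sq_iff_eq_or_eq_neg, pow_two i]
    change Nat.card ↑{a : F | a ^ 2 = -1} = 2
    rw [this, Nat.card_coe_set_eq, Set.ncard_pair]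
    intro hc
    exact hi0 ((mul_eq_zero.mp (show 2 * i = 0 by linear_combination hc)).resolve_left h2)
  rw [h3] at h1
  have : Finite pr.range := Set.finite_range pr
  have hfin : (Inv pr).Finite := (Set.finite_range pr).subset (fun x hx => hx.1)
  have : Finite (Inv pr) := hfin
  have hd := double_count (A := Inv pr) (B := S2 F) (fun x A => pr A = x) Set.univ
    {A | tr2 A = 0} 2 1 ?_ ?_
  · rw [Set.ncard_univ, mul_one] at hd
    have h5 : ({A : S2 F | tr2 A = 0}).ncard = Nat.card {A : S2 F // tr2 A = 0} := rfl
    rw [h5, h1, Nat.card_coe_set_eq] at hd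
    rw [mul_comm, hd]
    have := h.card_ge
    obtain ⟨m, hm⟩ : ∃ m, Fintype.card F = m + 1 := ⟨Fintype.card F - 1, by omega⟩
    rw [hm, Nat.add_sub_cancel]; ring
  · rintro ⟨x, ⟨A, rfl⟩, hx, hx1⟩ -
    have ht : tr2 A = 0 := ((pr_sq h).1 hx).resolve_left hx1
    have : {y ∈ {A : S2 F | tr2 A = 0} | pr y = pr A} = {A, -A} := by
      ext B
      simp only [Set.mem_ofPred_eq, Set.mem_insert_iff, Set.mem_singleton_iff, h.eq_iff]
      constructor
      · exact fun hB => hB.2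
      · rintro (rfl | rfl)
        · exact ⟨ht, Or.inl rfl⟩
        · refine ⟨?_, Or.inr rfl⟩
          simp only [tr2, s2_neg_apply] at ht ⊢
          linear_combination -ht
    simp only
    rw [this, Set.ncard_pair]
    intro hc
    apply neg_one_ne h2
    have : A⁻¹ * A = A⁻¹ * -A := by rw [← hc]
    simpa using this.symm
  · intro A hA
    have hA1 : pr A ≠ 1 := by
      rw [← map_one pr, Ne, h.eq_iff]
      have hA : tr2 A = 0 := hA
      rintro (rfl | rfl)
      · simp only [tr2, s2_one_00, s2_one_11] at hA; exact h2 (by linear_combination hA)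
      · simp only [tr2, s2_neg_apply, s2_one_00, s2_one_11] at hA
        exact h2 (by linear_combination -hA)
    rw [Set.ncard_eq_one]
    refine ⟨⟨pr A, ⟨A, rfl⟩, (pr_sq h).2 (Or.inr hA), hA1⟩, ?_⟩
    ext ⟨x, hx⟩
    simp only [Set.mem_ofPred_eq, Set.mem_univ, true_and, Set.mem_singleton_iff]
    exact ⟨fun hh => Subtype.ext hh.symm, fun hh => (Subtype.ext_iff.1 hh).symm⟩

end

/-! ### Involutions and fixed points when `n` is odd -/

section
variable {F : Type} [Field F] [Fintype F] {G Pt : Type*} [Group G] [MulAction G Pt]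
  {pr : S2 F →* G} {n : ℕ}

lemma zmod_two_mul {n : ℕ} (hn : n % 2 = 1) {i : ZMod n} (hi : i + i = 0) : i = 0 := by
  have h1 : IsUnit ((2 : ℕ) : ZMod n) :=
    (ZMod.isUnit_iff_coprime 2 n).2 (Nat.coprime_two_left.2 (Nat.odd_iff.2 hn))
  have h2 : ((2 : ℕ) : ZMod n) * i = 0 := by push_cast; linear_combination hi
  exact (h1.mul_right_eq_zero).1 h2

/-- For `n` odd, the involutions of `X_β` are its reflections. -/
lemma inv_refl {F : Type} [Field F] {pr : S2 F →* G} (hn : n % 2 = 1) {β : Pt} {e : DihedralGroup n →* G}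
    (he : Function.Injective e) (her : e.range = Xs pr β) (x : G) :
    x ∈ Inv pr ∩ Xs pr β ↔ ∃ i, e (.sr i) = x := by
  constructor
  · rintro ⟨⟨-, hxx, hx1⟩, hx⟩
    rw [SetLike.mem_coe, ← her] at hx
    obtain ⟨d, rfl⟩ := hx
    cases d with
    | sr i => exact ⟨i, rfl⟩
    | r i =>
      exfalso
      rw [← map_mul, ← map_one e, he.eq_iff, DihedralGroup.r_mul_r, DihedralGroup.one_def,
        DihedralGroup.r.injEq] at hxx
      rw [zmod_two_mul hn hxx] at hx1
      exact hx1 (map_one e)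
  · rintro ⟨i, rfl⟩
    have hm : e (.sr i) ∈ Xs pr β := her ▸ ⟨_, rfl⟩
    refine ⟨⟨hm.1, ?_, ?_⟩, hm⟩
    · rw [← map_mul, DihedralGroup.sr_mul_self, map_one]
    · rw [← map_one e, Ne, he.eq_iff, DihedralGroup.one_def]
      intro hc
      cases hc

lemma card_inv_Xs (h : Cfg F G Pt pr n) (hn : n % 2 = 1) (β : Pt) :
    (Inv pr ∩ Xs pr β).ncard = n := by
  obtain ⟨e, he, her⟩ := h.dih β
  have h1 : Inv pr ∩ Xs pr β = Set.range (fun i => e (.sr i)) := by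
    ext x; rw [inv_refl hn he her]; rfl
  have hinj : Function.Injective (fun i : ZMod n => e (.sr i)) := by
    intro i j hij
    simpa using he hij
  rw [h1, ← Set.image_univ, Set.ncard_image_of_injective _ hinj, Set.ncard_univ, Nat.card_zmod]

/-- For `n` odd, two points have at most one common involution in their stabilizers. -/
lemma inv_unique (h : Cfg F G Pt pr n) (hn : n % 2 = 1) {β γ : Pt} (hne : β ≠ γ) {x y : G}
    (hx : x ∈ Inv pr) (hy : y ∈ Inv pr) (hxβ : x • β = β) (hxγ : x • γ = γ) (hyβ : y • β = β)
    (hyγ : y • γ = γ) : x = y := by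
  obtain ⟨e, he, her⟩ := h.dih β
  obtain ⟨i, rfl⟩ := (inv_refl hn he her x).1 ⟨hx, hx.1, hxβ⟩
  obtain ⟨j, rfl⟩ := (inv_refl hn he her y).1 ⟨hy, hy.1, hyβ⟩
  have h1 := fix_two h hne (x := e (.sr i) * e (.sr j))
    ⟨mul_mem hx.1 hy.1, by change (_ * _) • β = β; rw [mul_smul, hyβ, hxβ]⟩
    ⟨mul_mem hx.1 hy.1, by change (_ * _) • γ = γ; rw [mul_smul, hyγ, hxγ]⟩
  rw [← map_mul, ← map_mul, ← map_one e, he.eq_iff, DihedralGroup.sr_mul_sr,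
    DihedralGroup.r_mul_r, DihedralGroup.one_def, DihedralGroup.r.injEq] at h1
  have := zmod_two_mul hn h1
  rw [sub_eq_zero.1 this]

lemma smul_Fx (g x : G) : Fx Pt (g * x * g⁻¹) = (fun β => g • β) '' Fx Pt x := by
  ext β
  constructor
  · intro hβ
    refine ⟨g⁻¹ • β, ?_, by simp⟩
    have : (g * x * g⁻¹) • β = β := hβ
    change x • g⁻¹ • β = g⁻¹ • β
    rw [← mul_smul, eq_inv_smul_iff, ← mul_smul, ← mul_assoc, this]
  · rintro ⟨γ, hγ, rfl⟩
    have hγ : x • γ = γ := hγ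
    change (g * x * g⁻¹) • g • γ = g • γ
    rw [mul_smul, mul_smul, inv_smul_smul, hγ]

lemma card_Fx_conj (g x : G) : (Fx Pt (g * x * g⁻¹)).ncard = (Fx Pt x).ncard := by
  rw [smul_Fx, Set.ncard_image_of_injective _ (MulAction.injective g)]

lemma card_Fx_eq (h : Cfg F G Pt pr n) {x y : G} (hx : x ∈ Inv pr) (hy : y ∈ Inv pr) :
    (Fx Pt x).ncard = (Fx Pt y).ncard := by
  obtain ⟨⟨A, rfl⟩, hx, hx1⟩ := hx
  obtain ⟨⟨B, rfl⟩, hy, hy1⟩ := hy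
  obtain ⟨P, hP⟩ := inv_conj h hx hx1 hy hy1
  rw [← hP, card_Fx_conj]

lemma card_inv_mul [Finite Pt] (h : Cfg F G Pt pr n) (hn : n % 2 = 1) {x : G} (hx : x ∈ Inv pr) :
    (Inv pr).ncard * (Fx Pt x).ncard = Nat.card Pt * n := by
  have hfin : (Inv pr).Finite := (Set.finite_range pr).subset (fun x hx => hx.1)
  have : Finite (Inv pr) := hfin
  have hd := double_count (A := Inv pr) (B := Pt) (fun y β => y.1 • β = β) Set.univ Set.univ
    (Fx Pt x).ncard n ?_ ?_
  · rw [Set.ncard_univ, Set.ncard_univ, Nat.card_coe_set_eq] at hd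
    exact hd
  · rintro ⟨y, hy⟩ -
    rw [card_Fx_eq h hx hy]
    congr 1
    ext; simp [Fx]
  · intro β _
    rw [← card_inv_Xs h hn β, ← Set.ncard_image_of_injective _ Subtype.val_injective]
    congr 1
    ext y
    constructor
    · rintro ⟨⟨z, hz⟩, hzβ, rfl⟩
      exact ⟨hz, hz.1, hzβ.2⟩
    · rintro ⟨hy, hyβ⟩
      exact ⟨⟨y, hy⟩, ⟨trivial, hyβ.2⟩, rfl⟩

/-- For `n` odd, the set of points `β ≠ α` sharing an involution with `α` has size
`n (φ - 1)`, where `φ` is the number of fixed points of an involution. -/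
lemma card_shared [Finite Pt] (h : Cfg F G Pt pr n) (hn : n % 2 = 1) {x : G} (hx : x ∈ Inv pr)
    (α : Pt) : {β : Pt | β ≠ α ∧ ∃ y ∈ Inv pr, y • α = α ∧ y • β = β}.ncard =
      n * ((Fx Pt x).ncard - 1) := by
  have hfin : (Inv pr).Finite := (Set.finite_range pr).subset (fun x hx => hx.1)
  have : Finite (Inv pr) := hfin
  have hd := double_count (A := Inv pr) (B := Pt) (fun y β => y.1 • β = β) {y | y.1 • α = α}
    {β : Pt | β ≠ α ∧ ∃ y ∈ Inv pr, y • α = α ∧ y • β = β} ((Fx Pt x).ncard - 1) 1 ?_ ?_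
  · rw [mul_one] at hd
    rw [← hd]
    congr 1
    rw [← card_inv_Xs h hn α, ← Set.ncard_image_of_injective _ Subtype.val_injective]
    congr 1
    ext y
    constructor
    · rintro ⟨⟨z, hz⟩, hzβ, rfl⟩
      exact ⟨hz, hz.1, hzβ⟩
    · rintro ⟨hy, hyβ⟩
      exact ⟨⟨y, hy⟩, hyβ.2, rfl⟩
  · rintro ⟨y, hy⟩ hyα
    have hyα : y • α = α := hyα
    rw [card_Fx_eq h hx hy, ← Set.ncard_sdiff_singleton_of_mem (show α ∈ Fx Pt y from hyα)]
    congr 1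
    ext β
    constructor
    · rintro ⟨⟨h1, -⟩, h2⟩
      exact ⟨h2, h1⟩
    · rintro ⟨h2, h1⟩
      exact ⟨⟨h1, y, hy, hyα, h2⟩, h2⟩
  · rintro β ⟨hβ, y, hy, hyα, hyβ⟩
    rw [Set.ncard_eq_one]
    refine ⟨⟨y, hy⟩, ?_⟩
    ext ⟨z, hz⟩
    constructor
    · rintro ⟨h1, h2⟩
      have h1 : z • α = α := h1
      have h2 : z • β = β := h2
      exact Subtype.ext (inv_unique h hn hβ hz hy h2 h1 hyβ hyα)
    · intro hh
      obtain rfl : z = y := congrArg Subtype.val hh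
      exact ⟨hyα, hyβ⟩

end

/-! ### Fisher's inequality and basic design counts -/

/-- Fisher's inequality `k ≤ r` for a 2-design given by an incidence relation, by the variance
argument: the sizes of the intersections of a fixed block with the others have non-negative
variance. -/
lemma fisher {Y S : Type*} [Finite Y] [Finite S] (R : Y → S → Prop) (k r lam : ℕ)
    (hk : ∀ s, {y | R y s}.ncard = k) (hr : ∀ y, {s | R y s}.ncard = r)
    (hl : ∀ y y', y ≠ y' → {s | R y s ∧ R y' s}.ncard = lam) (s0 : S) (hk0 : 0 < k)
    (hkv : k < Nat.card Y) : k ≤ r := by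
  classical
  cases nonempty_fintype Y
  cases nonempty_fintype S
  rw [Nat.card_eq_fintype_card] at hkv
  let i : Y → S → ℚ := fun y s => if R y s then 1 else 0
  have hsum : ∀ {T : Type _} [Fintype T] (p : T → Prop),
      (∑ t, if p t then (1 : ℚ) else 0) = {t | p t}.ncard := by
    intro T _ p
    rw [Finset.sum_boole, Set.ncard_eq_toFinset_card']
    congr 2; ext; simp
  have hsum' : ∀ {T : Type _} [Fintype T] (p : T → Prop),
      (∑ t, if p t then (1 : ℚ) else 0) = {t | p t}.ncard := by
    intro T _ p
    rw [Finset.sum_boole, Set.ncard_eq_toFinset_card']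
    congr 2; ext; simp
  have hik : ∀ s, ∑ y, i y s = k := fun s => by rw [← hk s, ← hsum']
  have hir : ∀ y, ∑ s, i y s = r := fun y => by rw [← hr y, ← hsum]
  have hil : ∀ y y', ∑ s, i y s * i y' s = lam + (if y = y' then (r : ℚ) - lam else 0) := by
    intro y y'
    by_cases hyy : y = y'
    · subst hyy
      have hii : ∀ s, i y s * i y s = i y s := fun s => by simp only [i]; split_ifs <;> simp
      rw [if_pos rfl]
      simp only [hii, hir]
      ring
    · rw [if_neg hyy, add_zero, ← hl y y' hyy, ← hsum]
      apply Finset.sum_congr rfl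
      intro s _
      simp only [i]
      by_cases h1 : R y s <;> by_cases h2 : R y' s <;> simp [h1, h2]
  have hb : (Fintype.card S : ℚ) * k = Fintype.card Y * r := by
    have h1 : ∑ s, ∑ y, i y s = ∑ y, ∑ s, i y s := Finset.sum_comm
    simpa [hik, hir] using h1
  have hv : (r : ℚ) * (k - 1) = lam * (Fintype.card Y - 1) := by
    obtain ⟨y, hy⟩ : ∃ y, R y s0 := by
      have : {y | R y s0}.Nonempty := by
        rw [← Set.ncard_pos, hk]; exact hk0
      exact this
    have h1 : ∑ s, ∑ y', i y s * i y' s = ∑ y', ∑ s, i y s * i y' s := Finset.sum_comm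
    simp only [hil, ← Finset.mul_sum, hik, ← Finset.sum_mul, hir, Finset.sum_add_distrib] at h1
    simp at h1
    linear_combination h1
  let x : S → ℚ := fun s => ∑ y, i y s0 * i y s
  have hx0 : x s0 = k := by
    rw [← hik s0]
    apply Finset.sum_congr rfl
    intro y _
    simp only [i]; split_ifs <;> simp
  have hx1 : ∑ s, x s = k * r := by
    simp only [x]
    rw [Finset.sum_comm]
    simp only [← Finset.mul_sum, hir, ← Finset.sum_mul, hik]
  have hx2 : ∑ s, x s ^ 2 = lam * k ^ 2 + (r - lam) * k := by
    have h1 : ∀ s, x s ^ 2 = ∑ y, ∑ y', (i y s0 * i y' s0) * (i y s * i y' s) := by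
      intro s
      simp only [x]
      rw [pow_two, Finset.sum_mul_sum]
      refine Finset.sum_congr rfl fun y _ => Finset.sum_congr rfl fun y' _ => by ring
    simp only [h1]
    rw [Finset.sum_comm]
    have h2 : ∀ y, ∑ s, ∑ y', (i y s0 * i y' s0) * (i y s * i y' s) =
        lam * i y s0 * k + i y s0 * (r - lam) := by
      intro y
      rw [Finset.sum_comm]
      simp only [← Finset.mul_sum, hil]
      have h3 : ∀ y', i y s0 * i y' s0 * (lam + if y = y' then (r : ℚ) - lam else 0) =
          lam * i y s0 * i y' s0 + (if y = y' then i y s0 * (r - lam) else 0) := by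
        intro y'
        split_ifs with hyy
        · subst hyy
          have : i y s0 * i y s0 = i y s0 := by simp only [i]; split_ifs <;> simp
          linear_combination (r - lam : ℚ) * this
        · ring
      simp only [h3, Finset.sum_add_distrib, ← Finset.mul_sum, hik]
      simp
    simp only [h2, Finset.sum_add_distrib, ← Finset.mul_sum, ← Finset.sum_mul, hik]
    ring
  have hcs := sq_sum_le_card_mul_sum_sq (s := Finset.univ.erase s0) (f := x)
  have e1 : ∑ s ∈ Finset.univ.erase s0, x s = k * r - k := by
    rw [← hx1, ← Finset.add_sum_erase _ _ (Finset.mem_univ s0), hx0]; ring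
  have e2 : ∑ s ∈ Finset.univ.erase s0, x s ^ 2 = lam * k ^ 2 + (r - lam) * k - k ^ 2 := by
    rw [← hx2, ← Finset.add_sum_erase _ _ (Finset.mem_univ s0), hx0]; ring
  have e3 : ((Finset.univ.erase s0).card : ℚ) = Fintype.card S - 1 := by
    rw [Finset.card_erase_of_mem (Finset.mem_univ _), Finset.card_univ,
      Nat.cast_sub (Fintype.card_pos_iff.2 ⟨s0⟩), Nat.cast_one]
  rw [e1, e2, e3] at hcs
  have hr0 : (0 : ℚ) < r := by
    have : (0 : ℚ) < Fintype.card S * k := by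
      have := Fintype.card_pos_iff.2 ⟨s0⟩
      positivity
    rw [hb] at this
    exact pos_of_mul_pos_right this (by positivity)
  have hkq : (0 : ℚ) < k := by exact_mod_cast hk0
  have hkvq : (k : ℚ) < Fintype.card Y := by exact_mod_cast hkv
  have hk1 : (1 : ℚ) ≤ k := by exact_mod_cast hk0
  generalize (Fintype.card S : ℚ) = b at *
  generalize (Fintype.card Y : ℚ) = v at *
  have hv1 : (0 : ℚ) < v - 1 := by linarith
  have hbe : b = v * r / k := by field_simp; exact hb
  have hle : (lam : ℚ) = r * (k - 1) / (v - 1) := by field_simp; linarith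
  have hfin : (v - 1) * ((b - 1) * (lam * k ^ 2 + (r - lam) * k - k ^ 2) - (k * r - k) ^ 2) =
      (v - k) ^ 2 * r * (r - k) := by
    rw [hbe, hle]; field_simp; ring
  have hnn : 0 ≤ (v - k) ^ 2 * r * (r - k) := by
    rw [← hfin]; exact mul_nonneg hv1.le (by linarith)
  have hpos : 0 < (v - k) ^ 2 * r := mul_pos (pow_pos (by linarith) 2) hr0
  have := nonneg_of_mul_nonneg_right hnn hpos
  have : (k : ℚ) ≤ r := by linarith
  exact_mod_cast this

/-- A flag-transitive `2`-design with `λ = 3` and replication number `r`, with cardinalities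
expressed by `Set.ncard`. -/
structure Dsg (G : Type*) {Pt : Type*} [Group G] [MulAction G Pt] (𝓑 : Set (Set Pt))
    (k r : ℕ) : Prop where
  block_card : ∀ B ∈ 𝓑, B.ncard = k
  pair : ∀ x y : Pt, x ≠ y → {B | B ∈ 𝓑 ∧ x ∈ B ∧ y ∈ B}.ncard = 3
  rep : ∀ x : Pt, {B | B ∈ 𝓑 ∧ x ∈ B}.ncard = r
  acts : ∀ (g : G), ∀ B ∈ 𝓑, g • B ∈ 𝓑
  flag : ∀ B ∈ 𝓑, ∀ C ∈ 𝓑, ∀ x ∈ B, ∀ y ∈ C, ∃ g : G, g • B = C ∧ g • x = y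
  k_gt : 2 < k
  k_lt : k + 1 < Nat.card Pt
  nonsym : 𝓑.ncard ≠ Nat.card Pt
  three_dvd : 3 ∣ r

section
variable {G Pt : Type*} [Group G] [MulAction G Pt] [Finite Pt] {𝓑 : Set (Set Pt)} {k r : ℕ}

/-- A `G_α`-invariant set `Δ` not containing `α` meets every block through `α` in the same number
of points, and double counting determines this number. -/
lemma inv_count (d : Dsg G 𝓑 k r) {α : Pt} {Δ : Set Pt} (hα : α ∉ Δ)
    (hinv : ∀ g : G, g • α = α → ∀ β ∈ Δ, g • β ∈ Δ) {B : Set Pt} (hB : B ∈ 𝓑) (hαB : α ∈ B) :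
    r * (B ∩ Δ).ncard = 3 * Δ.ncard := by
  have hle : ∀ C ∈ 𝓑, α ∈ C → ∀ D ∈ 𝓑, α ∈ D → (C ∩ Δ).ncard ≤ (D ∩ Δ).ncard := by
    intro C hC hαC D hD hαD
    obtain ⟨g, hg, hgα⟩ := d.flag C hC D hD α hαC α hαD
    rw [← Set.ncard_image_of_injective (C ∩ Δ) (MulAction.injective g)]
    apply Set.ncard_le_ncard _ (Set.toFinite _)
    rintro _ ⟨β, ⟨hβC, hβ⟩, rfl⟩
    exact ⟨hg ▸ Set.smul_mem_smul_set hβC, hinv g hgα β hβ⟩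
  have hd := double_count (A := Set Pt) (B := Pt) (fun C β => β ∈ C) {C | C ∈ 𝓑 ∧ α ∈ C} Δ
    (B ∩ Δ).ncard 3 ?_ ?_
  · rw [d.rep] at hd
    rw [hd, mul_comm]
  · rintro C ⟨hC, hαC⟩
    have : {y ∈ Δ | y ∈ C} = C ∩ Δ := by ext; simp [and_comm]
    rw [this]
    exact le_antisymm (hle C hC hαC B hB hαB) (hle B hB hαB C hC hαC)
  · intro β hβ
    rw [← d.pair α β (fun hc => hα (hc ▸ hβ))]
    congr 1
    ext C
    simp [and_assoc]

lemma exists_block (d : Dsg G 𝓑 k r) (α : Pt) : ∃ B ∈ 𝓑, α ∈ B := by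
  have hk := d.k_lt
  have : Nontrivial Pt := Finite.one_lt_card_iff_nontrivial.1 (by omega)
  obtain ⟨β, hβ⟩ := exists_ne α
  have h1 := d.pair α β hβ.symm
  have : {B | B ∈ 𝓑 ∧ α ∈ B ∧ β ∈ B}.Nonempty := by
    rw [← Set.ncard_pos]; omega
  obtain ⟨B, hB, hα, -⟩ := this
  exact ⟨B, hB, hα⟩

lemma exists_block₂ (d : Dsg G 𝓑 k r) {α β : Pt} (hβ : α ≠ β) : ∃ B ∈ 𝓑, α ∈ B ∧ β ∈ B := by
  have h1 := d.pair α β hβ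
  have : {B | B ∈ 𝓑 ∧ α ∈ B ∧ β ∈ B}.Nonempty := by
    rw [← Set.ncard_pos]; omega
  obtain ⟨B, hB, hα, hb⟩ := this
  exact ⟨B, hB, hα, hb⟩

lemma r_mul (d : Dsg G 𝓑 k r) (α : Pt) : r * (k - 1) = 3 * (Nat.card Pt - 1) := by
  obtain ⟨B, hB, hα⟩ := exists_block d α
  have h1 := inv_count d (α := α) (Δ := {α}ᶜ) (by simp)
    (fun g hg β hβ => by
      intro hc
      have hc : g • β = α := hc
      rw [← hg] at hc
      exact hβ (MulAction.injective g hc)) hB hα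
  have h2 : B ∩ {α}ᶜ = B \ {α} := rfl
  rwa [h2, Set.ncard_sdiff_singleton_of_mem hα, d.block_card B hB, Set.ncard_compl,
    Set.ncard_singleton] at h1

lemma b_mul (d : Dsg G 𝓑 k r) : 𝓑.ncard * k = Nat.card Pt * r := by
  have hd := double_count (A := Set Pt) (B := Pt) (fun C β => β ∈ C) 𝓑 Set.univ k r ?_ ?_
  · rwa [Set.ncard_univ] at hd
  · intro B hB
    rw [← d.block_card B hB]; congr 1; ext; simp
  · intro β _
    exact d.rep β

lemma k_lt_r (d : Dsg G 𝓑 k r) (α : Pt) : k < r := by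
  have hk := d.k_lt
  have hk2 := d.k_gt
  obtain ⟨B, hB, hα⟩ := exists_block d α
  have h1 := fisher (Y := Pt) (S := 𝓑) (fun y s => y ∈ s.1) k r 3
    (fun s => by rw [← d.block_card s.1 s.2]; rfl)
    (fun y => by
      rw [← d.rep y, ← Set.ncard_image_of_injective _ Subtype.val_injective]
      congr 1
      ext C
      constructor
      · rintro ⟨⟨D, hD⟩, h1, rfl⟩; exact ⟨hD, h1⟩
      · rintro ⟨hC, h1⟩; exact ⟨⟨C, hC⟩, h1, rfl⟩)
    (fun y y' hy => by
      rw [← d.pair y y' hy, ← Set.ncard_image_of_injective _ Subtype.val_injective]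
      congr 1
      ext C
      constructor
      · rintro ⟨⟨D, hD⟩, h1, rfl⟩; exact ⟨hD, h1⟩
      · rintro ⟨hC, h1⟩; exact ⟨⟨C, hC⟩, h1, rfl⟩)
    ⟨B, hB⟩ (by omega) (by omega)
  rcases h1.lt_or_eq with h | h
  · exact h
  · exfalso
    have h2 := b_mul d
    rw [← h] at h2
    exact d.nonsym (Nat.eq_of_mul_eq_mul_right (by omega) h2)

end

/-! ### Odd `q`: parameters, and the case `q ≡ 1 (mod 4)` -/

section
variable {F : Type} [Field F] [Fintype F] {G Pt : Type*} [Group G] [MulAction G Pt]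
  {pr : S2 F →* G} {n : ℕ} {𝓑 : Set (Set Pt)} {k r : ℕ}

lemma conj_Inv (h : Cfg F G Pt pr n) (g : G) {x : G} (hx : x ∈ Inv pr) :
    g * x * g⁻¹ ∈ Inv pr := by
  obtain ⟨⟨A, rfl⟩, hx, hx1⟩ := hx
  obtain ⟨B, hB⟩ := h.norm g A
  refine ⟨⟨B, hB.symm⟩, ?_, ?_⟩
  · calc g * pr A * g⁻¹ * (g * pr A * g⁻¹) = g * (pr A * pr A) * g⁻¹ := by group
      _ = 1 := by rw [hx]; group
  · intro hc
    apply hx1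
    calc pr A = g⁻¹ * (g * pr A * g⁻¹) * g := by group
      _ = 1 := by rw [hc]; group

/-- For odd `q`, if `r / 3` divides `n = (q + 1) / 2` then `k = q - 1` and `r = 3 n`. -/
lemma odd_params [Finite Pt] (h : Cfg F G Pt pr n) (d : Dsg G 𝓑 k r)
    (hq : Fintype.card F % 2 = 1) (α : Pt) {r' : ℕ} (hr' : r = 3 * r') (hdvd : r' ∣ n) :
    k + 1 = Fintype.card F ∧ r = 3 * n := by
  have h1 := two_v h α
  have h2 := n_odd h hq
  have h3 := r_mul d α
  have h4 := k_lt_r d α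
  have h5 := h.card_ge
  have hk := d.k_gt
  generalize Fintype.card F = q at *
  obtain ⟨m, rfl⟩ := hdvd
  subst hr'
  obtain ⟨s, rfl⟩ : ∃ s, q = s + 2 := ⟨q - 2, by omega⟩
  obtain ⟨t, rfl⟩ : ∃ t, k = t + 1 := ⟨k - 1, by omega⟩
  have hv : 2 * (Nat.card Pt - 1) = (s + 3) * s := by
    have : (s + 2) * (s + 2 - 1) = (s + 3) * s + 2 := by
      rw [show s + 2 - 1 = s + 1 by omega]; ring
    omega
  have hr0 : 0 < r' := by omega
  have hm0 : 0 < m := by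
    rcases Nat.eq_zero_or_pos m with rfl | hm
    · omega
    · exact hm
  rw [Nat.add_sub_cancel] at h3
  have ht : t = m * s := by
    apply Nat.eq_of_mul_eq_mul_left (show 0 < 6 * r' by omega)
    calc 6 * r' * t = 2 * (3 * r' * t) := by ring
      _ = 3 * ((s + 3) * s) := by rw [h3, ← hv]; ring
      _ = 3 * ((2 * (r' * m)) * s) := by rw [h2]
      _ = _ := by ring
  have hm1 : m = 1 := by
    by_contra hne
    have hm2 : 2 ≤ m := by omega
    subst ht
    have h6 : m * (m * s + 1) * 2 < 3 * (s + 3) := by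
      have : m * (m * s + 1) < m * (3 * r') := Nat.mul_lt_mul_of_pos_left h4 hm0
      nlinarith
    have h7 : 2 * (2 * s) ≤ m * (m * s) := Nat.mul_le_mul hm2 (Nat.mul_le_mul_right s hm2)
    nlinarith
  subst hm1
  constructor
  · omega
  · ring

lemma case_one_mod_four [Finite Pt] (h : Cfg F G Pt pr n) (d : Dsg G 𝓑 k r)
    (hq : Fintype.card F % 4 = 1) (α : Pt) : False := by
  have hq2 : Fintype.card F % 2 = 1 := by omega
  have hn := n_odd h hq2
  have hno : n % 2 = 1 := by omega
  obtain ⟨r', hr'⟩ := d.three_dvd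
  have hv := two_v h α
  have hInv := card_Inv_odd h hq
  have hq4 := h.card_ge
  have hne : (Inv pr).Nonempty := by
    apply Set.nonempty_of_ncard_ne_zero
    intro hc
    rw [hc] at hInv
    have : 0 < Fintype.card F * (Fintype.card F + 1) := by positivity
    omega
  obtain ⟨x, hx⟩ := hne
  have hmul := card_inv_mul (Pt := Pt) h hno hx
  have hA := card_shared h hno hx α
  obtain ⟨B, hB, hαB⟩ := exists_block d α
  have hc1 := inv_count d
    (Δ := {β : Pt | β ≠ α ∧ ∃ y ∈ Inv pr, y • α = α ∧ y • β = β}) (fun hc => hc.1 rfl)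
    (fun g hg β ⟨h1, y, hy, hyα, hyβ⟩ => by
      refine ⟨?_, g * y * g⁻¹, conj_Inv h g hy, ?_, ?_⟩
      · intro hc
        rw [← hg] at hc
        exact h1 (MulAction.injective g hc)
      · conv_lhs => rw [← hg]
        rw [mul_smul, mul_smul, inv_smul_smul, hyα, hg]
      · rw [mul_smul, mul_smul, inv_smul_smul, hyβ]) hB hαB
  rw [hA] at hc1
  have hc2 := r_mul d α
  have hφ : 2 * (Fx Pt x).ncard = Fintype.card F - 1 := by
    generalize Fintype.card F = q at *
    apply Nat.eq_of_mul_eq_mul_left (show 0 < q * (q + 1) by positivity)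
    calc q * (q + 1) * (2 * (Fx Pt x).ncard) = 4 * ((Inv pr).ncard * (Fx Pt x).ncard) := by
          rw [← hInv]; ring
      _ = (2 * Nat.card Pt) * (2 * n) := by rw [hmul]; ring
      _ = _ := by rw [hv, hn]; ring
  have hdvd : r' ∣ n := by
    have d1 : r' ∣ n * ((Fx Pt x).ncard - 1) :=
      ⟨(B ∩ {β : Pt | β ≠ α ∧ ∃ y ∈ Inv pr, y • α = α ∧ y • β = β}).ncard, by
        have := hc1; rw [hr', mul_assoc] at this; omega⟩
    have d2 : r' ∣ Nat.card Pt - 1 := ⟨k - 1, by rw [hr', mul_assoc] at hc2; omega⟩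
    have e : n + 2 * (n * ((Fx Pt x).ncard - 1)) = Nat.card Pt - 1 := by
      generalize (Fx Pt x).ncard = φ at *
      generalize Fintype.card F = q at *
      obtain ⟨f, rfl⟩ : ∃ f, φ = f + 1 := ⟨φ - 1, by omega⟩
      obtain rfl : q = 2 * f + 3 := by omega
      obtain rfl : n = f + 2 := by omega
      rw [Nat.add_sub_cancel]
      have e2 : (2 * f + 3) * (2 * f + 3 - 1) = 2 * ((f + 2) * (2 * f + 1)) + 2 := by
        rw [show 2 * f + 3 - 1 = 2 * f + 2 by omega]; ring
      rw [e2] at hv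
      have e3 : f + 2 + 2 * ((f + 2) * f) = (f + 2) * (2 * f + 1) := by ring
      omega
    rw [← e] at d2
    exact (Nat.dvd_add_left (Dvd.dvd.mul_left d1 2)).1 d2
  obtain ⟨hk, hr⟩ := odd_params h d hq2 α hr' hdvd
  have hb := b_mul d
  rw [hr] at hb
  have hfin : 2 * 𝓑.ncard = 3 * (Fintype.card F * n) := by
    have hk0 := d.k_gt
    apply Nat.eq_of_mul_eq_mul_right (show 0 < k by omega)
    calc 2 * 𝓑.ncard * k = 2 * (𝓑.ncard * k) := by ring
      _ = (2 * Nat.card Pt) * (3 * n) := by rw [hb]; ring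
      _ = _ := by rw [hv, ← hk, Nat.add_sub_cancel]; ring
  have hodd : (Fintype.card F * n) % 2 = 1 := by
    rw [Nat.mul_mod, hq2, hno]
  omega

end

/-! ### Even `n`: points as involutions -/

section
variable {F : Type} [Field F] [Fintype F] {G Pt : Type*} [Group G] [MulAction G Pt]
  {pr : S2 F →* G} {n : ℕ} {𝓑 : Set (Set Pt)} {k r : ℕ}

/-- For `n` even, sending `α` to the central involution `z α` of `X_α` identifies the points with
the involutions of `X`, in such a way that `X_α` is the centralizer of `z α`. -/
structure ZData (pr : S2 F →* G) (n : ℕ) (z : Pt → G) : Prop where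
  mem : ∀ α, z α ∈ Inv pr
  fix_iff : ∀ α, ∀ x ∈ pr.range, x • α = α ↔ x * z α = z α * x
  conj : ∀ (g : G) α, g * z α * g⁻¹ = z (g • α)
  surj : ∀ y ∈ Inv pr, ∃ α, z α = y
  inj : Function.Injective z
  card : ∀ α, {x | x ∈ Inv pr ∧ x • α = α ∧ x ≠ z α}.ncard = n
  mul_eq : ∀ α, ∀ x ∈ Inv pr, ∀ y ∈ Inv pr, x • α = α → y • α = α → x ≠ z α → y ≠ z α → x ≠ y →
    x * y * (x * y) = 1 → x * y = z α

lemma zmod_half {n : ℕ} (hn0 : 0 < n) {i : ZMod n} (hi : i + i = 0) (hi0 : i ≠ 0) :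
    i = ((n / 2 : ℕ) : ZMod n) := by
  have : NeZero n := ⟨by omega⟩
  have h1 : ((2 * i.val : ℕ) : ZMod n) = 0 := by
    push_cast; rw [ZMod.natCast_zmod_val]; linear_combination hi
  rw [ZMod.natCast_eq_zero_iff] at h1
  have h2 : i.val < n := ZMod.val_lt i
  have h3 : i.val ≠ 0 := by rwa [Ne, ZMod.val_eq_zero]
  obtain ⟨c, hc⟩ := h1
  have hc1 : c = 1 := by
    have : c < 2 := by
      by_contra hcc
      have : n * 2 ≤ n * c := Nat.mul_le_mul_left n (by omega)
      omega
    have : c ≠ 0 := by rintro rfl; omega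
    omega
  rw [hc1] at hc
  have h4 : i.val = n / 2 := by omega
  rw [← h4, ZMod.natCast_zmod_val]

lemma exists_zdata (h : Cfg F G Pt pr n) (hn : n % 2 = 0) (α : Pt) : ∃ z : Pt → G, ZData pr n z := by
  have hn3 := three_le_n h
  have hne : NeZero n := ⟨by omega⟩
  set m : ZMod n := ((n / 2 : ℕ) : ZMod n) with hm
  have hmm : m + m = 0 := by
    rw [hm, ← Nat.cast_add, ZMod.natCast_eq_zero_iff]
    exact ⟨1, by omega⟩
  have hm0 : m ≠ 0 := by
    rw [hm, Ne, ZMod.natCast_eq_zero_iff]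
    intro hc
    have := Nat.le_of_dvd (by omega) hc
    omega
  choose e he her using h.dih
  have hrot : ∀ α i, e α (.r i) * e α (.r i) = 1 → e α (.r i) ≠ 1 → i = m := by
    intro α i h1 h2
    apply zmod_half (by omega)
    · rwa [← map_mul, ← map_one (e α), (he α).eq_iff, DihedralGroup.r_mul_r,
        DihedralGroup.one_def, DihedralGroup.r.injEq] at h1
    · rintro rfl
      exact h2 (map_one _)
  have hmem : ∀ α d, e α d ∈ Xs pr α := fun α d => her α ▸ ⟨_, rfl⟩
  have hzI : ∀ α, e α (.r m) ∈ Inv pr := by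
    intro α
    refine ⟨(hmem α _).1, ?_, ?_⟩
    · rw [← map_mul, DihedralGroup.r_mul_r, hmm]; exact map_one _
    · rw [← map_one (e α), Ne, (he α).eq_iff, DihedralGroup.one_def, DihedralGroup.r.injEq]
      exact hm0
  have hcen : ∀ α, ∀ x ∈ Xs pr α, x * e α (.r m) = e α (.r m) * x := by
    intro α x hx
    rw [← her] at hx
    obtain ⟨d, rfl⟩ := hx
    rw [← map_mul, ← map_mul]
    congr 1
    cases d with
    | r i => rw [DihedralGroup.r_mul_r, DihedralGroup.r_mul_r, add_comm]
    | sr i =>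
      rw [DihedralGroup.sr_mul_r, DihedralGroup.r_mul_sr]
      congr 1
      linear_combination hmm
  -- a central involution of `X_α` is a rotation, hence the chosen one
  have huniq : ∀ α, ∀ x ∈ Inv pr, x • α = α → (∀ y ∈ Xs pr α, y * x = x * y) →
      x = e α (.r m) := by
    intro α x hx hxα hc
    have hx' : x ∈ Xs pr α := ⟨hx.1, hxα⟩
    rw [← her] at hx'
    obtain ⟨d, rfl⟩ := hx'
    cases d with
    | r i => rw [hrot α i hx.2.1 hx.2.2]
    | sr i =>
      exfalso
      have h1 := hc _ (hmem α (.r 1))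
      rw [← map_mul, ← map_mul, (he α).eq_iff, DihedralGroup.sr_mul_r, DihedralGroup.r_mul_sr,
        DihedralGroup.sr.injEq] at h1
      have h2 : ((2 : ℕ) : ZMod n) = 0 := by push_cast; linear_combination -h1
      rw [ZMod.natCast_eq_zero_iff] at h2
      have := Nat.le_of_dvd (by norm_num) h2
      omega
  have hconj : ∀ (g : G) α, g * e α (.r m) * g⁻¹ = e (g • α) (.r m) := by
    intro g α
    apply huniq
    · exact conj_Inv h g (hzI α)
    · rw [mul_smul, mul_smul, inv_smul_smul, (hmem α (.r m)).2]
    · intro y hy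
      have h1 := hcen α _ (conj_mem_Xs' h hy)
      calc y * (g * e α (.r m) * g⁻¹) = g * (g⁻¹ * y * g * e α (.r m)) * g⁻¹ := by group
        _ = g * (e α (.r m) * (g⁻¹ * y * g)) * g⁻¹ := by rw [h1]
        _ = _ := by group
  have hfix : ∀ α, ∀ x ∈ pr.range, x • α = α ↔ x * e α (.r m) = e α (.r m) * x := by
    intro α
    let C : Subgroup G := pr.range ⊓ Subgroup.centralizer {e α (.r m)}
    have hC : ∀ y, y ∈ C ↔ y ∈ pr.range ∧ e α (.r m) * y = y * e α (.r m) := by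
      intro y
      simp [C, Subgroup.mem_centralizer_iff]
    have hCX : C = Xs pr α := by
      rcases h.max α C inf_le_left (fun y hy => (hC y).2 ⟨hy.1, (hcen α y hy).symm⟩) with h1 | h1
      · exact h1
      · exfalso
        let Z : Subgroup G := pr.range ⊓ Subgroup.centralizer (pr.range : Set G)
        have hZ : ∀ y, y ∈ Z ↔ y ∈ pr.range ∧ ∀ x ∈ pr.range, x * y = y * x := by
          intro y
          simp only [Z, Subgroup.mem_inf, Subgroup.mem_centralizer_iff, SetLike.mem_coe]
        have hzZ : e α (.r m) ∈ Z := by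
          rw [hZ]
          refine ⟨(hzI α).1, fun x hx => ?_⟩
          rw [← h1, hC] at hx
          exact hx.2.symm
        rcases h.simple Z inf_le_left (fun A y hy => by
          have := (hZ y).1 hy
          have h2 := this.2 (pr A) ⟨A, rfl⟩
          rw [h2, mul_assoc, mul_inv_cancel, mul_one]
          exact hy) with h2 | h2
        · rw [h2, Subgroup.mem_bot] at hzZ
          exact (hzI α).2.2 hzZ
        · obtain ⟨x, hx, y, hy, hxy⟩ := Xs_ne_bot h α
          have hyZ : y ∈ Z := h2 ▸ hy.1
          exact hxy (((hZ y).1 hyZ).2 x hx.1)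
    intro x hx
    constructor
    · intro hxα
      exact hcen α x ⟨hx, hxα⟩
    · intro hc
      have : x ∈ C := (hC x).2 ⟨hx, hc.symm⟩
      rw [hCX] at this
      exact this.2
  have hrefl : ∀ α, ∀ x ∈ Inv pr, x • α = α → x ≠ e α (.r m) → ∃ i, e α (.sr i) = x := by
    intro α x hx hxα hne
    have hx' : x ∈ Xs pr α := ⟨hx.1, hxα⟩
    rw [← her] at hx'
    obtain ⟨d, rfl⟩ := hx'
    cases d with
    | sr i => exact ⟨i, rfl⟩
    | r i => exact absurd (by rw [hrot α i hx.2.1 hx.2.2]) hne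
  refine ⟨fun α => e α (.r m), hzI, hfix, hconj, ?_, ?_, ?_, ?_⟩
  · intro y hy
    obtain ⟨⟨A, hA⟩, hz, hz1⟩ := hzI α
    obtain ⟨⟨B, rfl⟩, hB, hB1⟩ := hy
    rw [← hA] at hz hz1
    obtain ⟨P, hP⟩ := inv_conj h hz hz1 hB hB1
    exact ⟨pr P • α, by rw [← hP, hA, hconj]⟩
  · intro α β hαβ
    apply Xs_inj h
    ext x
    have hαβ : e α (.r m) = e β (.r m) := hαβ
    constructor
    · rintro ⟨hx, hxα⟩
      exact ⟨hx, (hfix β x hx).2 (hαβ ▸ (hfix α x hx).1 hxα)⟩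
    · rintro ⟨hx, hxα⟩
      exact ⟨hx, (hfix α x hx).2 (hαβ ▸ (hfix β x hx).1 hxα)⟩
  · intro α
    have h1 : {x | x ∈ Inv pr ∧ x • α = α ∧ x ≠ e α (.r m)} =
        Set.range (fun i => e α (.sr i)) := by
      ext x
      constructor
      · rintro ⟨hx, hxα, hne⟩
        exact hrefl α x hx hxα hne
      · rintro ⟨i, rfl⟩
        refine ⟨⟨(hmem α _).1, ?_, ?_⟩, (hmem α _).2, ?_⟩
        · rw [← map_mul, DihedralGroup.sr_mul_self, map_one]
        · rw [← map_one (e α), Ne, (he α).eq_iff, DihedralGroup.one_def]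
          intro hc; cases hc
        · rw [Ne, (he α).eq_iff]
          intro hc; cases hc
    have hinj : Function.Injective (fun i : ZMod n => e α (.sr i)) := by
      intro i j hij
      simpa using he α hij
    rw [h1, ← Set.image_univ, Set.ncard_image_of_injective _ hinj, Set.ncard_univ, Nat.card_zmod]
  · intro α x hx y hy hxα hyα hxz hyz hxy hsq
    obtain ⟨i, rfl⟩ := hrefl α x hx hxα hxz
    obtain ⟨j, rfl⟩ := hrefl α y hy hyα hyz
    rw [← map_mul, DihedralGroup.sr_mul_sr] at hsq ⊢
    rw [hrot α _ hsq]
    rw [← map_one (e α), Ne, (he α).eq_iff, DihedralGroup.one_def, DihedralGroup.r.injEq]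
    intro hc
    exact hxy (by rw [sub_eq_zero.1 hc])

end

/-! ### The case `q ≡ 3 (mod 4)` -/

/-- An involution fixing two points permutes the three blocks through them, so it fixes one. -/
lemma inv_fix_block {G Pt : Type*} [Group G] [MulAction G Pt] {𝓑 : Set (Set Pt)} {k r : ℕ}
    (d : Dsg G 𝓑 k r) {x : G} (hx : x * x = 1) {α β : Pt} (hne : α ≠ β) (hα : x • α = α)
    (hβ : x • β = β) : ∃ C ∈ 𝓑, α ∈ C ∧ β ∈ C ∧ x • C = C := by
  have h3 := d.pair α β hne
  obtain ⟨B₁, B₂, B₃, h12, h13, h23, hS⟩ := Set.ncard_eq_three.1 h3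
  have hin : ∀ C, C ∈ ({B₁, B₂, B₃} : Set (Set Pt)) → x • C ∈ ({B₁, B₂, B₃} : Set (Set Pt)) := by
    rw [← hS]
    rintro C ⟨hC, h1, h2⟩
    refine ⟨d.acts x C hC, ?_, ?_⟩
    · rw [← hα]; exact Set.smul_mem_smul_set h1
    · rw [← hβ]; exact Set.smul_mem_smul_set h2
  have hsq : ∀ C : Set Pt, x • x • C = C := fun C => by rw [smul_smul, hx, one_smul]
  have key : ∃ C ∈ ({B₁, B₂, B₃} : Set (Set Pt)), x • C = C := by
    have g1 := hin B₁ (by simp)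
    have g2 := hin B₂ (by simp)
    have g3 := hin B₃ (by simp)
    have s1 := hsq B₁
    have s2 := hsq B₂
    have s3 := hsq B₃
    simp only [Set.mem_insert_iff, Set.mem_singleton_iff] at g1 g2 g3
    by_contra! hcon
    have c1 := hcon B₁ (by simp)
    have c2 := hcon B₂ (by simp)
    have c3 := hcon B₃ (by simp)
    grind
  obtain ⟨C, hC, hxC⟩ := key
  rw [← hS] at hC
  exact ⟨C, hC.1, hC.2.1, hC.2.2, hxC⟩

section
set_option linter.unusedSectionVars false
variable {F : Type} [Field F] [Fintype F] {G Pt : Type*} [Group G] [MulAction G Pt]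
  {pr : S2 F →* G} {n : ℕ} {𝓑 : Set (Set Pt)} {k r : ℕ} {z : Pt → G}

lemma z_comm (hz : ZData pr n z) (α β : Pt) : z β • α = α ↔ z α • β = β := by
  rw [hz.fix_iff α _ (hz.mem β).1, hz.fix_iff β _ (hz.mem α).1, eq_comm]

lemma z_self (hz : ZData pr n z) (α : Pt) : z α • α = α := by
  rw [hz.fix_iff α _ (hz.mem α).1]

lemma z_smul (hz : ZData pr n z) (g : G) {α β : Pt} (h : z β • α = α) :
    z (g • β) • g • α = g • α := by
  rw [← hz.conj, mul_smul, mul_smul, inv_smul_smul, h]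

/-- The points other than `α` whose involution commutes with that of `α`. -/
def Dl (z : Pt → G) (α : Pt) : Set Pt := {β | β ≠ α ∧ z β • α = α}

/-- The points whose involution does not commute with that of `α`, but such that some involution
commutes with both. -/
def El (z : Pt → G) (α : Pt) : Set Pt :=
  {β | z β • α ≠ α ∧ ∃ γ, z γ • α = α ∧ z γ • β = β}

/-- The points `β` such that no involution commutes with those of `α` and `β`. -/
def Kl (z : Pt → G) (α : Pt) : Set Pt :=
  {β | z β • α ≠ α ∧ ¬ ∃ γ, z γ • α = α ∧ z γ • β = β}

lemma card_Dl (hz : ZData pr n z) (α : Pt) : (Dl z α).ncard = n := by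
  rw [← hz.card α, ← Set.ncard_image_of_injective _ hz.inj]
  congr 1
  ext x
  constructor
  · rintro ⟨β, ⟨h1, h2⟩, rfl⟩
    exact ⟨hz.mem β, h2, fun hc => h1 (hz.inj hc)⟩
  · rintro ⟨h1, h2, h3⟩
    obtain ⟨β, rfl⟩ := hz.surj x h1
    exact ⟨β, ⟨fun hc => h3 (by rw [hc]), h2⟩, rfl⟩

lemma smul_fix_iff (hz : ZData pr n z) {g : G} {α : Pt} (hg : g • α = α) (β : Pt) :
    z (g • β) • α = α ↔ z β • α = α := by
  constructor
  · intro h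
    have := z_smul hz g⁻¹ h
    rwa [inv_smul_smul, inv_smul_eq_iff.2 hg.symm] at this
  · intro h
    have := z_smul hz g h
    rwa [hg] at this

lemma smul_common (hz : ZData pr n z) {g : G} {α : Pt} (hg : g • α = α) (β : Pt) :
    (∃ γ, z γ • α = α ∧ z γ • g • β = g • β) ↔ ∃ γ, z γ • α = α ∧ z γ • β = β := by
  constructor
  · rintro ⟨γ, h1, h2⟩
    refine ⟨g⁻¹ • γ, ?_, ?_⟩
    · have := z_smul hz g⁻¹ h1
      rwa [inv_smul_eq_iff.2 hg.symm] at this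
    · have := z_smul hz g⁻¹ h2
      rwa [inv_smul_smul] at this
  · rintro ⟨γ, h1, h2⟩
    refine ⟨g • γ, ?_, z_smul hz g h2⟩
    have := z_smul hz g h1
    rwa [hg] at this

lemma smul_Kl (hz : ZData pr n z) {g : G} {α β : Pt} (hg : g • α = α) (hβ : β ∈ Kl z α) :
    g • β ∈ Kl z α :=
  ⟨fun hc => hβ.1 ((smul_fix_iff hz hg β).1 hc), fun hc => hβ.2 ((smul_common hz hg β).1 hc)⟩

lemma card_El [Finite Pt] (h : Cfg F G Pt pr n) (hz : ZData pr n z) (α : Pt) :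
    (El z α).ncard = n * (n - 2) := by
  have hd := double_count (fun γ β => z γ • β = β) (Dl z α) (El z α) (n - 2) 1 ?_ ?_
  · rw [mul_one, card_Dl hz] at hd
    exact hd.symm
  · rintro γ ⟨hγα, hγ⟩
    have hγ' := (hz.fix_iff α _ (hz.mem γ).1).1 hγ
    have hzα := (hz.mem α).2.1
    have hzγ := (hz.mem γ).2.1
    have hδI : z α * z γ ∈ Inv pr := by
      refine ⟨mul_mem (hz.mem α).1 (hz.mem γ).1, ?_, ?_⟩
      · calc z α * z γ * (z α * z γ) = z α * (z γ * z α) * z γ := by group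
          _ = (z α * z α) * (z γ * z γ) := by rw [hγ']; group
          _ = 1 := by rw [hzα, hzγ, one_mul]
      · intro hc
        apply hγα
        apply hz.inj
        calc z γ = (z α * z α) * z γ := by rw [hzα, one_mul]
          _ = z α * (z α * z γ) := by group
          _ = z α := by rw [hc, mul_one]
    obtain ⟨δ, hδ⟩ := hz.surj _ hδI
    have hγα' : z α • γ = γ := (z_comm hz α γ).1 hγ
    have hδα : δ ≠ α := by
      rintro rfl
      exact (hz.mem γ).2.2 (mul_left_cancel (a := z δ) (by rw [mul_one, ← hδ]))
    have hset : {β ∈ El z α | z γ • β = β} = Dl z γ \ {α, δ} := by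
      ext β
      constructor
      · rintro ⟨⟨h1, -⟩, h2⟩
        refine ⟨⟨?_, (z_comm hz γ β).2 h2⟩, ?_⟩
        · rintro rfl
          exact h1 hγ
        · rintro (rfl | hc)
          · exact h1 (z_self hz _)
          · rw [Set.mem_singleton_iff] at hc
            subst hc
            exact h1 (by rw [hδ, mul_smul, hγ, z_self hz])
      · rintro ⟨⟨h1, h2⟩, h3⟩
        rw [Set.mem_insert_iff, Set.mem_singleton_iff, not_or] at h3
        refine ⟨⟨?_, γ, hγ, (z_comm hz γ β).1 h2⟩, (z_comm hz γ β).1 h2⟩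
        intro hβα
        apply h3.2
        have hc := (hz.fix_iff γ _ (hz.mem β).1).1 h2
        have hm := hz.mul_eq α _ (hz.mem γ) _ (hz.mem β) hγ hβα (fun hc => hγα (hz.inj hc))
          (fun hc => h3.1 (hz.inj hc)) (fun hc => h1 (hz.inj hc).symm) (by
            calc z γ * z β * (z γ * z β) = z γ * (z β * z γ) * z β := by group
              _ = (z γ * z γ) * (z β * z β) := by rw [hc]; group
              _ = 1 := by rw [hzγ, (hz.mem β).2.1, one_mul])
        apply hz.inj
        calc z β = (z γ * z γ) * z β := by rw [hzγ, one_mul]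
          _ = z γ * z α := by rw [mul_assoc, hm]
          _ = z δ := by rw [hδ, hγ']
    have hsub : ({α, δ} : Set Pt) ⊆ Dl z γ := by
      rintro β (rfl | hc)
      · exact ⟨fun hc => hγα hc.symm, hγα'⟩
      · rw [Set.mem_singleton_iff] at hc
        subst hc
        refine ⟨?_, by rw [hδ, mul_smul, z_self hz, hγα']⟩
        rintro rfl
        exact (hz.mem α).2.2 (mul_right_cancel (b := z β) (by rw [one_mul, ← hδ]))
    rw [hset, Set.ncard_sdiff hsub, card_Dl hz, Set.ncard_pair hδα.symm]
  · rintro β ⟨hβ, γ, h1, h2⟩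
    rw [Set.ncard_eq_one]
    have hαβ : α ≠ β := fun hc => hβ (by rw [hc, z_self hz])
    have hprop : ∀ γ, z γ • α = α → z γ • β = β → γ ≠ α ∧ γ ≠ β := by
      intro γ h1 h2
      constructor
      · rintro rfl
        exact hβ ((z_comm hz _ _).2 h2)
      · rintro rfl
        exact hβ h1
    refine ⟨γ, ?_⟩
    ext γ'
    rw [Set.mem_singleton_iff]
    constructor
    · rintro ⟨⟨h0, h3⟩, h4⟩
      by_contra hne
      have hsq := fix_two h hαβ (x := z γ * z γ')
        ⟨mul_mem (hz.mem γ).1 (hz.mem γ').1, by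
          change (z γ * z γ') • α = α
          rw [mul_smul, h3, h1]⟩
        ⟨mul_mem (hz.mem γ).1 (hz.mem γ').1, by
          change (z γ * z γ') • β = β
          rw [mul_smul, h4, h2]⟩
      have e1 := hz.mul_eq α _ (hz.mem γ) _ (hz.mem γ') h1 h3
        (fun hc => (hprop γ h1 h2).1 (hz.inj hc)) (fun hc => (hprop γ' h3 h4).1 (hz.inj hc))
        (fun hc => hne (hz.inj hc).symm) hsq
      have e2 := hz.mul_eq β _ (hz.mem γ) _ (hz.mem γ') h2 h4
        (fun hc => (hprop γ h1 h2).2 (hz.inj hc)) (fun hc => (hprop γ' h3 h4).2 (hz.inj hc))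
        (fun hc => hne (hz.inj hc).symm) hsq
      exact hαβ (hz.inj (e1.symm.trans e2))
    · rintro rfl
      exact ⟨⟨(hprop _ h1 h2).1, h1⟩, h2⟩

/-- The involution attached to a point preserves every block through this point. -/
lemma z_smul_block (h : Cfg F G Pt pr n) (hz : ZData pr n z) (d : Dsg G 𝓑 k r) {α : Pt}
    {B : Set Pt} (hB : B ∈ 𝓑) (hα : α ∈ B) : z α • B = B := by
  have hn := three_le_n h
  have hne : (Dl z α).Nonempty := Set.nonempty_of_ncard_ne_zero (by rw [card_Dl hz]; omega)
  obtain ⟨β, hβα, hβ⟩ := hne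
  obtain ⟨C, hC, hαC, -, hzC⟩ := inv_fix_block d (hz.mem α).2.1 hβα.symm (z_self hz α)
    ((z_comm hz α β).1 hβ)
  obtain ⟨g, hg, hgα⟩ := d.flag C hC B hB α hαC α hα
  have hc := hz.conj g α
  rw [hgα] at hc
  rw [← hg, smul_smul, ← hc, inv_mul_cancel_right, mul_smul, hzC]

/-- The intersection numbers of a block through `α` with the sets `Dl` and `Kl`: since `r / 3`
divides `|Dl| = n`, the parameters are `k = q - 1` and `r = 3 n`. -/
lemma three_params [Finite Pt] (h : Cfg F G Pt pr n) (hz : ZData pr n z) (d : Dsg G 𝓑 k r)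
    (hq : Fintype.card F % 4 = 3) {α : Pt} {B : Set Pt} (hB : B ∈ 𝓑) (hα : α ∈ B) :
    (B ∩ Dl z α).ncard = 1 ∧ (B ∩ Kl z α).ncard = n - 2 := by
  have hn := three_le_n h
  obtain ⟨r', hr'⟩ := d.three_dvd
  have h1 := inv_count d (α := α) (Δ := Dl z α) (fun hc => hc.1 rfl)
    (fun g hg β hβ => ⟨fun hc => hβ.1 (by
      rw [← hg] at hc
      exact MulAction.injective g hc), (smul_fix_iff hz hg β).2 hβ.2⟩) hB hα
  have h2 := inv_count d (α := α) (Δ := El z α) (fun hc => hc.1 (z_self hz α))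
    (fun g hg β hβ => ⟨fun hc => hβ.1 ((smul_fix_iff hz hg β).1 hc),
      (smul_common hz hg β).2 hβ.2⟩) hB hα
  rw [card_Dl hz] at h1
  rw [card_El h hz] at h2
  have hdvd : r' ∣ n := ⟨(B ∩ Dl z α).ncard, by rw [hr', mul_assoc] at h1; omega⟩
  obtain ⟨hk, hr⟩ := odd_params h d (by omega) α hr' hdvd
  have hnq := n_odd h (by omega)
  rw [hr] at h1 h2
  have e1 : (B ∩ Dl z α).ncard = 1 :=
    Nat.eq_of_mul_eq_mul_left (show 0 < 3 * n by omega) (by rw [h1]; ring)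
  have e2 : (B ∩ El z α).ncard = n - 2 :=
    Nat.eq_of_mul_eq_mul_left (show 0 < 3 * n by omega) (by rw [h2]; ring)
  refine ⟨e1, ?_⟩
  have hBk := d.block_card B hB
  have u1 : B = insert α (B ∩ Dl z α) ∪ (B ∩ El z α ∪ B ∩ Kl z α) := by
    ext β
    simp only [Dl, El, Kl, Set.mem_union, Set.mem_insert_iff, Set.mem_inter_iff, Set.mem_ofPred_eq]
    constructor
    · intro hβ
      by_cases p1 : β = α
      · exact Or.inl (Or.inl p1)
      by_cases p2 : z β • α = α
      · exact Or.inl (Or.inr ⟨hβ, p1, p2⟩)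
      by_cases p3 : ∃ γ, z γ • α = α ∧ z γ • β = β
      · exact Or.inr (Or.inl ⟨hβ, p2, p3⟩)
      · exact Or.inr (Or.inr ⟨hβ, p2, p3⟩)
    · rintro ((rfl | h1) | h1 | h1)
      · exact hα
      all_goals exact h1.1
  rw [u1, Set.ncard_union_eq, Set.ncard_insert_of_notMem, Set.ncard_union_eq, e1, e2] at hBk
  · omega
  · rw [Set.disjoint_left]
    rintro β ⟨-, hβ⟩ ⟨-, hβ'⟩
    exact hβ'.2 hβ.2
  · exact fun hc => hc.2.1 rfl
  · rw [Set.disjoint_left]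
    rintro β (rfl | ⟨-, hβ⟩) (⟨-, hβ'⟩ | ⟨-, hβ'⟩)
    · exact hβ'.1 (z_self hz _)
    · exact hβ'.1 (z_self hz _)
    · exact hβ'.1 hβ.2
    · exact hβ'.1 hβ.2

end

section
variable {F : Type} [Field F] [Fintype F] {G Pt : Type*} [Group G] [MulAction G Pt]
  {pr : S2 F →* G} {n : ℕ} {𝓑 : Set (Set Pt)} {k r : ℕ} {z : Pt → G}

/-- The antidiagonal matrix with upper right entry `u`. -/
def Yu {F : Type} [Field F] (u : Fˣ) : S2 F :=
  mk2 0 (u : F) (-(u : F)⁻¹) 0 (by have := u.ne_zero; field_simp; ring)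

lemma Yu_conj {F : Type} [Field F] (u w : Fˣ) : Yu u * Yu w = Yu (u ^ 2 * w⁻¹) * Yu u := by
  have := u.ne_zero
  have := w.ne_zero
  rw [s2_ext_iff]
  simp only [Yu, s2_mul_00, s2_mul_01, s2_mul_10, s2_mul_11, mk2_00, mk2_01, mk2_10,
    mk2_11, Units.val_mul, Units.val_pow_eq_pow_val, Units.val_inv_eq_inv_val]
  refine ⟨?_, ?_, ?_, ?_⟩ <;> field_simp <;> ring

/-- A matrix commuting with `Y 1` up to sign. -/
lemma comm_Y_one {F : Type} [Field F] (h2 : (2 : F) ≠ 0) {A : S2 F} (ht : tr2 A = 0)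
    (hc : A * Yu 1 = Yu 1 * A ∨ A * Yu 1 = -(Yu 1 * A)) :
    (A = Yu 1 ∨ A = - Yu 1) ∨ A.1 0 1 = A.1 1 0 := by
  have hd := s2_det A
  unfold tr2 at ht
  rw [s2_ext_iff, s2_ext_iff] at hc
  simp only [Yu, s2_mul_00, s2_mul_01, s2_mul_10, s2_mul_11, s2_neg_apply, mk2_00, mk2_01, mk2_10,
    mk2_11, Units.val_one, inv_one] at hc
  rcases hc with ⟨h1, h3, h4, h5⟩ | ⟨h1, h3, h4, h5⟩
  · left
    have e0 : A.1 0 0 = 0 := (mul_eq_zero.1 (show 2 * A.1 0 0 = 0 by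
      linear_combination h3 + ht)).resolve_left h2
    have e1 : A.1 1 1 = 0 := by linear_combination ht - e0
    have e2 : A.1 1 0 = - A.1 0 1 := by linear_combination -h1
    have e3 : A.1 0 1 * A.1 0 1 = 1 := by rw [e0, e2] at hd; linear_combination hd
    rcases mul_self_eq_one_iff.1 e3 with e | e
    · left
      rw [s2_ext_iff]
      simp [Yu, e0, e1, e2, e]
    · right
      rw [s2_ext_iff]
      simp [Yu, e0, e1, e2, e]
  · right
    linear_combination -h1

/-- A symmetric trace-zero matrix of determinant one cannot conjugate `Y u` to `± Y w` unless
`u ^ 2 = 1`, if `-1` is not a square. -/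
lemma sym_conj_Y {F : Type} [Field F] (hns : ∀ s : F, s * s ≠ -1) {A : S2 F} (ht : tr2 A = 0)
    (hs : A.1 0 1 = A.1 1 0) {u w : Fˣ}
    (hc : A * Yu u = Yu w * A ∨ A * Yu u = -(Yu w * A)) : (u : F) * u = 1 := by
  have hd := s2_det A
  unfold tr2 at ht
  have hu := u.ne_zero
  have hw := w.ne_zero
  have hd' : A.1 1 1 = - A.1 0 0 := by linear_combination ht
  have hb : A.1 1 0 ≠ 0 := by
    intro hb
    rw [hb, hd'] at hd
    exact hns (A.1 0 0) (by linear_combination -hd)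
  have ha : A.1 0 0 ≠ 0 := by
    intro ha
    rw [hs, ha] at hd
    exact hns (A.1 1 0) (by linear_combination -hd)
  rw [s2_ext_iff, s2_ext_iff] at hc
  simp only [Yu, s2_mul_00, s2_mul_01, s2_mul_10, s2_mul_11, s2_neg_apply, mk2_00, mk2_01, mk2_10,
    mk2_11, hd', hs] at hc
  rcases hc with ⟨h1, h3, h4, h5⟩ | ⟨h1, h3, h4, h5⟩
  · have e1 : (w : F) = - u := mul_left_cancel₀ ha (by linear_combination h3)
    rw [e1] at h1
    field_simp at h1
    apply mul_left_cancel₀ hb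
    linear_combination h1
  · have e1 : (w : F) = u := mul_left_cancel₀ ha (by linear_combination -h3)
    rw [e1] at h1
    field_simp at h1
    apply mul_left_cancel₀ hb
    linear_combination h1

lemma case_three_mod_four [Finite Pt] (h : Cfg F G Pt pr n) (d : Dsg G 𝓑 k r)
    (hq : Fintype.card F % 4 = 3) (α₀ : Pt) : False := by
  classical
  have hq2 : Fintype.card F % 2 = 1 := by omega
  have hn := n_odd h hq2
  have hn3 := three_le_n h
  have hq4 := h.card_ge
  obtain ⟨z, hz⟩ := exists_zdata h (by omega) α₀
  have h2 : (2 : F) ≠ 0 := fun hc => by have := char_two_iff.1 hc; omega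
  have hns : ∀ s : F, s * s ≠ -1 := by
    intro s hs
    have : IsSquare (-1 : F) := ⟨s, hs.symm⟩
    rw [FiniteField.isSquare_neg_one_iff] at this
    exact this hq
  -- commutation in `X` is commutation up to sign in `SL(2, F)`
  have hcomm : ∀ A B C D : S2 F, pr A * pr B = pr C * pr D ↔ A * B = C * D ∨ A * B = -(C * D) := by
    intro A B C D
    rw [← map_mul, ← map_mul, h.eq_iff]
  have hYI : ∀ u : Fˣ, pr (Yu u) ∈ Inv pr := by
    intro u
    have hu := u.ne_zero
    refine ⟨⟨_, rfl⟩, (pr_sq h).2 (Or.inr (by simp [tr2, Yu])), ?_⟩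
    rw [← map_one pr, Ne, h.eq_iff, s2_ext_iff, s2_ext_iff]
    simp [Yu, hu]
  have htr : ∀ {A}, pr A ∈ Inv pr → tr2 A = 0 := fun {A} hA =>
    ((pr_sq h).1 hA.2.1).resolve_left hA.2.2
  choose pt hpt using fun u => hz.surj _ (hYI u)
  have hpt_eq : ∀ u w, pt u = pt w → u = w ∨ u = -w := by
    intro u w huw
    have := congrArg z huw
    rw [hpt, hpt, h.eq_iff, s2_ext_iff, s2_ext_iff] at this
    simp only [Yu, mk2_00, mk2_01, mk2_10, mk2_11, s2_neg_apply] at this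
    rcases this with ⟨-, h1, -⟩ | ⟨-, h1, -⟩
    · exact Or.inl (Units.ext h1)
    · exact Or.inr (Units.ext h1)
  have hpt_neg : ∀ u, pt (-u) = pt u := by
    intro u
    apply hz.inj
    rw [hpt, hpt, h.eq_iff]
    right
    rw [s2_ext_iff]
    simp [Yu]
  have hrefl : ∀ u w, z (pt u) • pt w = pt (u ^ 2 * w⁻¹) := by
    intro u w
    apply hz.inj
    rw [← hz.conj, hpt, hpt, hpt, mul_inv_eq_iff_eq_mul, hcomm]
    exact Or.inl (Yu_conj u w)
  obtain ⟨a, ha⟩ := IsCyclic.exists_monoid_generator (α := Fˣ)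
  have hord : orderOf a = Fintype.card F - 1 := by
    rw [← Fintype.card_units, ← Nat.card_eq_fintype_card]
    exact orderOf_eq_card_of_forall_mem_powers ha
  have ha2 : a ^ 2 ≠ 1 := by
    intro hc
    have := Nat.le_of_dvd (by norm_num) (orderOf_dvd_of_pow_eq_one hc)
    omega
  have hne1 : pt 1 ≠ pt a := by
    intro hc
    rcases hpt_eq _ _ hc with h1 | h1
    · exact ha2 (by rw [← h1, one_pow])
    · exact ha2 (by rw [← neg_sq, ← h1, one_pow])
  obtain ⟨B, hB, h1B, haB⟩ := exists_block₂ d hne1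
  have hpow : ∀ i : ℕ, pt (a ^ i) ∈ B ∧ pt (a ^ (i + 1)) ∈ B := by
    intro i
    induction i with
    | zero => simpa using ⟨h1B, haB⟩
    | succ i ih =>
      refine ⟨ih.2, ?_⟩
      have e := hrefl (a ^ (i + 1)) (a ^ i)
      have : pt ((a ^ (i + 1)) ^ 2 * (a ^ i)⁻¹) ∈ B := by
        rw [← e, ← z_smul_block h hz d hB ih.2]
        exact Set.smul_mem_smul_set ih.1
      convert this using 2
      rw [eq_mul_inv_iff_mul_eq, ← pow_add, ← pow_mul]
      congr 1
      ring
  have hall : ∀ u, pt u ∈ B := by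
    intro u
    obtain ⟨i, rfl⟩ := ha u
    exact (hpow i).1
  obtain ⟨hD, hK⟩ := three_params h hz d hq hB h1B
  have hO : n - 1 ≤ (Set.range pt).ncard := by
    have := double_count_le (fun u β => pt u = β) Set.univ (Set.range pt) 1 2
      (fun u _ => by
        rw [Nat.one_le_iff_ne_zero, ← Nat.pos_iff_ne_zero, Set.ncard_pos]
        exact ⟨pt u, ⟨u, rfl⟩, rfl⟩)
      (by
        rintro _ ⟨w, rfl⟩
        refine le_trans (Set.ncard_le_ncard (t := {w, -w}) ?_) (Set.ncard_insert_le _ _ |>.trans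
          (by rw [Set.ncard_singleton]))
        rintro u ⟨-, hu⟩
        exact hpt_eq u w hu)
    rw [Set.ncard_univ, Nat.card_eq_fintype_card, Fintype.card_units] at this
    omega
  have hsub : Set.range pt \ {pt 1} ⊆ B ∩ Kl z (pt 1) := by
    rintro _ ⟨⟨u, rfl⟩, hu⟩
    rw [Set.mem_singleton_iff] at hu
    have hu0 := u.ne_zero
    have husq : (u : F) * u ≠ 1 := by
      intro hc
      rcases mul_self_eq_one_iff.1 hc with h1 | h1
      · exact hu (by rw [show u = 1 from Units.ext h1])
      · exact hu (by rw [show u = -1 from Units.ext h1, hpt_neg])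
    have hnc : z (pt u) • pt 1 ≠ pt 1 := by
      intro hc
      rw [hz.fix_iff _ _ (hz.mem _).1, hpt, hpt, hcomm] at hc
      rw [s2_ext_iff, s2_ext_iff] at hc
      simp only [Yu, s2_mul_00, s2_mul_01, s2_mul_10, s2_mul_11, s2_neg_apply, mk2_00, mk2_01,
        mk2_10, mk2_11, Units.val_one, inv_one] at hc
      rcases hc with ⟨h1, -⟩ | ⟨h1, -⟩
      · field_simp at h1
        exact husq (by linear_combination -h1)
      · field_simp at h1
        exact hns u (by linear_combination -h1)
    refine ⟨hall u, hnc, ?_⟩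
    rintro ⟨γ, g1, g2⟩
    obtain ⟨A, hA⟩ := (hz.mem γ).1
    have hAt := htr (hA ▸ hz.mem γ)
    have g1' := (hz.fix_iff _ _ (hz.mem _).1).1 g1
    have g2' := (hz.fix_iff _ _ (hz.mem _).1).1 g2
    rw [← hA, hpt, hcomm] at g1' g2'
    rcases comm_Y_one h2 hAt g1' with hY | hY
    · have : γ = pt 1 := hz.inj (by rw [← hA, hpt, h.eq_iff]; exact hY)
      rw [this] at g2
      exact hnc ((z_comm hz _ _).1 g2)
    · exact husq (sym_conj_Y hns hAt hY g2')
  have heq : Set.range pt \ {pt 1} = B ∩ Kl z (pt 1) := by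
    apply Set.eq_of_subset_of_ncard_le hsub
    rw [Set.ncard_sdiff_singleton_of_mem (Set.mem_range_self 1), hK]
    omega
  obtain ⟨β, hβ⟩ := Set.ncard_eq_one.1 hD
  obtain ⟨hβB, hβ1, hβf⟩ : β ∈ B ∩ Dl z (pt 1) := hβ ▸ Set.mem_singleton β
  have haK : pt a ∈ B ∩ Kl z (pt 1) := by
    rw [← heq]; exact ⟨⟨a, rfl⟩, fun hc => hne1 hc.symm⟩
  have hmem : z β • pt a ∈ B ∩ Kl z (pt 1) := by
    refine ⟨?_, smul_Kl hz hβf haK.2⟩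
    rw [← z_smul_block h hz d hB hβB]
    exact Set.smul_mem_smul_set haK.1
  rw [← heq] at hmem
  obtain ⟨⟨w, hw⟩, -⟩ := hmem
  obtain ⟨A, hA⟩ := (hz.mem β).1
  have hAt := htr (hA ▸ hz.mem β)
  have g1 := (hz.fix_iff _ _ (hz.mem _).1).1 hβf
  rw [← hA, hpt, hcomm] at g1
  have g2 := hz.conj (z β) (pt a)
  rw [← hw, hpt, hpt, ← hA, mul_inv_eq_iff_eq_mul, hcomm] at g2
  rcases comm_Y_one h2 hAt g1 with hY | hY
  · exact hβ1 (hz.inj (by rw [← hA, hpt, h.eq_iff]; exact hY))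
  · apply ha2
    have := sym_conj_Y hns hAt hY g2
    apply Units.ext
    rw [Units.val_pow_eq_pow_val, pow_two, this, Units.val_one]

end

/-! ### Even `q`: the outer automorphisms of `PSL(2, q)` are field automorphisms -/

section
variable {F : Type} [Field F]

/-- The upper unitriangular matrix with entry `x`. -/
def uu (x : F) : S2 F := mk2 1 x 0 1 (by ring)

/-- The diagonal matrix with entries `t` and `t⁻¹`. -/
def dg (t : Fˣ) : S2 F := mk2 (t : F) 0 0 (t : F)⁻¹ (by have := t.ne_zero; field_simp; ring)

lemma uu_mul (x y : F) : uu x * uu y = uu (x + y) := by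
  rw [s2_ext_iff]; simp [uu, add_comm]

lemma uu_zero : uu (0 : F) = 1 := by
  rw [s2_ext_iff]; simp [uu]

lemma uu_inj : Function.Injective (uu : F → S2 F) := by
  intro x y hxy
  exact ((s2_ext_iff _ _).1 hxy).2.1

lemma dg_mul (s t : Fˣ) : dg s * dg t = dg (s * t) := by
  rw [s2_ext_iff]; simp [dg, mul_comm]

lemma dg_pow (t : Fˣ) (i : ℕ) : dg (t ^ i) = dg t ^ i := by
  induction i with
  | zero => rw [pow_zero, pow_zero, s2_ext_iff]; simp [dg]
  | succ i ih => rw [pow_succ, ← dg_mul, ih, pow_succ]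

lemma dg_uu (t : Fˣ) (x : F) : dg t * uu x = uu ((t : F) ^ 2 * x) * dg t := by
  have := t.ne_zero
  rw [s2_ext_iff]
  simp only [dg, uu, s2_mul_00, s2_mul_01, s2_mul_10, s2_mul_11, mk2_00, mk2_01, mk2_10, mk2_11]
  refine ⟨by ring, ?_, by ring, by ring⟩
  field_simp; ring

lemma weyl_dg (t : Fˣ) : weyl * dg t = dg t⁻¹ * weyl := by
  rw [s2_ext_iff]
  simp [dg, weyl]

lemma comm_uu (h2 : (2 : F) = 0) {A : S2 F} (hA : A * uu 1 = uu 1 * A) : ∃ x, A = uu x := by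
  have hd := s2_det A
  rw [s2_ext_iff] at hA
  simp only [uu, s2_mul_00, s2_mul_01, s2_mul_10, s2_mul_11, mk2_00, mk2_01, mk2_10, mk2_11] at hA
  obtain ⟨h1, h3, h4, h5⟩ := hA
  have hc : A.1 1 0 = 0 := by linear_combination -h1
  have had : A.1 0 0 = A.1 1 1 := by linear_combination h3
  have ha : A.1 1 1 = 1 := by
    rw [hc, had] at hd
    have : (A.1 1 1 - 1) * (A.1 1 1 - 1) = 0 := by
      linear_combination hd - (A.1 1 1 - 1) * h2
    exact sub_eq_zero.1 (mul_self_eq_zero.1 this)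
  refine ⟨A.1 0 1, ?_⟩
  rw [s2_ext_iff]
  simp [uu, hc, had, ha]

/-- The Bruhat decomposition: unipotent and diagonal matrices and the Weyl element generate. -/
lemma s2_generate (H : Subgroup (S2 F)) (hu : ∀ x, uu x ∈ H) (hd : ∀ t, dg t ∈ H)
    (hw : weyl ∈ H) (A : S2 F) : A ∈ H := by
  have key : ∀ A : S2 F, A.1 1 0 ≠ 0 → A ∈ H := by
    intro A hc
    have hdet := s2_det A
    have : A = uu (A.1 0 0 / A.1 1 0) * weyl * dg (Units.mk0 _ hc) * uu (A.1 1 1 / A.1 1 0) := by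
      rw [s2_ext_iff]
      simp only [dg, uu, weyl, s2_mul_00, s2_mul_01, s2_mul_10, s2_mul_11, mk2_00, mk2_01, mk2_10,
        mk2_11, Units.val_mk0]
      refine ⟨?_, ?_, ?_, ?_⟩ <;> field_simp <;> try ring1
      linear_combination -(A.1 1 0) * hdet
    rw [this]
    exact mul_mem (mul_mem (mul_mem (hu _) hw) (hd _)) (hu _)
  by_cases hc : A.1 1 0 = 0
  · have ha : A.1 0 0 ≠ 0 := by
      intro ha
      have hdet := s2_det A
      rw [hc, ha] at hdet
      simp at hdet
    have h1 : weyl * A ∈ H := key _ (by simpa [weyl, hc] using ha)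
    exact (H.mul_mem_cancel_left hw).1 h1
  · exact key A hc

lemma card_ringHom_le [Fintype F] {f : ℕ} (hf : Fintype.card F = 2 ^ f) (hf0 : f ≠ 0) :
    Nat.card (F →+* F) ≤ f := by
  have hchar : CharP F 2 := by
    have h2 : (2 : F) = 0 := char_two_iff.2 (by
      rw [hf]; obtain ⟨m, rfl⟩ := Nat.exists_eq_succ_of_ne_zero hf0; rw [pow_succ]; omega)
    exact CharTwo.of_one_ne_zero_of_two_eq_zero one_ne_zero h2
  let _ : Algebra (ZMod 2) F := ZMod.algebra F 2
  have hfr : Module.finrank (ZMod 2) F = f := by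
    have := Module.card_eq_pow_finrank (K := ZMod 2) (V := F)
    rw [hf, ZMod.card] at this
    exact (Nat.pow_right_injective (le_refl 2) this).symm
  have hle := card_algHom_le_finrank (ZMod 2) F F
  rw [hfr] at hle
  refine le_trans (Nat.card_le_card_of_injective
    (fun φ : F →+* F => ({ φ with
      commutes' := fun x => by
        have : φ.comp (algebraMap (ZMod 2) F) = algebraMap (ZMod 2) F := Subsingleton.elim _ _
        exact congrArg (fun ψ => ψ x) this } : F →ₐ[ZMod 2] F)) ?_) ?_
  · intro φ ψ hφ
    ext x
    exact congrArg (fun χ : F →ₐ[ZMod 2] F => χ x) hφ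
  · exact hle

end

section
variable {F : Type} [Field F] [Fintype F] {G Pt : Type*} [Group G] [MulAction G Pt]
  {pr : S2 F →* G} {n : ℕ}

lemma card_G_le [Finite G] (h : Cfg F G Pt pr n) {f : ℕ} (hf : Fintype.card F = 2 ^ f) :
    Nat.card G ≤ Nat.card pr.range * f := by
  classical
  have hq4 := h.card_ge
  have hf0 : f ≠ 0 := by rintro rfl; simp [hf] at hq4
  have hq0 : Fintype.card F % 2 = 0 := by
    rw [hf]; obtain ⟨m, rfl⟩ := Nat.exists_eq_succ_of_ne_zero hf0; rw [pow_succ]; omega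
  have h2 : (2 : F) = 0 := char_two_iff.2 hq0
  have hinj := pr_inj h h2
  have hsqinj : ∀ x y : F, x ^ 2 = y ^ 2 → x = y := by
    intro x y hxy
    have : (x - y) * (x - y) = 0 := by linear_combination hxy + (y ^ 2 - x * y) * h2
    exact sub_eq_zero.1 (mul_self_eq_zero.1 this)
  -- conjugation by `g`, transported to `SL(2, F)`
  choose th hth using h.norm
  have thm : ∀ g A B, th g (A * B) = th g A * th g B := by
    intro g A B
    apply hinj
    rw [map_mul, ← hth, ← hth, ← hth, map_mul]
    group
  have thinj : ∀ g A B, th g A = th g B → A = B := by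
    intro g A B hAB
    apply hinj
    have := hth g A
    rw [hAB, ← hth] at this
    simpa using this
  have thmul : ∀ g g' A, th (g * g') A = th g (th g' A) := by
    intro g g' A
    apply hinj
    rw [← hth, ← hth, ← hth]
    group
  have thpr : ∀ P A, th (pr P) A = P * A * P⁻¹ := by
    intro P A
    apply hinj
    rw [← hth, map_mul, map_mul, map_inv]
  obtain ⟨a, ha⟩ := IsCyclic.exists_monoid_generator (α := Fˣ)
  have hord : orderOf a = Fintype.card F - 1 := by
    rw [← Fintype.card_units, ← Nat.card_eq_fintype_card]
    exact orderOf_eq_card_of_forall_mem_powers ha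
  have ha1 : a ≠ 1 := by
    rintro rfl
    rw [orderOf_one] at hord
    omega
  have ha0 := a.ne_zero
  let D : Set G := {g | th g (uu 1) = uu 1 ∧ ∃ b, th g (dg a) = dg b}
  have hU : ∀ g ∈ D, ∀ x, ∃ y, th g (uu x) = uu y := by
    rintro g ⟨hg, -⟩ x
    apply comm_uu h2
    rw [← hg, ← thm, ← thm, uu_mul, uu_mul, add_comm]
  -- `G = X D`
  have hsurj : ∀ g : G, ∃ P, pr P * g ∈ D := by
    intro g
    have hone : (1 : F) ≠ 0 := one_ne_zero
    have huI : pr (uu 1) * pr (uu 1) = 1 ∧ pr (uu (1 : F)) ≠ 1 := by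
      constructor
      · rw [← map_mul, uu_mul, one_add_one_eq_two, h2, uu_zero, map_one]
      · intro hc
        rw [← map_one pr] at hc
        have := ((s2_ext_iff _ _).1 (hinj hc)).2.1
        simp [uu] at this
    have hgI : pr (th g (uu 1)) * pr (th g (uu 1)) = 1 ∧ pr (th g (uu 1)) ≠ 1 := by
      rw [← hth]
      constructor
      · calc g * pr (uu 1) * g⁻¹ * (g * pr (uu 1) * g⁻¹) = g * (pr (uu 1) * pr (uu 1)) * g⁻¹ := by
              group
          _ = 1 := by rw [huI.1]; group
      · intro hc
        exact huI.2 (by simpa using hc)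
    obtain ⟨P, hP⟩ := inv_conj h hgI.1 hgI.2 huI.1 huI.2
    have hP1 : th (pr P * g) (uu 1) = uu 1 := by
      rw [thmul, thpr]
      apply hinj
      rw [map_mul, map_mul, map_inv, hP]
    obtain ⟨A, hA⟩ : ∃ A, th (pr P * g) (dg a) = A := ⟨_, rfl⟩
    have hdet := s2_det A
    -- `A` normalizes the unipotent group, so it is upper triangular
    obtain ⟨y, hy⟩ : ∃ y, th (pr P * g) (uu ((a : F) ^ 2 * 1)) = uu y := by
      apply comm_uu h2
      rw [← hP1, ← thm, ← thm, uu_mul, uu_mul, add_comm]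
    have hrel : A * uu 1 = uu y * A := by
      rw [← hy, ← hA, ← thm, ← dg_uu, thm, hP1]
    rw [s2_ext_iff] at hrel
    simp only [uu, s2_mul_00, s2_mul_01, s2_mul_10, s2_mul_11, mk2_00, mk2_01, mk2_10,
      mk2_11] at hrel
    obtain ⟨-, -, -, r4⟩ := hrel
    have hc : A.1 1 0 = 0 := by linear_combination r4
    have hb : A.1 0 0 ≠ 0 := by
      intro hb; rw [hb, hc] at hdet; simp at hdet
    have hdd : A.1 1 1 = (A.1 0 0)⁻¹ := by
      rw [hc] at hdet
      field_simp
      linear_combination hdet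
    have hb1 : A.1 0 0 - A.1 1 1 ≠ 0 := by
      intro hb1
      have e1 : A.1 0 0 = 1 := by
        apply hsqinj
        rw [hc] at hdet
        linear_combination hdet + A.1 0 0 * hb1
      have hAu : A = uu (A.1 0 1) := by
        rw [s2_ext_iff]
        refine ⟨e1, rfl, hc, ?_⟩
        rw [hdd, e1, inv_one]; rfl
      have : dg a * uu 1 = uu 1 * dg a := by
        apply thinj (pr P * g)
        rw [thm, thm, hA, hP1, hAu, uu_mul, uu_mul, add_comm]
      rw [dg_uu] at this
      have := uu_inj (mul_right_cancel this)
      apply ha1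
      apply Units.ext
      apply hsqinj
      rw [Units.val_one, one_pow]
      linear_combination this
    let s : F := A.1 0 1 / (A.1 0 0 - A.1 1 1)
    refine ⟨uu s * P, ?_, Units.mk0 _ hb, ?_⟩
    · rw [map_mul, mul_assoc, thmul, hP1, thpr, uu_mul, add_comm, ← uu_mul, mul_inv_cancel_right]
    · rw [map_mul, mul_assoc, thmul, hA, thpr, mul_inv_eq_iff_eq_mul, s2_ext_iff]
      simp only [uu, dg, s2_mul_00, s2_mul_01, s2_mul_10, s2_mul_11, mk2_00, mk2_01, mk2_10,
        mk2_11, Units.val_mk0, hc, ← hdd]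
      have hs : s * (A.1 0 0 - A.1 1 1) = A.1 0 1 := div_mul_cancel₀ _ hb1
      refine ⟨by ring, ?_, by ring, by ring⟩
      linear_combination (-1 : F) * hs
  -- elements of `D` act on the unipotent group by ring homomorphisms
  have hhom : ∀ g : D, ∃ φ : F →+* F, ∀ x, th g (uu x) = uu (φ x) := by
    rintro ⟨g, hg⟩
    choose ψ hψ using hU g hg
    obtain ⟨hg1, b, hgb⟩ := hg
    have hadd : ∀ x y, ψ (x + y) = ψ x + ψ y := by
      intro x y
      apply uu_inj
      rw [← hψ, ← uu_mul, thm, hψ, hψ, uu_mul]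
    have hone : ψ 1 = 1 := uu_inj (by rw [← hψ, hg1])
    have hzero : ψ 0 = 0 := by have := hadd 0 0; simpa using this
    have hsc : ∀ x, ψ ((a : F) ^ 2 * x) = (b : F) ^ 2 * ψ x := by
      intro x
      apply uu_inj
      rw [← hψ]
      have e := congrArg (th g) (dg_uu a x)
      rw [thm, thm, hgb, hψ, dg_uu] at e
      exact (mul_right_cancel e).symm
    have hpw : ∀ (i : ℕ) x, ψ (((a : F) ^ 2) ^ i * x) = ((b : F) ^ 2) ^ i * ψ x := by
      intro i
      induction i with
      | zero => intro x; simp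
      | succ i ih => intro x; rw [pow_succ, mul_assoc, ih, hsc]; ring
    have hmul : ∀ x y, ψ (x * y) = ψ x * ψ y := by
      intro x y
      by_cases hx : x = 0
      · rw [hx, zero_mul, hzero, zero_mul]
      obtain ⟨s, hs⟩ := FiniteField.isSquare_of_char_two (F := F) (by
        by_contra hcc
        exact Ring.two_ne_zero hcc h2) x
      have hs0 : s ≠ 0 := by rintro rfl; simp at hs; exact hx hs
      obtain ⟨i, hi⟩ := ha (Units.mk0 s hs0)
      have hi' : (a : F) ^ i = s := by
        have := congrArg Units.val hi
        simpa using this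
      have hx' : x = ((a : F) ^ 2) ^ i := by rw [hs, ← hi']; ring
      have e1 := hpw i 1
      rw [mul_one, hone, mul_one] at e1
      rw [hx', hpw, e1]
    exact ⟨{ toFun := ψ, map_one' := hone, map_mul' := hmul, map_zero' := hzero,
             map_add' := hadd }, hψ⟩
  choose φ hφ using hhom
  have haa : (a : F) ^ 2 ≠ 1 := by
    intro hc
    exact ha1 (Units.ext (hsqinj _ _ (by rw [hc, Units.val_one, one_pow])))
  have hcen : ∀ c, (∀ x, th c (uu x) = uu x) → th c (dg a) = dg a → c = 1 := by
    intro c hu hd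
    let K : Subgroup (S2 F) :=
      { carrier := {A | th c A = A}
        mul_mem' := fun {A B} (hA : th c A = A) (hB : th c B = B) => by
          change th c (A * B) = A * B
          rw [thm, hA, hB]
        one_mem' := by
          change th c 1 = 1
          rw [← uu_zero, hu]
        inv_mem' := fun {A} (hA : th c A = A) => by
          change th c A⁻¹ = A⁻¹
          have h1 : th c 1 = 1 := by rw [← uu_zero, hu]
          rw [eq_inv_iff_mul_eq_one]
          conv_lhs => rw [← hA, ← thm, hA, inv_mul_cancel, h1] }
    have hmemK : ∀ A, A ∈ K ↔ th c A = A := fun A => Iff.rfl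
    have hdK : ∀ t, dg t ∈ K := by
      intro t
      obtain ⟨i, rfl⟩ := ha t
      change dg (a ^ i) ∈ K
      rw [dg_pow]
      exact pow_mem ((hmemK _).2 hd) i
    obtain ⟨W, hW⟩ : ∃ W, th c weyl = W := ⟨_, rfl⟩
    have hdet := s2_det W
    -- `W` inverts the torus, so it is antidiagonal
    have e1 : W * dg a = dg a⁻¹ * W := by
      rw [← hW, ← (hmemK _).1 (hdK a⁻¹), ← thm, ← weyl_dg, thm, hd]
    rw [s2_ext_iff] at e1
    simp only [dg, s2_mul_00, s2_mul_01, s2_mul_10, s2_mul_11, mk2_00, mk2_01, mk2_10,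
      mk2_11, Units.val_inv_eq_inv_val] at e1
    obtain ⟨r1, -, -, r4⟩ := e1
    have haa' : (a : F) ^ 2 - 1 ≠ 0 := sub_ne_zero.2 haa
    have w0 : W.1 0 0 = 0 := by
      field_simp at r1
      exact (mul_eq_zero.1 (show ((a : F) ^ 2 - 1) * W.1 0 0 = 0 by
        linear_combination r1)).resolve_left haa'
    have w1 : W.1 1 1 = 0 := by
      field_simp at r4
      exact (mul_eq_zero.1 (show ((a : F) ^ 2 - 1) * W.1 1 1 = 0 by
        linear_combination -r4)).resolve_left haa'
    -- the relation `(u w) ^ 3 = 1` now pins down `W`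
    have hcube : (uu 1 * weyl) * ((uu 1 * weyl) * (uu 1 * weyl)) = (1 : S2 F) := by
      rw [← neg_eq_self h2 1, s2_ext_iff]
      simp [uu, weyl]
    have e2 := congrArg (th c) hcube
    simp only [thm, hu, hW] at e2
    rw [← uu_zero, hu, uu_zero, s2_ext_iff] at e2
    simp only [uu, s2_mul_00, s2_mul_01, s2_mul_10, s2_mul_11, mk2_00, mk2_01, mk2_10, mk2_11,
      s2_one_00, s2_one_01, s2_one_10, s2_one_11, w0, w1] at e2
    obtain ⟨-, -, r3, -⟩ := e2
    rw [w0, w1] at hdet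
    have hx0 : W.1 1 0 ≠ 0 := by
      intro hc; rw [hc] at hdet; simp at hdet
    have hxy : W.1 1 0 + W.1 0 1 = 0 := by
      apply (mul_eq_zero.1 (show (W.1 1 0 * W.1 1 0) * (W.1 1 0 + W.1 0 1) = 0 by
        linear_combination r3)).resolve_left
      exact mul_ne_zero hx0 hx0
    have hx1 : W.1 1 0 = 1 := by
      apply hsqinj
      linear_combination hdet + W.1 1 0 * hxy
    have hwK : weyl ∈ K := by
      rw [hmemK, hW, s2_ext_iff]
      simp only [weyl, mk2_00, mk2_01, mk2_10, mk2_11]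
      exact ⟨w0, by linear_combination hxy - hx1, hx1, w1⟩
    apply h.cent
    intro A
    have := (hmemK _).1 (s2_generate K hu hdK hwK A)
    have e := hth c A
    rw [this] at e
    exact mul_inv_eq_iff_eq_mul.1 e
  have hφinj : Function.Injective φ := by
    intro g g' hgg
    -- `g⁻¹ g'` centralizes the unipotent and the diagonal matrices
    have hu : ∀ x, th ((g : G)⁻¹ * g') (uu x) = uu x := by
      intro x
      apply thinj (g : G)
      rw [← thmul, mul_inv_cancel_left, hφ, hφ, hgg]
    obtain ⟨b, hb⟩ := g.2.2
    obtain ⟨b', hb'⟩ := g'.2.2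
    have hbval : ∀ (g : D) b, th g (dg a) = dg b → (b : F) ^ 2 = φ g ((a : F) ^ 2) := by
      intro g b hb
      have e := congrArg (th g) (dg_uu a 1)
      rw [thm, thm, hb, g.2.1, dg_uu, hφ, mul_one, mul_one] at e
      exact uu_inj (mul_right_cancel e)
    have hbb : b = b' := by
      apply Units.ext
      apply hsqinj
      rw [hbval g b hb, hbval g' b' hb', hgg]
    have hd : th ((g : G)⁻¹ * g') (dg a) = dg a := by
      apply thinj (g : G)
      rw [← thmul, mul_inv_cancel_left, hb, hb', hbb]
    exact Subtype.ext (inv_mul_eq_one.1 (hcen _ hu hd))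
  have : Finite (F →+* F) := Finite.of_injective (fun φ => (φ : F → F)) DFunLike.coe_injective
  have hDcard : Nat.card D ≤ f :=
    le_trans (Nat.card_le_card_of_injective φ hφinj) (card_ringHom_le hf hf0)
  have hs : Function.Surjective (fun p : pr.range × D => (p.1 : G) * p.2) := by
    intro g
    obtain ⟨P, hP⟩ := hsurj g
    exact ⟨(⟨(pr P)⁻¹, inv_mem ⟨P, rfl⟩⟩, ⟨_, hP⟩), by simp⟩
  calc Nat.card G ≤ Nat.card (pr.range × D) := Nat.card_le_card_of_surjective _ hs
    _ = Nat.card pr.range * Nat.card D := Nat.card_prod _ _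
    _ ≤ _ := Nat.mul_le_mul_left _ hDcard

end

/-! ### Even `q`: involutions fixing a flag -/

/-- If all point stabilizers of `K` on an invariant set `S` have order `m`, then all orbits have
size `|K| / m`, so `|K|` divides `|S| m`. -/
lemma card_dvd_of_stab {G Y : Type*} [Group G] [MulAction G Y] [Finite G] [Finite Y]
    (K : Subgroup G) (S : Set Y) (hS : ∀ g ∈ K, ∀ y ∈ S, g • y ∈ S) (m : ℕ)
    (hm : ∀ y ∈ S, Nat.card (K ⊓ MulAction.stabilizer G y : Subgroup G) = m) :
    Nat.card K ∣ S.ncard * m := by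
  classical
  let T : SubMulAction K Y :=
    { carrier := S
      smul_mem' := fun g y hy => hS g.1 g.2 y hy }
  have h1 := Nat.card_congr (MulAction.sigmaFixedByEquivOrbitsProdGroup K T)
  rw [Nat.card_prod] at h1
  have e : (Σ g : K, MulAction.fixedBy T g) ≃
      Σ y : S, (K ⊓ MulAction.stabilizer G y.1 : Subgroup G) :=
    { toFun := fun p => ⟨⟨p.2.1.1, p.2.1.2⟩, ⟨p.1.1, p.1.2, congrArg Subtype.val p.2.2⟩⟩
      invFun := fun p => ⟨⟨p.2.1, p.2.2.1⟩, ⟨⟨p.1.1, p.1.2⟩, Subtype.ext p.2.2.2⟩⟩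
      left_inv := fun p => rfl
      right_inv := fun p => rfl }
  have : Fintype S := Fintype.ofFinite _
  rw [Nat.card_congr e, Nat.card_sigma, Finset.sum_congr rfl (fun y _ => hm y.1 y.2),
    Finset.sum_const, smul_eq_mul, Finset.card_univ, ← Nat.card_eq_fintype_card,
    Nat.card_coe_set_eq] at h1
  exact ⟨_, by rw [h1, mul_comm]⟩

section
variable {F : Type} [Field F] [Fintype F] {G Pt : Type*} [Group G] [MulAction G Pt]
  {pr : S2 F →* G} {n : ℕ} {𝓑 : Set (Set Pt)} {k r : ℕ}

/-- The involutions of `X` fixing the flag `(α, B)`. -/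
def Ifl (pr : S2 F →* G) (α : Pt) (B : Set Pt) : Set G :=
  {x | x ∈ Inv pr ∧ x • α = α ∧ x • B = B}

/-- The blocks through `α` fixed by `x`. -/
def Fbl (𝓑 : Set (Set Pt)) (x : G) (α : Pt) : Set (Set Pt) := {C | C ∈ 𝓑 ∧ α ∈ C ∧ x • C = C}

lemma smul_set_fix {g x : G} {B : Set Pt} (hx : x • B = B) :
    (g * x * g⁻¹) • (g • B) = g • B := by
  rw [mul_smul, mul_smul, inv_smul_smul, hx]

lemma smul_pt_fix {g x : G} {β : Pt} (hx : x • β = β) :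
    (g * x * g⁻¹) • (g • β) = g • β := by
  rw [mul_smul, mul_smul, inv_smul_smul, hx]

/-- Two involutions of `X_β`, `n` odd, are conjugate by a power of their product. -/
lemma refl_conj (h : Cfg F G Pt pr n) (hn : n % 2 = 1) {β : Pt} {x y : G} (hx : x ∈ Inv pr)
    (hy : y ∈ Inv pr) (hxβ : x • β = β) (hyβ : y • β = β) :
    (x * y) ^ (n / 2) * x * ((x * y) ^ (n / 2))⁻¹ = y := by
  obtain ⟨e, he, her⟩ := h.dih β
  obtain ⟨i, rfl⟩ := (inv_refl hn he her x).1 ⟨hx, hx.1, hxβ⟩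
  obtain ⟨j, rfl⟩ := (inv_refl hn he her y).1 ⟨hy, hy.1, hyβ⟩
  have h1 : ∀ (m : ℕ) (l : ZMod n), (DihedralGroup.r l) ^ m = DihedralGroup.r ((m : ZMod n) * l) := by
    intro m l
    induction m with
    | zero => simp only [pow_zero, Nat.cast_zero, zero_mul, DihedralGroup.r_zero]
    | succ m ih => rw [pow_succ, ih, DihedralGroup.r_mul_r]; push_cast; congr 1; ring
  rw [← map_mul, ← map_pow, ← map_inv, ← map_mul, ← map_mul, he.eq_iff, DihedralGroup.sr_mul_sr,
    h1, DihedralGroup.inv_r, DihedralGroup.r_mul_sr, DihedralGroup.sr_mul_r,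
    DihedralGroup.sr.injEq]
  have h2 : ((2 * (n / 2) + 1 : ℕ) : ZMod n) = 0 := by
    rw [show 2 * (n / 2) + 1 = n by omega, ZMod.natCast_self]
  push_cast at h2 ⊢
  linear_combination -(j - i) * h2

lemma conj_Ifl (h : Cfg F G Pt pr n) (g : G) {x : G} {α : Pt} {B : Set Pt} (hx : x ∈ Ifl pr α B) :
    g * x * g⁻¹ ∈ Ifl pr (g • α) (g • B) :=
  ⟨conj_Inv h g hx.1, smul_pt_fix hx.2.1, smul_set_fix hx.2.2⟩

lemma card_Ifl_le [Finite G] (h : Cfg F G Pt pr n) (g : G) (α : Pt) (B : Set Pt) :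
    (Ifl pr α B).ncard ≤ (Ifl pr (g • α) (g • B)).ncard := by
  refine Set.ncard_le_ncard_of_injOn (fun x => g * x * g⁻¹) (fun x hx => conj_Ifl h g hx) ?_
    (Set.toFinite _)
  intro x _ y _ hxy
  simpa using hxy

/-- The number of involutions of `X` fixing a flag does not depend on the flag. -/
lemma card_Ifl_eq [Finite G] (h : Cfg F G Pt pr n) (d : Dsg G 𝓑 k r) {α β : Pt} {B C : Set Pt}
    (hB : B ∈ 𝓑) (hC : C ∈ 𝓑) (hα : α ∈ B) (hβ : β ∈ C) :
    (Ifl pr α B).ncard = (Ifl pr β C).ncard := by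
  have key : ∀ {α β : Pt} {B C : Set Pt}, B ∈ 𝓑 → C ∈ 𝓑 → α ∈ B → β ∈ C →
      (Ifl pr α B).ncard ≤ (Ifl pr β C).ncard := by
    intro α β B C hB hC hα hβ
    obtain ⟨g, h1, h2⟩ := d.flag B hB C hC α hα β hβ
    rw [← h1, ← h2]
    exact card_Ifl_le h g α B
  exact le_antisymm (key hB hC hα hβ) (key hC hB hβ hα)

/-- For an involution `x` of `X` fixing the flag `(α, B)`, the number of fixed points of `x` on `B`
does not depend on `x`, `α` and `B`. -/
lemma card_fix_block [Finite Pt] (h : Cfg F G Pt pr n) (hn : n % 2 = 1) (d : Dsg G 𝓑 k r)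
    {α β : Pt} {B C : Set Pt} {x y : G} (hB : B ∈ 𝓑) (hC : C ∈ 𝓑) (hα : α ∈ B) (hβ : β ∈ C)
    (hx : x ∈ Ifl pr α B) (hy : y ∈ Ifl pr β C) :
    (Fx Pt x ∩ B).ncard = (Fx Pt y ∩ C).ncard := by
  have conj : ∀ (g x : G) (B : Set Pt),
      (Fx Pt (g * x * g⁻¹) ∩ (g • B)).ncard = (Fx Pt x ∩ B).ncard := by
    intro g x B
    rw [smul_Fx, ← Set.ncard_image_of_injective (Fx Pt x ∩ B) (MulAction.injective g),
      Set.image_inter (MulAction.injective g)]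
    rfl
  obtain ⟨g, hgB, hgα⟩ := d.flag B hB C hC α hα β hβ
  have hz := conj_Ifl h g hx
  rw [hgB, hgα] at hz
  have e1 := conj g x B
  rw [hgB] at e1
  rw [← e1]
  set z := g * x * g⁻¹
  set p := (z * y) ^ (n / 2)
  have hp : p * z * p⁻¹ = y := refl_conj h hn hz.1 hy.1 hz.2.1 hy.2.1
  have hpC : p • C = C := by
    have : z * y ∈ MulAction.stabilizer G C := by
      change (z * y) • C = C
      rw [mul_smul, hy.2.2, hz.2.2]
    exact pow_mem this (n / 2)
  have e2 := conj p z C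
  rw [hp, hpC] at e2
  exact e2.symm

/-- The number of blocks through `α` fixed by an involution `x` of `X_α` does not depend on `x` and
`α`. -/
lemma card_Fbl_eq [Finite Pt] (h : Cfg F G Pt pr n) (hn : n % 2 = 1) (d : Dsg G 𝓑 k r)
    {α β : Pt} {x y : G} (hx : x ∈ Inv pr) (hy : y ∈ Inv pr) (hxα : x • α = α)
    (hyβ : y • β = β) : (Fbl 𝓑 x α).ncard = (Fbl 𝓑 y β).ncard := by
  have conj : ∀ (g x : G) (α : Pt),
      (Fbl 𝓑 x α).ncard ≤ (Fbl 𝓑 (g * x * g⁻¹) (g • α)).ncard := by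
    intro g x α
    refine Set.ncard_le_ncard_of_injOn (fun C => g • C) ?_ ?_ (Set.toFinite _)
    · rintro C ⟨h1, h2, h3⟩
      exact ⟨d.acts g C h1, Set.smul_mem_smul_set h2, smul_set_fix h3⟩
    · intro C _ D _ hCD
      exact MulAction.injective g hCD
  have key : ∀ {α β : Pt} {x y : G}, x ∈ Inv pr → y ∈ Inv pr → x • α = α → y • β = β →
      (Fbl 𝓑 x α).ncard ≤ (Fbl 𝓑 y β).ncard := by
    intro α β x y hx hy hxα hyβ
    obtain ⟨A, hA⟩ := h.trans α β
    have e1 := conj (pr A) x α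
    have hz := conj_Inv h (pr A) hx
    have hzβ : (pr A * x * (pr A)⁻¹) • (pr A • α) = pr A • α := smul_pt_fix hxα
    rw [hA] at e1 hzβ
    set z := pr A * x * (pr A)⁻¹
    have hp := refl_conj h hn hz hy hzβ hyβ
    have e2 := conj ((z * y) ^ (n / 2)) z β
    rw [hp] at e2
    have hpβ : (z * y) ^ (n / 2) • β = β := by
      have : z * y ∈ MulAction.stabilizer G β := by
        change (z * y) • β = β
        rw [mul_smul, hyβ, hzβ]
      exact pow_mem this (n / 2)
    rw [hpβ] at e2
    exact e1.trans e2
  exact le_antisymm (key hx hy hxα hyβ) (key hy hx hyβ hxα)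

/-- The stabilizer in `X` of a flag fixed by some involution has order twice the number of its
involutions. -/
lemma card_flag_stab [Finite G] (h : Cfg F G Pt pr n) (hn : n % 2 = 1) {α : Pt} {B : Set Pt}
    (hne : (Ifl pr α B).Nonempty) :
    Nat.card (Xs pr α ⊓ MulAction.stabilizer G B : Subgroup G) = 2 * (Ifl pr α B).ncard := by
  obtain ⟨x, hx⟩ := hne
  obtain ⟨e, he, her⟩ := h.dih α
  set K : Subgroup G := Xs pr α ⊓ MulAction.stabilizer G B with hK
  have hxK : x ∈ K := ⟨⟨hx.1.1, hx.2.1⟩, hx.2.2⟩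
  have hsub : Ifl pr α B = {y | y ∈ K ∧ y ∈ Inv pr ∩ Xs pr α} := by
    ext y
    constructor
    · intro hy
      exact ⟨⟨⟨hy.1.1, hy.2.1⟩, hy.2.2⟩, hy.1, ⟨hy.1.1, hy.2.1⟩⟩
    · rintro ⟨hy, hy', -⟩
      exact ⟨hy', hy.1.2, hy.2⟩
  have hsplit : (K : Set G) = Ifl pr α B ∪ (fun y => x * y) '' Ifl pr α B := by
    ext y
    constructor
    · intro hy
      have hy1 : y ∈ Xs pr α := hy.1
      rw [hsub]
      rw [← her] at hy1
      obtain ⟨i, hi⟩ := (inv_refl hn he her x).1 ⟨hx.1, hxK.1⟩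
      obtain ⟨dd, rfl⟩ := hy1
      cases dd with
      | sr j => exact Or.inl ⟨hy, (inv_refl hn he her _).2 ⟨j, rfl⟩⟩
      | r j =>
        refine Or.inr ⟨x * e (.r j), ⟨mul_mem hxK hy, (inv_refl hn he her _).2 ⟨i + j, ?_⟩⟩, ?_⟩
        · rw [← hi, ← map_mul, DihedralGroup.sr_mul_r]
        · change x * (x * e (.r j)) = _
          rw [← mul_assoc, hx.1.2.1, one_mul]
    · rw [hsub]
      rintro (hy | ⟨y, hy, rfl⟩)
      · exact hy.1
      · exact mul_mem hxK hy.1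
  have hdisj : Disjoint (Ifl pr α B) ((fun y => x * y) '' Ifl pr α B) := by
    rw [Set.disjoint_left, hsub]
    rintro _ ⟨-, hy⟩ ⟨z, ⟨-, hz⟩, rfl⟩
    obtain ⟨i, hi⟩ := (inv_refl hn he her x).1 ⟨hx.1, hxK.1⟩
    obtain ⟨j, rfl⟩ := (inv_refl hn he her z).1 hz
    obtain ⟨l, hl⟩ := (inv_refl hn he her _).1 hy
    rw [← hi] at hl
    simp only [← map_mul] at hl
    rw [he.eq_iff, DihedralGroup.sr_mul_sr] at hl
    cases hl
  have : Nat.card K = (K : Set G).ncard := (Nat.card_coe_set_eq _)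
  rw [this, hsplit, Set.ncard_union_eq hdisj (Set.toFinite _) (Set.toFinite _),
    Set.ncard_image_of_injective _ (mul_right_injective x)]
  ring

end

/-! ### Even `q`: counting fixed blocks and fixed points -/

section
set_option linter.unusedSectionVars false
variable {F : Type} [Field F] [Fintype F] {G Pt : Type*} [Group G] [MulAction G Pt]
  {pr : S2 F →* G} {n : ℕ} {𝓑 : Set (Set Pt)} {k r : ℕ}

lemma card_Fx_even [Finite Pt] (h : Cfg F G Pt pr n) (hq : Fintype.card F % 2 = 0) {x : G}
    (hx : x ∈ Inv pr) (α : Pt) : 2 * (Fx Pt x).ncard = Fintype.card F := by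
  have hn := n_even h hq
  have h1 := card_inv_mul (Pt := Pt) h (by omega) hx
  have h2 := card_Inv_even h hq
  have h3 := two_v h α
  have h4 := h.card_ge
  generalize Fintype.card F = q at *
  obtain ⟨s, rfl⟩ : ∃ s, q = s + 1 := ⟨q - 1, by omega⟩
  rw [Nat.add_sub_cancel] at h3
  have h5 : (Inv pr).ncard = s * (s + 2) := by nlinarith
  apply Nat.eq_of_mul_eq_mul_left (show 0 < s * (s + 2) by
    have : 0 < s := by omega
    positivity)
  calc s * (s + 2) * (2 * (Fx Pt x).ncard) = 2 * ((Inv pr).ncard * (Fx Pt x).ncard) := by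
        rw [h5]; ring
    _ = (2 * Nat.card Pt) * n := by rw [h1]; ring
    _ = _ := by rw [h3, hn]; ring

lemma r_mul_Ifl [Finite G] [Finite Pt] (h : Cfg F G Pt pr n) (hn : n % 2 = 1) (d : Dsg G 𝓑 k r)
    {α : Pt} {B : Set Pt} {x : G} (hB : B ∈ 𝓑) (hα : α ∈ B) (hx : x ∈ Inv pr) (hxα : x • α = α) :
    r * (Ifl pr α B).ncard = n * (Fbl 𝓑 x α).ncard := by
  have hd := double_count (A := Set Pt) (B := G) (fun C y => y • C = C) {C | C ∈ 𝓑 ∧ α ∈ C}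
    (Inv pr ∩ Xs pr α) (Ifl pr α B).ncard (Fbl 𝓑 x α).ncard ?_ ?_
  · rwa [d.rep, card_inv_Xs h hn] at hd
  · rintro C ⟨hC, hαC⟩
    rw [card_Ifl_eq h d hB hC hα hαC]
    congr 1
    ext y
    constructor
    · rintro ⟨⟨h1, h2⟩, h3⟩
      exact ⟨h1, h2.2, h3⟩
    · rintro ⟨h1, h2, h3⟩
      exact ⟨⟨h1, h1.1, h2⟩, h3⟩
  · rintro y ⟨hy, hyα⟩
    rw [card_Fbl_eq h hn d hx hy hxα hyα.2]
    congr 1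
    ext C
    constructor
    · rintro ⟨⟨h1, h2⟩, h3⟩
      exact ⟨h1, h2, h3⟩
    · rintro ⟨h1, h2, h3⟩
      exact ⟨⟨h1, h2⟩, h3⟩

lemma card_Fbl_pair_le [Finite Pt] (d : Dsg G 𝓑 k r) {x : G} {α β : Pt} (hne : α ≠ β) :
    {C ∈ Fbl 𝓑 x α | β ∈ C}.ncard ≤ 3 := by
  rw [← d.pair α β hne]
  apply Set.ncard_le_ncard _ (Set.toFinite _)
  rintro C ⟨⟨h1, h2, -⟩, h3⟩
  exact ⟨h1, h2, h3⟩

lemma card_Fbl_block [Finite Pt] {x : G} {α : Pt} {w : ℕ} (hxα : x • α = α)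
    (hw : ∀ C ∈ Fbl 𝓑 x α, (Fx Pt x ∩ C).ncard = w) {C : Set Pt} (hC : C ∈ Fbl 𝓑 x α) :
    {β ∈ Fx Pt x \ {α} | β ∈ C}.ncard = w - 1 := by
  rw [← hw C hC, ← Set.ncard_sdiff_singleton_of_mem (show α ∈ Fx Pt x ∩ C from ⟨hxα, hC.2.1⟩)]
  congr 1
  ext β
  constructor
  · rintro ⟨⟨h1, h2⟩, h3⟩
    exact ⟨⟨h1, h3⟩, h2⟩
  · rintro ⟨⟨h1, h3⟩, h2⟩
    exact ⟨⟨h1, h2⟩, h3⟩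

/-- Every pair `α, β` of fixed points of the involution `x` lies on a block fixed by `x`. -/
lemma Fx_le [Finite Pt] (d : Dsg G 𝓑 k r) {x : G} (hx : x ∈ Inv pr) {α : Pt} {w : ℕ}
    (hxα : x • α = α) (hw : ∀ C ∈ Fbl 𝓑 x α, (Fx Pt x ∩ C).ncard = w) :
    (Fx Pt x).ncard - 1 ≤ (Fbl 𝓑 x α).ncard * (w - 1) := by
  have hd := double_count_le (A := Pt) (B := Set Pt) (fun β C => β ∈ C) (Fx Pt x \ {α})
    (Fbl 𝓑 x α) 1 (w - 1) ?_ ?_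
  · rwa [mul_one, Set.ncard_sdiff_singleton_of_mem (show α ∈ Fx Pt x from hxα)] at hd
  · rintro β ⟨hβ, hβα⟩
    obtain ⟨C, hC, h1, h2, h3⟩ := inv_fix_block d hx.2.1 (Ne.symm hβα) hxα hβ
    exact (Set.ncard_pos (Set.toFinite _)).2 ⟨C, ⟨hC, h1, h3⟩, h2⟩
  · intro C hC
    exact (card_Fbl_block hxα hw hC).le

/-- If the incidences just suffice, every pair of fixed points of `x` lies on exactly three blocks
fixed by `x`. -/
lemma Fx_tight [Finite Pt] (d : Dsg G 𝓑 k r) {x : G} {α : Pt} {w : ℕ}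
    (hxα : x • α = α) (hw : ∀ C ∈ Fbl 𝓑 x α, (Fx Pt x ∩ C).ncard = w)
    (heq : (Fbl 𝓑 x α).ncard * (w - 1) = 3 * ((Fx Pt x).ncard - 1)) {β : Pt} (hβ : β ∈ Fx Pt x)
    (hne : α ≠ β) : {C ∈ Fbl 𝓑 x α | β ∈ C}.ncard = 3 := by
  by_contra hcon
  have hlt : {C ∈ Fbl 𝓑 x α | β ∈ C}.ncard ≤ 2 := by
    have := card_Fbl_pair_le (x := x) d hne
    omega
  have hβS : β ∈ Fx Pt x \ {α} := ⟨hβ, fun hc => hne hc.symm⟩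
  -- the blocks are counted with their incidences to the fixed points other than `α` and `β`
  have h1 := Set.ncard_sdiff_singleton_of_mem (show α ∈ Fx Pt x from hxα)
  have hS := Set.ncard_sdiff_singleton_of_mem hβS
  have hpos : 0 < (Fx Pt x \ {α}).ncard := (Set.ncard_pos (Set.toFinite _)).2 ⟨β, hβS⟩
  have key : (Fbl 𝓑 x α).ncard * (w - 1) ≤
      ((Fx Pt x \ {α}) \ {β}).ncard * 3 + {C ∈ Fbl 𝓑 x α | β ∈ C}.ncard := by
    classical
    have e1 : ∑ C ∈ (Fbl 𝓑 x α).toFinite.toFinset,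
        ({γ ∈ (Fx Pt x \ {α}).toFinite.toFinset | γ ∈ C}).card =
        (Fbl 𝓑 x α).ncard * (w - 1) := by
      rw [Set.ncard_eq_toFinset_card _ (Set.toFinite _), ← smul_eq_mul, ← Finset.sum_const]
      refine Finset.sum_congr rfl fun C hC => ?_
      rw [← card_Fbl_block hxα hw (by simpa using hC), ← Set.ncard_coe_finset]
      congr 1
      ext γ; simp
    have e2 : ∀ γ, ({C ∈ (Fbl 𝓑 x α).toFinite.toFinset | γ ∈ C}).card =
        {C ∈ Fbl 𝓑 x α | γ ∈ C}.ncard := by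
      intro γ
      rw [← Set.ncard_coe_finset]
      congr 1
      ext C; simp
    rw [← e1]
    rw [show ∑ C ∈ (Fbl 𝓑 x α).toFinite.toFinset,
        ({γ ∈ (Fx Pt x \ {α}).toFinite.toFinset | γ ∈ C}).card =
        ∑ γ ∈ (Fx Pt x \ {α}).toFinite.toFinset,
        ({C ∈ (Fbl 𝓑 x α).toFinite.toFinset | γ ∈ C}).card from
      Finset.sum_card_bipartiteAbove_eq_sum_card_bipartiteBelow (fun C γ => γ ∈ C)]
    have hmem : β ∈ (Fx Pt x \ {α}).toFinite.toFinset := by simpa using hβS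
    rw [← Finset.sum_erase_add _ _ hmem, e2]
    refine Nat.add_le_add_right ?_ _
    calc _ ≤ ∑ γ ∈ (Fx Pt x \ {α}).toFinite.toFinset.erase β, 3 := by
          refine Finset.sum_le_sum fun γ hγ => ?_
          rw [e2]
          refine card_Fbl_pair_le d ?_
          rintro rfl
          simp at hγ
      _ = _ := by
          rw [Finset.sum_const, smul_eq_mul, ← Set.ncard_coe_finset]
          congr 2
          ext γ; simp [and_comm]
  omega

/-- If every pair of fixed points of `x` lies on exactly three blocks fixed by `x`, those blocks
induce a `2`-design on `Fix x`, to which Fisher's inequality applies. -/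
lemma fix_fisher [Finite Pt] (h : Cfg F G Pt pr n) (hn : n % 2 = 1) (d : Dsg G 𝓑 k r)
    {x : G} (hx : x ∈ Inv pr) {α : Pt} {w : ℕ}
    (hxα : x • α = α) (hw : ∀ β ∈ Fx Pt x, ∀ C ∈ Fbl 𝓑 x β, (Fx Pt x ∩ C).ncard = w)
    (heq : (Fbl 𝓑 x α).ncard * (w - 1) = 3 * ((Fx Pt x).ncard - 1))
    (hlt : w < (Fx Pt x).ncard) (hc : (Fbl 𝓑 x α).Nonempty) : w ≤ (Fbl 𝓑 x α).ncard := by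
  obtain ⟨C₀, hC₀⟩ := hc
  let S : Set (Set Pt) := {C | C ∈ 𝓑 ∧ x • C = C ∧ (Fx Pt x ∩ C).Nonempty}
  have himg : ∀ (p : Set Pt → Prop), (∀ C, p C → C ∈ S) →
      {s : S | p s.1}.ncard = {C | p C}.ncard := by
    intro p hp
    rw [← Set.ncard_image_of_injective _ Subtype.val_injective]
    congr 1
    ext C
    constructor
    · rintro ⟨s, hs, rfl⟩; exact hs
    · intro hC; exact ⟨⟨C, hp C hC⟩, hC, rfl⟩
  refine fisher (Y := Fx Pt x) (S := S) (fun y s => y.1 ∈ s.1) w _ 3 ?_ ?_ ?_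
    ⟨C₀, hC₀.1, hC₀.2.2, ⟨α, hxα, hC₀.2.1⟩⟩ ?_ ?_
  · rintro ⟨C, hC, hxC, β, hβ, hβC⟩
    rw [← hw β hβ C ⟨hC, hβC, hxC⟩, ← Set.ncard_image_of_injective _ Subtype.val_injective]
    congr 1
    ext γ
    constructor
    · rintro ⟨s, hs, rfl⟩; exact ⟨s.2, hs⟩
    · rintro ⟨h1, h2⟩; exact ⟨⟨γ, h1⟩, h2, rfl⟩
  · rintro ⟨β, hβ⟩
    rw [card_Fbl_eq h hn d hx hx hxα hβ]
    have : {s : S | β ∈ s.1} = {s : S | s.1 ∈ Fbl 𝓑 x β} := by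
      ext s
      exact ⟨fun hs => ⟨s.2.1, hs, s.2.2.1⟩, fun hs => hs.2.1⟩
    change {s : S | β ∈ s.1}.ncard = _
    rw [this, himg (fun C => C ∈ Fbl 𝓑 x β) (fun C hC => ⟨hC.1, hC.2.2, β, hβ, hC.2.1⟩)]
    rfl
  · rintro ⟨β, hβ⟩ ⟨γ, hγ⟩ hne
    have hne' : β ≠ γ := fun hc => hne (Subtype.ext hc)
    rw [card_Fbl_eq h hn d hx hx hxα hβ] at heq
    rw [← Fx_tight d hβ (hw β hβ) heq hγ hne', ← himg (fun C => C ∈ Fbl 𝓑 x β ∧ γ ∈ C)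
      (fun C hC => ⟨hC.1.1, hC.1.2.2, β, hβ, hC.1.2.1⟩)]
    congr 1
    ext s
    exact ⟨fun hs => ⟨⟨s.2.1, hs.1, s.2.2.1⟩, hs.2⟩, fun hs => ⟨hs.1.2.1, hs.2⟩⟩
  · rw [← hw α hxα C₀ hC₀]
    exact (Set.ncard_pos (Set.toFinite _)).2 ⟨α, hxα, hC₀.2.1⟩
  · rwa [Nat.card_coe_set_eq]

/-- If the blocks fixed by `x` through `α` consist of all fixed points of `x`, there is at most
one of them. -/
lemma Fbl_le_one [Finite Pt] (d : Dsg G 𝓑 k r) {x : G} {α : Pt}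
    (hw : ∀ C ∈ Fbl 𝓑 x α, (Fx Pt x ∩ C).ncard = k) (hk : (Fx Pt x).ncard = k) :
    (Fbl 𝓑 x α).ncard ≤ 1 := by
  rw [Set.ncard_le_one (Set.toFinite _)]
  have key : ∀ C ∈ Fbl 𝓑 x α, C = Fx Pt x := by
    intro C hC
    have h1 : Fx Pt x ∩ C = Fx Pt x :=
      Set.eq_of_subset_of_ncard_le Set.inter_subset_left (by rw [hw C hC, hk]) (Set.toFinite _)
    have h2 : Fx Pt x ∩ C = C :=
      Set.eq_of_subset_of_ncard_le Set.inter_subset_right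
        (by rw [hw C hC, d.block_card C hC.1]) (Set.toFinite _)
    rw [← h2, h1]
  intro C hC D hD
  rw [key C hC, key D hD]

/-- Counting incident pairs of points of `B` and involutions of `X_B`. -/
lemma w_dvd [Finite G] [Finite Pt] (h : Cfg F G Pt pr n) (d : Dsg G 𝓑 k r) {α : Pt} {B : Set Pt}
    (hB : B ∈ 𝓑) (hα : α ∈ B) {w : ℕ}
    (hw : ∀ β ∈ B, ∀ x ∈ Ifl pr β B, (Fx Pt x ∩ B).ncard = w) :
    w ∣ k * (Ifl pr α B).ncard := by
  have hd := double_count (A := Pt) (B := G) (fun β x => x • β = β) B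
    {x | x ∈ Inv pr ∧ x • B = B ∧ (Fx Pt x ∩ B).Nonempty} (Ifl pr α B).ncard w ?_ ?_
  · rw [d.block_card B hB] at hd
    exact ⟨_, by rw [hd, mul_comm]⟩
  · intro β hβ
    rw [card_Ifl_eq h d hB hB hα hβ]
    congr 1
    ext x
    constructor
    · rintro ⟨⟨h1, h2, -⟩, h3⟩
      exact ⟨h1, h3, h2⟩
    · rintro ⟨h1, h2, h3⟩
      exact ⟨⟨h1, h3, β, h2, hβ⟩, h2⟩
  · rintro x ⟨h1, h2, β, h3, h4⟩
    rw [← hw β h4 x ⟨h1, h3, h2⟩]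
    congr 1
    ext γ
    exact and_comm

/-- The bound `|G| ≤ f |X|` limits the number of fixed blocks. -/
lemma Fbl_le_f [Finite G] [Finite Pt] (h : Cfg F G Pt pr n) (hn : n % 2 = 1) (d : Dsg G 𝓑 k r)
    {α : Pt} {B : Set Pt} {x : G} {f : ℕ} (hf : Fintype.card F = 2 ^ f) (hB : B ∈ 𝓑) (hα : α ∈ B)
    (hx : x ∈ Ifl pr α B) : (Fbl 𝓑 x α).ncard ≤ f := by
  have h1 := card_G_le h hf
  rw [← card_Pt h α] at h1
  have h2 := orbit_stab (⊤ : Subgroup G) α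
  have h2' : {z : Pt | ∃ g ∈ (⊤ : Subgroup G), g • α = z} = Set.univ := by
    ext z
    simp only [Set.mem_ofPred_eq, Set.mem_univ, iff_true]
    obtain ⟨A, hA⟩ := h.trans α z
    exact ⟨pr A, Subgroup.mem_top _, hA⟩
  rw [h2', Set.ncard_univ, top_inf_eq, Subgroup.card_top] at h2
  have h3 := orbit_stab (MulAction.stabilizer G α) B
  have h3' : {C : Set Pt | ∃ g ∈ MulAction.stabilizer G α, g • B = C} =
      {C | C ∈ 𝓑 ∧ α ∈ C} := by
    ext C
    constructor
    · rintro ⟨g, hg, rfl⟩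
      refine ⟨d.acts g B hB, ?_⟩
      have e := Set.smul_mem_smul_set (a := g) hα
      rwa [show g • α = α from hg] at e
    · rintro ⟨hC, hαC⟩
      obtain ⟨g, hg, hgα⟩ := d.flag B hB C hC α hα α hαC
      exact ⟨g, hgα, hg⟩
  rw [h3', d.rep] at h3
  have h4 : Nat.card (Xs pr α ⊓ MulAction.stabilizer G B : Subgroup G) ≤
      Nat.card (MulAction.stabilizer G α ⊓ MulAction.stabilizer G B : Subgroup G) :=
    Nat.card_le_card_of_injective _
      (Subgroup.inclusion_injective (inf_le_inf_right _ inf_le_right))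
  rw [card_flag_stab h hn ⟨x, hx⟩] at h4
  have h5 := r_mul_Ifl h hn d hB hα hx.1 hx.2.1
  have hPt : 0 < Nat.card Pt := Nat.card_pos_iff.2 ⟨⟨α⟩, inferInstance⟩
  have hn0 : 0 < n := by omega
  generalize (Ifl pr α B).ncard = t at *
  generalize (Fbl 𝓑 x α).ncard = c at *
  have h6 : Nat.card (MulAction.stabilizer G α) ≤ 2 * n * f := by
    refine Nat.le_of_mul_le_mul_left ?_ hPt
    calc Nat.card Pt * Nat.card (MulAction.stabilizer G α) = Nat.card G := h2
      _ ≤ _ := h1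
      _ = _ := by ring
  have h7 : r * (2 * t) ≤ 2 * n * f := by
    rw [← h3] at h6
    exact (Nat.mul_le_mul_left r h4).trans h6
  refine le_of_mul_le_mul_left (a := 2 * n) ?_ (by omega)
  calc 2 * n * c = r * (2 * t) := by rw [mul_assoc, ← h5]; ring
    _ ≤ _ := h7

/-- The orbits of the normal subgroup `X` on blocks have equal size. -/
lemma block_orbits [Finite G] [Finite Pt] (h : Cfg F G Pt pr n) (d : Dsg G 𝓑 k r) {B : Set Pt}
    (hB : B ∈ 𝓑) : Nat.card pr.range ∣
      𝓑.ncard * Nat.card (pr.range ⊓ MulAction.stabilizer G B : Subgroup G) := by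
  have hk := d.k_gt
  have hle : ∀ C ∈ 𝓑, ∀ D ∈ 𝓑, Nat.card (pr.range ⊓ MulAction.stabilizer G C : Subgroup G) ≤
      Nat.card (pr.range ⊓ MulAction.stabilizer G D : Subgroup G) := by
    intro C hC D hD
    have hne : ∀ E ∈ 𝓑, ∃ y, y ∈ E := fun E hE => by
      have := d.block_card E hE
      exact (Set.ncard_pos (Set.toFinite _)).1 (by omega)
    obtain ⟨y, hy⟩ := hne C hC
    obtain ⟨z, hz⟩ := hne D hD
    obtain ⟨g, hg, -⟩ := d.flag C hC D hD y hy z hz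
    refine Nat.card_le_card_of_injective
      (fun a => ⟨g * a.1 * g⁻¹, ?_, ?_⟩) ?_
    · obtain ⟨A, hA⟩ := a.2.1
      obtain ⟨A', hA'⟩ := h.norm g A
      exact ⟨A', by rw [← hA', hA]⟩
    · rw [← hg]; exact smul_set_fix a.2.2
    · intro a b hab
      have e : g * a.1 * g⁻¹ = g * b.1 * g⁻¹ := congrArg Subtype.val hab
      exact Subtype.ext (mul_left_cancel (mul_right_cancel e))
  refine card_dvd_of_stab pr.range 𝓑 (fun g _ C hC => d.acts g C hC) _ ?_
  intro C hC
  exact le_antisymm (hle C hC B hB) (hle B hB C hC)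

/-- The power of `2` in `k` divides the number of fixed points on `B` of an involution of `X`
fixing a flag `(α, B)`: it is half the order of some abelian `2`-subgroup of `X_B`, which acts on
these fixed points with stabilizers of order `2`. -/
lemma two_pow_dvd [Finite G] [Finite Pt] (h : Cfg F G Pt pr n) (hq : Fintype.card F % 2 = 0)
    (d : Dsg G 𝓑 k r) {B : Set Pt} (hB : B ∈ 𝓑) {w : ℕ}
    (hw : ∀ β ∈ B, ∀ x ∈ Ifl pr β B, (Fx Pt x ∩ B).ncard = w) {j m : ℕ} (hk : k = 2 ^ j * m)
    (hm : m % 2 = 1)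
    (hdvd : 2 ^ (j + 1) ∣ Nat.card (pr.range ⊓ MulAction.stabilizer G B : Subgroup G)) :
    2 ^ j ∣ w := by
  have hn : n % 2 = 1 := by have := n_even h hq; omega
  have h2 : (2 : F) = 0 := char_two_iff.2 hq
  have : Fact (Nat.Prime 2) := ⟨Nat.prime_two⟩
  obtain ⟨E₀, hE₀⟩ := Sylow.exists_subgroup_card_pow_prime 2 hdvd
  set E : Subgroup G := E₀.map (Subgroup.subtype _) with hE
  have hEcard : Nat.card E = 2 ^ (j + 1) := by
    rw [← hE₀]
    exact (Nat.card_congr (E₀.equivMapOfInjective _ (Subgroup.subtype_injective _)).toEquiv).symm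
  have hEX : ∀ g ∈ E, g ∈ pr.range ∧ g • B = B := by
    rintro _ ⟨g, -, rfl⟩
    exact ⟨g.2.1, g.2.2⟩
  have hpE : IsPGroup 2 E := IsPGroup.of_card hEcard
  -- a nontrivial central element shows that `E` is abelian
  have hcomm : ∀ a ∈ E, ∀ b ∈ E, a * b = b * a := by
    have hnt : Nontrivial E := by
      rw [← Finite.one_lt_card_iff_nontrivial, hEcard]
      exact Nat.one_lt_two_pow (by omega)
    have := hpE.center_nontrivial
    obtain ⟨⟨⟨z, hzE⟩, hzc⟩, hz1⟩ := exists_ne (1 : Subgroup.center E)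
    have hz1' : z ≠ 1 := by
      rintro rfl
      exact hz1 rfl
    have hzc' : ∀ a ∈ E, z * a = a * z := fun a ha => by
      have := Subgroup.mem_center_iff.1 hzc ⟨a, ha⟩
      exact (congrArg Subtype.val this).symm
    obtain ⟨⟨Z, rfl⟩, -⟩ := hEX z hzE
    intro a ha b hb
    have ha' := hzc' a ha
    have hb' := hzc' b hb
    obtain ⟨⟨A, rfl⟩, -⟩ := hEX a ha
    obtain ⟨⟨A', rfl⟩, -⟩ := hEX b hb
    exact comm_trans_two h h2 hz1' ha' hb'
  have hstab : ∀ β : Pt, Nat.card (E ⊓ MulAction.stabilizer G β : Subgroup G) ∣ 2 := by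
    intro β
    have e1 : Nat.card (E ⊓ MulAction.stabilizer G β : Subgroup G) ∣ 2 * n := by
      rw [← card_Xs h β]
      exact Subgroup.card_dvd_of_le (fun g hg => ⟨(hEX g hg.1).1, hg.2⟩)
    have e2 : Nat.card (E ⊓ MulAction.stabilizer G β : Subgroup G) ∣ 2 ^ (j + 1) := by
      rw [← hEcard]
      exact Subgroup.card_dvd_of_le inf_le_left
    have hcop : Nat.Coprime (Nat.card (E ⊓ MulAction.stabilizer G β : Subgroup G)) n := by
      refine Nat.Coprime.coprime_dvd_left e2 ?_
      exact Nat.Coprime.pow_left _ (Nat.coprime_two_left.2 (Nat.odd_iff.2 hn))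
    exact hcop.dvd_of_dvd_mul_right e1
  -- `|E|` does not divide `|B|`, so some involution of `E` has a fixed point on `B`
  obtain ⟨β, hβ, τ, hτE, hτβ, hτ1⟩ : ∃ β ∈ B, ∃ τ ∈ E, τ • β = β ∧ τ ≠ 1 := by
    by_contra! hcon
    have := card_dvd_of_stab E B (fun g hg y hy => by
        have e := Set.smul_mem_smul_set (a := g) hy
        rwa [(hEX g hg).2] at e) 1 (fun β hβ => by
      rw [Subgroup.card_eq_one, Subgroup.eq_bot_iff_forall]
      intro g hg
      exact hcon β hβ g hg.1 hg.2)
    rw [hEcard, d.block_card B hB, mul_one, hk, pow_succ] at this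
    have := Nat.dvd_of_mul_dvd_mul_left (by positivity) this
    omega
  have hτ2 : ∀ β : Pt, τ • β = β →
      Nat.card (E ⊓ MulAction.stabilizer G β : Subgroup G) = 2 := by
    intro β hβ
    refine ((Nat.dvd_prime Nat.prime_two).1 (hstab β)).resolve_left ?_
    rw [Subgroup.card_eq_one, Subgroup.eq_bot_iff_forall]
    intro hc
    exact hτ1 (hc τ ⟨hτE, hβ⟩)
  have hτinv : τ ∈ Inv pr := by
    refine ⟨(hEX τ hτE).1, ?_, hτ1⟩
    have : (⟨τ, hτE, hτβ⟩ : (E ⊓ MulAction.stabilizer G β : Subgroup G)) ^ 2 = 1 := by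
      rw [← hτ2 β hτβ]; exact pow_card_eq_one'
    rw [← pow_two]
    exact congrArg Subtype.val this
  have hfin := card_dvd_of_stab E (Fx Pt τ ∩ B) (fun g hg y hy => ⟨by
      change τ • g • y = g • y
      rw [smul_smul, hcomm τ hτE g hg, mul_smul, show τ • y = y from hy.1], by
      have e := Set.smul_mem_smul_set (a := g) hy.2
      rwa [(hEX g hg).2] at e⟩) 2 (fun γ hγ => hτ2 γ hγ.1)
  rw [hEcard, hw β hβ τ ⟨hτinv, hτβ, (hEX τ hτE).2⟩, pow_succ] at hfin
  exact Nat.dvd_of_mul_dvd_mul_right (by norm_num) hfin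

end

/-! ### Even `q`: arithmetic -/

lemma pow_bound (f : ℕ) (hf : 30 ≤ f) : 56 * f ^ 5 + 3 ≤ 3 * 2 ^ (f - 1) := by
  induction f, hf using Nat.le_induction with
  | base => norm_num
  | succ m hm ih =>
    have h1 : (30 * (m + 1)) ^ 5 ≤ (31 * m) ^ 5 := Nat.pow_le_pow_left (by omega) 5
    rw [mul_pow, mul_pow] at h1
    norm_num at h1
    obtain ⟨l, rfl⟩ : ∃ l, m = l + 1 := ⟨m - 1, by omega⟩
    simp only [Nat.add_sub_cancel] at ih ⊢
    rw [pow_succ 2 l]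
    have : 30 ^ 5 ≤ (l + 1) ^ 5 := Nat.pow_le_pow_left hm 5
    omega

/-- The divisibility and size restrictions on the parameters `c`, `t`, `k`, `r` for
`q = 2 ^ f`. -/
def ParamOK (f c t k r : ℕ) : Bool :=
  decide (2 ≤ f) && decide (0 < t) && decide (c ≠ 3 * t) && decide (t % 2 = 1) &&
  decide ((3 * (2 ^ (f - 1) - 1) * t) % c = 0) && decide (((2 ^ f + 1) * c) % t = 0) &&
  decide (r % 3 = 0) && decide (k < r) && decide (2 < k) &&
  decide ((2 ^ (f - 1) * (2 ^ f - 1) * r) % k = 0)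

/-- For `q = 2 ^ f` with `f < 30`, the parameter restrictions leave, apart from `k = q / 2`, only
two possibilities. -/
lemma small_check (f : ℕ) (hf : f < 30) (c : ℕ) (hc : c < f + 1) (t : ℕ) (ht : t < c + 1)
    (hOK : ParamOK f c t (3 * (2 ^ (f - 1) - 1) * t / c + 1) ((2 ^ f + 1) * c / t) = true) :
    (f = 5 ∧ c = 5 ∧ t = 1) ∨ (f = 7 ∧ c = 7 ∧ t = 1) := by
  have key : ((List.range 30).all fun f => (List.range (f + 1)).all fun c =>
      (List.range (c + 1)).all fun t =>
        !ParamOK f c t (3 * (2 ^ (f - 1) - 1) * t / c + 1) ((2 ^ f + 1) * c / t) ||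
          ((f == 5 && c == 5 && t == 1) || (f == 7 && c == 7 && t == 1))) = true := by
    decide +kernel
  have h := List.all_eq_true.1 key f (List.mem_range.2 hf)
  have h := List.all_eq_true.1 h c (List.mem_range.2 hc)
  have h := List.all_eq_true.1 h t (List.mem_range.2 ht)
  rw [hOK] at h
  simpa [and_assoc] using h

/-- Eliminating `q` from `k ∣ v r` by means of `2 c k = 3 t q - 6 t + 2 c`. -/
lemma k_dvd_poly {q v r t c k N : ℕ} (hq : q = 2 * N + 2) (hv : 2 * v = q * (q - 1))
    (hrt : r * t = (q + 1) * c) (hck : c * (k - 1) = 3 * N * t) (hk : 0 < k) (hdvd : k ∣ v * r) :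
    (k : ℤ) ∣ c * ((6 * t - 2 * c) * (3 * t - 2 * c) * (9 * t - 2 * c)) := by
  obtain ⟨s, rfl⟩ : ∃ s, k = s + 1 := ⟨k - 1, by omega⟩
  rw [Nat.add_sub_cancel] at hck
  subst hq
  rw [show 2 * N + 2 - 1 = 2 * N + 1 by omega] at hv
  obtain ⟨u, hu⟩ := hdvd
  zify at *
  have h1 : (2 * N + 2) * (2 * N + 1) * ((2 * N + 2 + 1) * c) = ((s : ℤ) + 1) * (2 * t * u) := by
    linear_combination -((2 * N + 2 + 1) * c : ℤ) * hv + 2 * t * hu - 2 * (v : ℤ) * hrt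
  -- `3 t q = (6 t - 2 c) + 2 c k`
  have h2 : 3 * (t : ℤ) * (2 * N + 2) = (6 * t - 2 * c) + 2 * c * (s + 1) := by
    linear_combination -2 * hck
  set a : ℤ := 6 * t - 2 * c with ha
  have h3 : c * ((3 * t * (2 * N + 2)) * (3 * t * (2 * N + 2) - 3 * t) *
      (3 * t * (2 * N + 2) + 3 * t)) = ((s : ℤ) + 1) * (27 * t ^ 3 * (2 * t * u)) := by
    linear_combination 27 * (t : ℤ) ^ 3 * h1
  rw [h2] at h3
  have e1 : (3 * t - 2 * c : ℤ) = a - 3 * t := by rw [ha]; ring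
  have e2 : (9 * t - 2 * c : ℤ) = a + 3 * t := by rw [ha]; ring
  rw [e1, e2]
  set b : ℤ := 2 * c
  refine ⟨27 * t ^ 3 * (2 * t * u) - c * b * (3 * a ^ 2 + 3 * a * (b * (s + 1)) +
    (b * (s + 1)) ^ 2 - 9 * t ^ 2), ?_⟩
  linear_combination h3

/-- The relations between `f`, `q`, `k`, `r`, `t`, `c` and `w` which the design yields for
`q = 2 ^ f` are inconsistent. -/
lemma even_arith {f q N v k r t c w : ℕ} (hf : 2 ≤ f) (hqf : q = 2 ^ f) (hN : q = 2 * N + 2)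
    (hv : 2 * v = q * (q - 1)) (hrt : r * t = (q + 1) * c) (hc : 0 < c)
    (ht : t % 2 = 1) (hck : c * (k - 1) = 3 * N * t) (hcf : c ≤ f) (hNw : N ≤ c * (w - 1))
    (hwq : 2 * w ≤ q) (hwk : w ∣ k * t)
    (h2w : ∀ j m, k = 2 ^ j * m → m % 2 = 1 → 2 ^ j ∣ w)
    (hkr : k < r) (hdvd : k ∣ v * r) (h3 : 3 ∣ r) (hk : 2 < k)
    (hS1 : w = k → 2 * k = q → c ≤ 1) (hS2 : c * (w - 1) = 3 * N → 2 * w < q → w ≤ c) : False := by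
  have hf1 : 2 ^ f = 2 * 2 ^ (f - 1) := by
    obtain ⟨l, rfl⟩ : ∃ l, f = l + 1 := ⟨f - 1, by omega⟩
    rw [Nat.add_sub_cancel, pow_succ, mul_comm]
  have hN' : N = 2 ^ (f - 1) - 1 := by omega
  have hN1 : 1 ≤ N := by
    have : 2 ^ 1 ≤ 2 ^ (f - 1) := Nat.pow_le_pow_right (by norm_num) (by omega)
    omega
  have hw1 : 1 < w := by
    by_contra hcon
    rw [show w - 1 = 0 by omega] at hNw
    omega
  have ht0 : 0 < t := by omega
  by_cases hct : c = 3 * t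
  · have hkN : k - 1 = N := by
      apply Nat.eq_of_mul_eq_mul_left hc
      rw [hck, hct]; ring
    have hkp : k = 2 ^ (f - 1) * 1 := by omega
    have h4 := Nat.le_of_dvd (by omega) (h2w (f - 1) 1 hkp (by norm_num))
    have := hS1 (by omega) (by omega)
    omega
  -- `t ≤ c`, because `k < r`
  have h5 : 3 * N * t ^ 2 < (q + 1) * c ^ 2 := by
    have e1 : c * t * (k - 1) < c * t * r := by
      apply Nat.mul_lt_mul_of_pos_left (by omega)
      positivity
    calc 3 * N * t ^ 2 = c * t * (k - 1) := by
          rw [show c * t * (k - 1) = t * (c * (k - 1)) by ring, hck]; ring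
      _ < _ := e1
      _ = _ := by rw [show c * t * r = c * (r * t) by ring, hrt]; ring
  have htc : t ≤ c := by
    by_contra hcon
    rcases Nat.lt_or_ge 2 f with hf3 | hf3
    · have : 2 ^ 2 ≤ 2 ^ (f - 1) := Nat.pow_le_pow_right (by norm_num) (by omega)
      have h6 : q + 1 ≤ 3 * N := by omega
      have h7 : c ^ 2 ≤ t ^ 2 := Nat.pow_le_pow_left (by omega) 2
      have := Nat.mul_le_mul h6 h7
      omega
    · obtain rfl : f = 2 := by omega
      obtain rfl : N = 1 := by norm_num at hN'; exact hN'
      subst hN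
      have h7 : (c + 1) ^ 2 ≤ t ^ 2 := Nat.pow_le_pow_left (by omega) 2
      have : c = 1 ∨ c = 2 := by omega
      rcases this with rfl | rfl <;> omega
  have hf30 : f < 30 := by
    by_contra hcon
    have hb := pow_bound f (by omega)
    have hd := k_dvd_poly hN hv hrt hck (by omega) hdvd
    have hne : (c : ℤ) * ((6 * t - 2 * c) * (3 * t - 2 * c) * (9 * t - 2 * c)) ≠ 0 := by
      refine mul_ne_zero (by omega) (mul_ne_zero (mul_ne_zero ?_ ?_) ?_) <;> omega
    have hle := Int.le_of_dvd (abs_pos.2 hne) ((dvd_abs _ _).2 hd)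
    rw [abs_mul, abs_mul, abs_mul] at hle
    have a1 : |(6 * t - 2 * c : ℤ)| ≤ 4 * c := by rw [abs_le]; constructor <;> omega
    have a2 : |(3 * t - 2 * c : ℤ)| ≤ 2 * c := by rw [abs_le]; constructor <;> omega
    have a3 : |(9 * t - 2 * c : ℤ)| ≤ 7 * c := by rw [abs_le]; constructor <;> omega
    have a4 : (k : ℤ) ≤ 56 * c ^ 4 := by
      calc (k : ℤ) ≤ _ := hle
        _ ≤ (c : ℤ) * (4 * c * (2 * c) * (7 * c)) := by
            rw [abs_of_nonneg (show (0 : ℤ) ≤ c by omega)]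
            gcongr
        _ = _ := by ring
    have a5 : k ≤ 56 * c ^ 4 := by exact_mod_cast a4
    have a6 : 3 * N ≤ c * (k - 1) := by
      rw [hck]; exact Nat.le_mul_of_pos_right _ ht0
    have a7 : c * (k - 1) < c * k := Nat.mul_lt_mul_of_pos_left (by omega) hc
    have a8 : c * k ≤ c * (56 * c ^ 4) := Nat.mul_le_mul_left _ a5
    have a9 : c ^ 5 ≤ f ^ 5 := Nat.pow_le_pow_left hcf 5
    have a10 : c * (56 * c ^ 4) = 56 * c ^ 5 := by ring
    omega
  have hk' : 3 * (2 ^ (f - 1) - 1) * t / c + 1 = k := by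
    rw [← hN', ← hck, Nat.mul_div_cancel_left _ hc]
    omega
  have hr' : (2 ^ f + 1) * c / t = r := by
    rw [← hqf, ← hrt, Nat.mul_div_cancel _ ht0]
  have hv' : 2 ^ (f - 1) * (2 ^ f - 1) = v := by
    rw [← hqf]
    apply Nat.eq_of_mul_eq_mul_left (show 0 < 2 by norm_num)
    rw [hv, ← mul_assoc, ← hf1, hqf]
  have hOK : ParamOK f c t k r = true := by
    simp only [ParamOK, Bool.and_eq_true, decide_eq_true_eq]
    exact ⟨⟨⟨⟨⟨⟨⟨⟨⟨hf, ht0⟩, hct⟩, ht⟩,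
      Nat.mod_eq_zero_of_dvd ⟨k - 1, by rw [← hN', ← hck]⟩⟩,
      Nat.mod_eq_zero_of_dvd ⟨r, by rw [← hqf, ← hrt, mul_comm]⟩⟩, by omega⟩, hkr⟩, hk⟩,
      by rw [hv']; exact Nat.mod_eq_zero_of_dvd hdvd⟩
  have hfin := small_check f hf30 c (by omega) t (by omega) (by rw [hk', hr', hOK])
  rcases hfin with ⟨rfl, rfl, rfl⟩ | ⟨rfl, rfl, rfl⟩
  · norm_num at hk' hN' hqf
    subst hk' hN'
    have h8 := h2w 1 5 (by norm_num) (by norm_num)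
    have : w ≤ 10 := Nat.le_of_dvd (by norm_num) hwk
    obtain rfl : w = 10 := by interval_cases w <;> omega
    have := hS2 (by norm_num) (by omega)
    omega
  · norm_num at hk' hN' hqf
    subst hk' hN'
    have h8 := h2w 2 7 (by norm_num) (by norm_num)
    have : w ≤ 28 := Nat.le_of_dvd (by norm_num) hwk
    obtain rfl : w = 28 := by interval_cases w <;> omega
    have := hS2 (by norm_num) (by omega)
    omega

section
variable {F : Type} [Field F] [Fintype F] {G Pt : Type*} [Group G] [MulAction G Pt]
  {pr : S2 F →* G} {n : ℕ} {𝓑 : Set (Set Pt)} {k r : ℕ}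

lemma case_even [Finite G] [Finite Pt] (h : Cfg F G Pt pr n) (d : Dsg G 𝓑 k r)
    (hq : Fintype.card F % 2 = 0) (α : Pt) : False := by
  have hq4 := h.card_ge
  have hn := n_even h hq
  have hno : n % 2 = 1 := by omega
  have h2F : (2 : F) = 0 := char_two_iff.2 hq
  obtain ⟨f, hf⟩ : ∃ f, Fintype.card F = 2 ^ f := by
    obtain ⟨p, -, f, hp, hpf⟩ := FiniteField.card' F
    refine ⟨f, ?_⟩
    have : 2 ∣ p := Nat.prime_two.dvd_of_dvd_pow (hpf ▸ Nat.dvd_of_mod_eq_zero hq)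
    rw [hpf, (Nat.prime_dvd_prime_iff_eq Nat.prime_two hp).1 this]
  have hf2 : 2 ≤ f := by
    by_contra hcon
    have : f = 0 ∨ f = 1 := by omega
    rcases this with rfl | rfl <;> simp [hf] at hq4
  -- an involution `x` fixing `α`, a second fixed point and hence a fixed block through `α`
  obtain ⟨x, hx, hxα⟩ : (Inv pr ∩ Xs pr α).Nonempty := by
    apply Set.nonempty_of_ncard_ne_zero
    rw [card_inv_Xs h hno]; omega
  have hxα : x • α = α := hxα.2
  have hFx := card_Fx_even h hq hx α
  obtain ⟨β, hβ, hβα⟩ : ∃ β ∈ Fx Pt x, β ≠ α := Set.exists_ne_of_one_lt_ncard (by omega) α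
  obtain ⟨B, hB, hαB, -, hxB⟩ := inv_fix_block d hx.2.1 hβα.symm hxα hβ
  have hxI : x ∈ Ifl pr α B := ⟨hx, hxα, hxB⟩
  set w := (Fx Pt x ∩ B).ncard with hwdef
  have hw1 : ∀ β ∈ Fx Pt x, ∀ C ∈ Fbl 𝓑 x β, (Fx Pt x ∩ C).ncard = w := fun β hβ C hC =>
    card_fix_block h hno d hC.1 hB hC.2.1 hαB ⟨hx, hβ, hC.2.2⟩ hxI
  have hw2 : ∀ β ∈ B, ∀ y ∈ Ifl pr β B, (Fx Pt y ∩ B).ncard = w := fun β hβ y hy =>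
    card_fix_block h hno d hB hB hβ hαB hy hxI
  set t := (Ifl pr α B).ncard with htdef
  set c := (Fbl 𝓑 x α).ncard with hcdef
  have hrt : r * t = n * c := r_mul_Ifl h hno d hB hαB hx hxα
  have hc : 0 < c := (Set.ncard_pos (Set.toFinite _)).2 ⟨B, hB, hαB, hxB⟩
  have ht0 : 0 < t := (Set.ncard_pos (Set.toFinite _)).2 ⟨x, hxI⟩
  have hst := card_flag_stab h hno ⟨x, hxI⟩
  have ht : t % 2 = 1 := by
    have e1 : 2 * t ∣ 2 * n := by
      rw [← hst, ← card_Xs h α]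
      exact Subgroup.card_dvd_of_le inf_le_left
    exact Nat.odd_iff.1 ((Nat.odd_iff.2 hno).of_dvd_nat
      (Nat.dvd_of_mul_dvd_mul_left (by norm_num) e1))
  obtain ⟨N, hN⟩ : ∃ N, Fintype.card F = 2 * N + 2 := ⟨Fintype.card F / 2 - 1, by omega⟩
  have hNo : N % 2 = 1 := by
    have : (4 : ℕ) ∣ 2 ^ f := pow_dvd_pow 2 hf2
    omega
  have hv := two_v h α
  have hck : c * (k - 1) = 3 * N * t := by
    have h1 := r_mul d α
    have h2 : Nat.card Pt - 1 = n * N := by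
      have : 2 * Nat.card Pt = 2 * (n * N) + 2 := by
        rw [hv, hn, hN, show 2 * N + 2 - 1 = 2 * N + 1 by omega]; ring
      omega
    apply Nat.eq_of_mul_eq_mul_left (show 0 < n by omega)
    calc n * (c * (k - 1)) = (r * (k - 1)) * t := by rw [← mul_assoc, ← hrt]; ring
      _ = _ := by rw [h1, h2]; ring
  have hco : c % 2 = 1 := by
    have : (c * (k - 1)) % 2 = 1 := by
      rw [hck, Nat.mul_mod, Nat.mul_mod 3, hNo, ht]
    exact Nat.odd_iff.1 (Nat.odd_mul.1 (Nat.odd_iff.2 this)).1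
  refine even_arith (t := t) (c := c) (w := w) hf2 hf hN hv (by rw [hrt, hn]) hc ht hck
    (Fbl_le_f h hno d hf hB hαB hxI) ?_ ?_ (w_dvd h d hB hαB hw2) ?_ (k_lt_r d α)
    ⟨𝓑.ncard, by rw [← b_mul d, mul_comm]⟩ d.three_dvd d.k_gt ?_ ?_
  · have := Fx_le d hx hxα (hw1 α hxα)
    rw [← hcdef] at this
    omega
  · have : w ≤ (Fx Pt x).ncard := Set.ncard_le_ncard Set.inter_subset_left (Set.toFinite _)
    omega
  · intro j m hk hm
    refine two_pow_dvd h hq d hB hw2 hk hm ?_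
    -- `2 k t` divides `c |X_B|`, and `c` is odd
    obtain ⟨u, hu⟩ := block_orbits h d hB
    set M := Nat.card (pr.range ⊓ MulAction.stabilizer G B : Subgroup G)
    rw [← card_Pt h α] at hu
    have hPt : 0 < Nat.card Pt := Nat.card_pos_iff.2 ⟨⟨α⟩, inferInstance⟩
    have e1 : c * M = 2 * k * t * u := by
      apply Nat.eq_of_mul_eq_mul_left (show 0 < Nat.card Pt * n by
        have : 0 < n := by omega
        positivity)
      calc Nat.card Pt * n * (c * M) = (Nat.card Pt * r) * (t * M) := by
            rw [show Nat.card Pt * n * (c * M) = Nat.card Pt * (n * c) * M by ring, ← hrt]; ring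
        _ = (𝓑.ncard * M) * (k * t) := by rw [← b_mul d]; ring
        _ = _ := by rw [hu]; ring
    have e2 : 2 ^ (j + 1) ∣ c * M := by
      rw [e1, hk]
      exact ⟨m * t * u, by ring⟩
    refine Nat.Coprime.dvd_of_dvd_mul_left ?_ e2
    exact Nat.Coprime.pow_left _ (Nat.coprime_two_left.2 (Nat.odd_iff.2 hco))
  · intro h1 h2
    refine Fbl_le_one d (fun C hC => ?_) (by omega)
    rw [hw1 α hxα C hC, h1]
  · intro h1 h2
    exact fix_fisher h hno d hx hxα hw1 (by rw [← hcdef, h1]; omega) (by omega)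
      ⟨B, hB, hαB, hxB⟩

end

/-! ### The configuration arising from an almost simple group -/

/-- The centre of `SL(2, F)` consists of the two scalar matrices `1` and `-1`. -/
lemma mem_center_s2 {F : Type} [Field F] (A : S2 F) :
    A ∈ Subgroup.center (S2 F) ↔ A = 1 ∨ A = -1 := by
  constructor
  · intro h
    obtain ⟨r, hr, hA⟩ := Matrix.SpecialLinearGroup.mem_center_iff.1 h
    have hr2 : r ^ 2 = 1 := by simpa using hr
    rcases (sq_eq_sq_iff_eq_or_eq_neg.1 (hr2.trans (one_pow 2).symm)) with h1 | h1
    · left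
      apply Subtype.ext
      rw [← hA, h1]; simp
    · right
      apply Subtype.ext
      rw [← hA, h1, map_neg, map_one]; rfl
  · rintro (rfl | rfl)
    · exact one_mem _
    · rw [Subgroup.mem_center_iff]; intro g; simp

lemma exists_cfg {F : Type} [Field F] [Fintype F] {G Pt : Type*} [Group G] [MulAction G Pt]
    {n : ℕ} (hq : 4 ≤ Fintype.card F)
    (hn : n = (Fintype.card F + 1) / Nat.gcd 2 (Fintype.card F - 1))
    (X : Subgroup G) (hX : X.Normal) (φ : X ≃* PSL2 F)
    (hcent : Subgroup.centralizer (X : Set G) = ⊥)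
    (htr : MulAction.IsPretransitive X Pt) (α : Pt)
    (hmax : IsCoatom (MulAction.stabilizer X α))
    (e : MulAction.stabilizer X α ≃* DihedralGroup n) :
    ∃ pr : S2 F →* G, Cfg F G Pt pr n := by
  let ψ : S2 F →* X := φ.symm.toMonoidHom.comp (QuotientGroup.mk' (Subgroup.center (S2 F)))
  have hψ : Function.Surjective ψ := φ.symm.surjective.comp (QuotientGroup.mk'_surjective _)
  let pr : S2 F →* G := X.subtype.comp ψ
  have hpr : ∀ A, pr A = (ψ A : G) := fun A => rfl
  have hrange : pr.range = X := by
    rw [MonoidHom.range_comp, MonoidHom.range_eq_top.2 hψ, ← MonoidHom.range_eq_map,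
      Subgroup.range_subtype]
  have hXs : ∀ β : Pt, Xs pr β = (MulAction.stabilizer X β).map X.subtype := by
    intro β
    ext g
    rw [Xs, hrange]
    simp only [Subgroup.mem_inf, MulAction.mem_stabilizer_iff, Subgroup.mem_map]
    constructor
    · rintro ⟨h1, h2⟩; exact ⟨⟨g, h1⟩, h2, rfl⟩
    · rintro ⟨x, h1, rfl⟩; exact ⟨x.2, h1⟩
  have hmaxβ : ∀ β : Pt, IsCoatom (MulAction.stabilizer X β) := by
    intro β
    obtain ⟨x, rfl⟩ := htr.exists_smul_eq α β
    rw [MulAction.stabilizer_smul_eq_stabilizer_map_conj]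
    exact ((MulAut.conj x).mapSubgroup.isCoatom_iff _).2 hmax
  have heβ : ∀ β : Pt, Nonempty (MulAction.stabilizer X β ≃* DihedralGroup n) := by
    intro β
    obtain ⟨x, hx⟩ := htr.exists_smul_eq α β
    exact ⟨(MulAction.stabilizerEquivStabilizer hx.symm).symm.trans e⟩
  have hsimple : IsSimpleGroup X := by
    have : IsSimpleGroup (PSL2 F) :=
      Matrix.ProjectiveSpecialLinearGroup.rank_two_simple (by rwa [Nat.card_eq_fintype_card])
    exact φ.isSimpleGroup
  refine ⟨pr, hq, hn, ?_, ?_, ?_, ?_, ?_, ?_, ?_⟩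
  · intro A B
    have h1 : pr A = pr B ↔ A⁻¹ * B ∈ Subgroup.center (S2 F) := by
      rw [← QuotientGroup.eq]
      constructor
      · intro h
        exact φ.symm.injective (Subtype.ext h)
      · intro h
        exact congrArg (fun y => ((φ.symm y : X) : G)) h
    rw [h1, mem_center_s2, inv_mul_eq_iff_eq_mul, inv_mul_eq_iff_eq_mul]
    simp only [mul_one, mul_neg]
    constructor
    · rintro (h | h)
      · exact Or.inl h.symm
      · exact Or.inr (by rw [h, neg_neg])
    · rintro (h | h)
      · exact Or.inl h.symm
      · exact Or.inr (by rw [h, neg_neg])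
  · intro g A
    have h1 : g * pr A * g⁻¹ ∈ pr.range := by
      rw [hrange]; exact hX.conj_mem _ (ψ A).2 g
    obtain ⟨B, hB⟩ := h1
    exact ⟨B, hB.symm⟩
  · intro g hg
    rw [← Subgroup.mem_bot, ← hcent, Subgroup.mem_centralizer_iff]
    intro x hx
    have : x ∈ pr.range := by rw [hrange]; exact hx
    obtain ⟨A, rfl⟩ := this
    exact (hg A).symm
  · intro H hH hconj
    rw [hrange] at hH ⊢
    have hN : (H.subgroupOf X).Normal := by
      constructor
      intro x hx y
      obtain ⟨A, rfl⟩ := hψ y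
      exact hconj A _ hx
    rcases hN.eq_bot_or_eq_top with h1 | h1
    · left
      rw [Subgroup.subgroupOf_eq_bot, disjoint_iff, inf_eq_left.2 hH] at h1
      exact h1
    · right
      exact le_antisymm hH (Subgroup.subgroupOf_eq_top.1 h1)
  · intro β γ
    obtain ⟨x, hx⟩ := htr.exists_smul_eq β γ
    obtain ⟨A, rfl⟩ := hψ x
    exact ⟨A, hx⟩
  · intro β
    obtain ⟨e'⟩ := heβ β
    refine ⟨X.subtype.comp ((MulAction.stabilizer X β).subtype.comp e'.symm.toMonoidHom), ?_, ?_⟩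
    · exact X.subtype_injective.comp ((Subgroup.subtype_injective _).comp e'.symm.injective)
    · rw [hXs, MonoidHom.range_comp, MonoidHom.range_comp,
        (MonoidHom.range_eq_top (f := e'.symm.toMonoidHom)).2 e'.symm.surjective,
        ← MonoidHom.range_eq_map, Subgroup.range_subtype]
  · intro β H hH hle
    rw [hrange] at hH ⊢
    have h1 : MulAction.stabilizer X β ≤ H.subgroupOf X := by
      intro x hx
      apply hle
      rw [hXs]
      exact ⟨x, hx, rfl⟩
    rcases (hmaxβ β).le_iff.1 h1 with h2 | h2
    · right
      exact le_antisymm hH (Subgroup.subgroupOf_eq_top.1 h2)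
    · left
      rw [hXs, ← h2, Subgroup.map_subgroupOf_eq_of_le hH]

end DihedralCase

/-- In the setting of a non-trivial, non-symmetric flag-transitive,
point-primitive `2-(v,k,3)` design with `3 ∣ r`, almost simple automorphism group `G` with
socle `X ≅ PSL(2,q)` acting point-primitively with maximal point stabilizer `X_α`:
the stabilizer `X_α` is not a dihedral group of order `2(q+1)/gcd(2,q−1)` (the normalizer of
a maximal nonsplit torus); that is, the case `v = q(q−1)/2` does not occur.
(Recall `DihedralGroup n` has order `2n`.) -/
theorem stmt_16
    (q : ℕ) (hq4 : 4 ≤ q)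
    (F : Type) [Field F] [Fintype F] (hF : Fintype.card F = q)
    {Pt : Type*} [Fintype Pt] {G : Type*} [Group G] [MulAction G Pt] [FaithfulSMul G Pt]
    -- `D = (Pt, 𝓑)` is a non-trivial, non-symmetric `2-(v,k,3)` design …
    (𝓑 : Set (Set Pt)) (v k : ℕ) (hv : Nat.card Pt = v)
    (hD : IsDesign 𝓑 k 3) (hnt : 2 < k ∧ k < v - 1)
    (hnonsym : Nat.card 𝓑 ≠ v)
    -- … whose replication number `r` is divisible by 3, …
    (r : ℕ) (hr : ∀ x : Pt, repNum 𝓑 x = r) (h3r : 3 ∣ r)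
    -- … admitting the flag-transitive, point-primitive automorphism group `G`, …
    (hacts : ActsOn G 𝓑) (hflag : FlagTransitive G 𝓑)
    (hprim : PointPrimitive G Pt)
    -- … where `G` is almost simple with socle `X ≅ PSL(2,q)` (so `PSL(2,q) ⊴ G ≤ PΓL(2,q)`):
    (X : Subgroup G) (hXnormal : X.Normal)
    (hXiso : Nonempty (X ≃* PSL2 F))
    (hXcent : Subgroup.centralizer (X : Set G) = ⊥)
    -- `X` acts point-primitively on `D`, with maximal point stabilizer `X_α`:
    (hXprim : PointPrimitive X Pt)
    (α : Pt) (hmax : IsCoatom (MulAction.stabilizer X α))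
    :
    IsEmpty ((MulAction.stabilizer X α) ≃*
      DihedralGroup ((q + 1) / Nat.gcd 2 (q - 1))) := by
  refine ⟨fun e => ?_⟩
  obtain ⟨φ⟩ := hXiso
  subst hF
  obtain ⟨pr, h⟩ := DihedralCase.exists_cfg hq4 rfl X hXnormal φ hXcent hXprim.1 α hmax e
  have hfin : Finite G :=
    Finite.of_injective (MulAction.toPermHom G Pt) MulAction.toPerm_injective
  have d : DihedralCase.Dsg G 𝓑 k r :=
    { block_card := hD.block_card
      pair := hD.pair_count
      rep := hr
      acts := hacts
      flag := hflag
      k_gt := hnt.1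
      k_lt := by omega
      nonsym := by rw [hv]; exact hnonsym
      three_dvd := h3r }
  have h4 : Fintype.card F % 2 = 0 ∨ Fintype.card F % 4 = 1 ∨ Fintype.card F % 4 = 3 := by omega
  rcases h4 with h4 | h4 | h4
  · exact DihedralCase.case_even h d h4 α
  · exact DihedralCase.case_one_mod_four h d h4 α
  · exact DihedralCase.case_three_mod_four h d h4 α
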